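/- Let (u, π, v, θ) be a smooth solution of the 3D stationary tropical climate model on ℝ³. Suppose that ‖u‖_{L^p(ℝ³)} < ∞, ‖v‖_{L^q(ℝ³)} < ∞ and ‖∇θ‖_{L^λ(ℝ³)} < ∞, where (with p' = p/(p−1)) the exponents p, q, λ satisfy one of the following ten conditions: (B1)' p ∈ [3, 9/2], q ∈ [1, 2p'), λ ∈ [1, 6p/(5p−3)); (B2)' p ∈ (3/2, 3), q ∈ [1, 2), λ ∈ [1, 2]; (B3)' p ∈ (3/2, 3), q ∈ [1, 6], λ ∈ [1, 6/5); (B4)' p ∈ [3, 9/2], q ∈ [1, 2), λ ∈ [6p/(5p−3), 2], with 1/p + 2/λ ≥ 4/3; (B5)' p ∈ [3, 9/2], q ∈ [2p', 6], λ ∈ [1, 6/5), with 1/p + 2/q ≥ 2/3; (B6)' p ∈ [3, 9/2], q ∈ [2, 2p'), λ ∈ [6p/(5p−3), 2], with 1/p + 2/λ ≥ 4/3 and 1/q + 1/λ ≥ 1; (B7)' p ∈ [3, 9/2], q ∈ [2p', 6], λ ∈ [6/5, 6p/(5p−3)), with 1/p + 2/q ≥ 2/3 and 1/q + 1/λ ≥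 1; (B8)' p ∈ [3, 9/2], q ∈ [2p', 6], λ ∈ [6p/(5p−3), 2], with 1/p + 2/q ≥ 2/3, 1/p + 2/λ ≥ 4/3 and 1/q + 1/λ ≥ 1; (B9)' p ∈ (3/2, 3), q ∈ [2, 2p'), λ ∈ [6/5, 2], with 1/q + 1/λ ≥ 1; (B10)' p ∈ (3/2, 3), q ∈ [2, 6], λ ∈ [6/5, 6p/(5p−3)), with 1/q + 1/λ ≥ 1. Then u = 0 and v = 0 on ℝ³, and θ is a constant function. -/

import Mathlib

/-!
The proof is a local energy method. Multiplying the equations by `u`, `v`, `θ` shows that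
`|∇u|² + |∇v|² + |∇θ|²` is the divergence of an explicit flux (`div_flux`), hence its integral
against a cutoff `φ` is a flux integral over the layer where `∇φ ≠ 0` (`energy_identity`).

*Pressure.* No decay of `π` is assumed, so the term `∫ π u · ∇φ` is removed by testing the momentum
equation with a compactly supported field `w` of divergence close to `div (φ u) = u · ∇φ`. With
`M` the Newtonian kernel truncated to scales between `ε` and `d`, the field
`w = -∇(M * div F) + η_d * F`, `F = φ u`, has divergence `η_ε * div F` (`div_tw`) and is supported
in a slightly larger ball. Letting `ε → 0` gives `pressure_bounds`, in two versions: one uses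
only `‖∇w‖₂` (`wA`), the other also `‖w‖_{2p}` (`wB`).

*Temperature.* The system sees only `∇θ`, so `θ` may be replaced by `θ - c`. Since `∇θ ∈ L^λ` with
`λ ≤ 2`, some `θ - c` lies in `L^r` with `1/r = 1/λ - 1/3` (`exists_const_BddN`).

*Exponents.* All ten conditions imply `3/2 < p ≤ 9/2`, `1 ≤ q ≤ 6`, `1 ≤ λ ≤ 2`,
`1/p + 2/q ≥ 2/3`, `1/p + 2/λ ≥ 4/3` and `1/q + 1/λ ≥ 1` (`exponents`), and nothing more is needed.

*Conclusion.* Adding the `L⁶` norms of the fields by the Sobolev inequality, the energy `X(ρ)` on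
`B_ρ` is bounded by norms of the fields on a larger ball `B_τ` (`energy_ineq`). Interpolating these
between the given Lebesgue spaces and `L⁶`, each term for `R ≤ ρ < τ ≤ 2R` is at most
`C (R/(τ - ρ))^α X(τ)^b` with `b < 1` (`good_bse`; `good_wA` if `p ≥ 3`, `good_wB` if `p < 3`), and
an iteration in the radius bounds `X` (`iterate_bound`). The fields are then globally in `L⁶` and
the gradients in `L²`, and with this information every term on the right with `ρ = R`, `τ = 2R`
tends to zero as `R → ∞`, so `X = 0` (`Xen_zero`).
-/

open MeasureTheory Metric Filter
open scoped ENNReal NNReal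

noncomputable section

/-- Euclidean `ℝ³`. -/
abbrev E3 := EuclideanSpace ℝ (Fin 3)

/-- The annulus `B_{2R} \ B_R` centered at the origin. -/
def Ann (R : ℝ) : Set E3 := ball (0 : E3) (2 * R) \ ball (0 : E3) R

/-- Mean value of `θ` over the annulus `B_{2R} \ B_R`. -/
def thetaBar (θ : E3 → ℝ) (R : ℝ) : ℝ := ⨍ x in Ann R, θ x

/-- `L^p` norm (with real exponent `p`) of `f` over the set `s`, valued in `ℝ≥0∞`. -/
def LpS {F : Type*} [NormedAddCommGroup F] (f : E3 → F) (p : ℝ) (s : Set E3) : ℝ≥0∞ :=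
  eLpNorm f (ENNReal.ofReal p) (volume.restrict s)

/-- Partial derivative `∂_j f` of a scalar function on `ℝ³`. -/
def pd3 (j : Fin 3) (f : E3 → ℝ) (x : E3) : ℝ :=
  fderiv ℝ f x (EuclideanSpace.single j 1)

/-- Laplacian `Δ f = Σ_j ∂_j ∂_j f` of a scalar function on `ℝ³`. -/
def lap3 (f : E3 → ℝ) (x : E3) : ℝ := ∑ j : Fin 3, pd3 j (pd3 j f) x

/-- `(u, pr, v, θ)` is a smooth solution of the 3D stationary tropical climate model. -/
structure IsTCMSolution (u : E3 → E3) (pr : E3 → ℝ) (v : E3 → E3) (θ : E3 → ℝ) : Prop where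
  smooth_u : ContDiff ℝ (⊤ : ℕ∞) u
  smooth_pr : ContDiff ℝ (⊤ : ℕ∞) pr
  smooth_v : ContDiff ℝ (⊤ : ℕ∞) v
  smooth_θ : ContDiff ℝ (⊤ : ℕ∞) θ
  eq_u : ∀ x : E3, ∀ i : Fin 3,
    -lap3 (fun y => u y i) x + (∑ j : Fin 3, u x j * pd3 j (fun y => u y i) x)
      + pd3 i pr x + (∑ j : Fin 3, pd3 j (fun y => v y j * v y i) x) = 0
  eq_v : ∀ x : E3, ∀ i : Fin 3,
    -lap3 (fun y => v y i) x + (∑ j : Fin 3, u x j * pd3 j (fun y => v y i) x)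
      + pd3 i θ x + (∑ j : Fin 3, v x j * pd3 j (fun y => u y i) x) = 0
  eq_θ : ∀ x : E3,
    -lap3 θ x + (∑ j : Fin 3, u x j * pd3 j θ x) + (∑ j : Fin 3, pd3 j (fun y => v y j) x) = 0
  div_u : ∀ x : E3, ∑ j : Fin 3, pd3 j (fun y => u y j) x = 0

/-! ### Calculus of smooth scalar functions on `ℝ³` -/

/-- Smooth scalar functions on `ℝ³`. -/
abbrev Sm (f : E3 → ℝ) : Prop := ContDiff ℝ (⊤ : ℕ∞) f

lemma Sm.diff {f : E3 → ℝ} (hf : Sm f) (x : E3) : DifferentiableAt ℝ f x :=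
  (hf.differentiable (by simp)).differentiableAt

lemma Sm.pd {f : E3 → ℝ} (hf : Sm f) (j : Fin 3) : Sm (pd3 j f) := by
  have h : ContDiff ℝ (⊤ : ℕ∞) (fderiv ℝ f) := hf.fderiv_right (by simp)
  exact h.clm_apply contDiff_const

lemma pd3_mul {f g : E3 → ℝ} (hf : Sm f) (hg : Sm g) (j : Fin 3) (x : E3) :
    pd3 j (fun y => f y * g y) x = pd3 j f x * g x + f x * pd3 j g x := by
  unfold pd3
  rw [fderiv_fun_mul (hf.diff x) (hg.diff x)]
  simp only [add_apply, smul_apply, smul_eq_mul]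
  ring

lemma pd3_add {f g : E3 → ℝ} (hf : Sm f) (hg : Sm g) (j : Fin 3) (x : E3) :
    pd3 j (fun y => f y + g y) x = pd3 j f x + pd3 j g x := by
  unfold pd3
  rw [fderiv_fun_add (hf.diff x) (hg.diff x)]
  rfl

lemma pd3_sub {f g : E3 → ℝ} (hf : Sm f) (hg : Sm g) (j : Fin 3) (x : E3) :
    pd3 j (fun y => f y - g y) x = pd3 j f x - pd3 j g x := by
  unfold pd3
  rw [fderiv_fun_sub (hf.diff x) (hg.diff x)]
  rfl

lemma pd3_const_mul {f : E3 → ℝ} (hf : Sm f) (c : ℝ) (j : Fin 3) (x : E3) :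
    pd3 j (fun y => c * f y) x = c * pd3 j f x := by
  unfold pd3
  rw [fderiv_const_mul (hf.diff x)]
  rfl

lemma pd3_neg {f : E3 → ℝ} (j : Fin 3) (x : E3) :
    pd3 j (fun y => - f y) x = - pd3 j f x := by
  unfold pd3
  rw [fderiv_fun_neg]
  rfl

lemma pd3_sub_const {f : E3 → ℝ} (c : ℝ) (j : Fin 3) :
    pd3 j (fun y => f y - c) = pd3 j f := by
  funext x
  unfold pd3
  rw [fderiv_sub_const]

lemma pd3_comm {f : E3 → ℝ} (hf : Sm f) (i j : Fin 3) (x : E3) :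
    pd3 i (pd3 j f) x = pd3 j (pd3 i f) x := by
  have h : ContDiff ℝ (⊤ : ℕ∞) (fderiv ℝ f) := hf.fderiv_right (by simp)
  have hd : DifferentiableAt ℝ (fderiv ℝ f) x := (h.differentiable (by simp)).differentiableAt
  have key : ∀ a b : Fin 3, pd3 a (pd3 b f) x
      = fderiv ℝ (fderiv ℝ f) x (EuclideanSpace.single a 1) (EuclideanSpace.single b 1) := by
    intro a b
    have : pd3 b f = fun y => fderiv ℝ f y (EuclideanSpace.single b 1) := rfl
    rw [this]
    unfold pd3
    rw [fderiv_clm_apply hd (by fun_prop)]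
    simp
  rw [key, key]
  have hs : IsSymmSndFDerivAt ℝ f x :=
    hf.contDiffAt.isSymmSndFDerivAt (by simp; exact WithTop.coe_le_coe.2 (le_top : (2 : ℕ∞) ≤ ⊤))
  exact hs _ _

lemma hcs_pd3 {f : E3 → ℝ} (hf : HasCompactSupport f) (j : Fin 3) :
    HasCompactSupport (pd3 j f) := by
  exact hf.fderiv_apply (𝕜 := ℝ) _

lemma Sm.integrable {f : E3 → ℝ} (hf : Sm f) (hc : HasCompactSupport f) : Integrable f :=
  hf.continuous.integrable_of_hasCompactSupport hc

/-- Integration by parts; one of the factors has compact support. -/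
lemma ibp {f g : E3 → ℝ} (hf : Sm f) (hg : Sm g) (h : HasCompactSupport f ∨ HasCompactSupport g)
    (j : Fin 3) : ∫ x, f x * pd3 j g x = - ∫ x, pd3 j f x * g x := by
  have i1 : HasCompactSupport (fun x => pd3 j f x * g x) := by
    rcases h with h | h
    · exact (hcs_pd3 h j).mul_right
    · exact h.mul_left
  have i2 : HasCompactSupport (fun x => f x * pd3 j g x) := by
    rcases h with h | h
    · exact h.mul_right
    · exact (hcs_pd3 h j).mul_left
  have i3 : HasCompactSupport (fun x => f x * g x) := by
    rcases h with h | h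
    · exact h.mul_right
    · exact h.mul_left
  exact integral_mul_fderiv_eq_neg_fderiv_mul_of_integrable
    (Sm.integrable ((hf.pd j).mul hg) i1) (Sm.integrable (hf.mul (hg.pd j)) i2)
    (Sm.integrable (hf.mul hg) i3) (fun x _ => hf.diff x) (fun x _ => hg.diff x)

lemma integral_pd3 {f : E3 → ℝ} (hf : Sm f) (hc : HasCompactSupport f) (j : Fin 3) :
    ∫ x, pd3 j f x = 0 := by
  have := ibp (f := fun _ => (1:ℝ)) (g := f) contDiff_const hf (Or.inr hc) j
  simpa [pd3] using this

lemma sm_sum {ι : Type*} (s : Finset ι) {f : ι → E3 → ℝ} (hf : ∀ i, Sm (f i)) :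
    Sm (fun x => ∑ i ∈ s, f i x) := ContDiff.sum fun i _ => hf i

lemma pd3_sum {ι : Type*} (s : Finset ι) {f : ι → E3 → ℝ} (hf : ∀ i, Sm (f i)) (j : Fin 3)
    (x : E3) : pd3 j (fun y => ∑ i ∈ s, f i y) x = ∑ i ∈ s, pd3 j (f i) x := by
  unfold pd3
  rw [fderiv_fun_sum (fun i _ => (hf i).diff x)]
  simp

/-- `∇(f(c·))= c (∇f)(c·)`. -/
lemma pd3_comp_smul {f : E3 → ℝ} (c : ℝ) (hf : Sm f) (j : Fin 3) (x : E3) :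
    pd3 j (fun y => f (c • y)) x = c * pd3 j f (c • x) := by
  unfold pd3
  have h1 : HasFDerivAt (fun y : E3 => c • y) (c • ContinuousLinearMap.id ℝ E3) x :=
    (hasFDerivAt_id x).const_smul c
  have h2 := ((hf.diff (c • x)).hasFDerivAt).comp x h1
  have : (fun y => f (c • y)) = f ∘ (fun y : E3 => c • y) := rfl
  rw [this, h2.fderiv]
  simp

lemma sm_coord {u : E3 → E3} (hu : ContDiff ℝ (⊤ : ℕ∞) u) (i : Fin 3) : Sm (fun y => u y i) := by
  have := contDiff_euclidean.1 hu i
  exact this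

/-! ### The local energy identity -/

/-- Squared size `|∇u|² + |∇v|² + |∇θ|²` of the full gradient. -/
def Gsq (u v : E3 → E3) (θ : E3 → ℝ) (x : E3) : ℝ :=
  (∑ i : Fin 3, ∑ j : Fin 3, (pd3 j (fun y => u y i) x) ^ 2)
    + (∑ i : Fin 3, ∑ j : Fin 3, (pd3 j (fun y => v y i) x) ^ 2)
    + ∑ j : Fin 3, (pd3 j θ x) ^ 2

/-- The energy flux: its divergence is `Gsq` for a solution. -/
def flux (u : E3 → E3) (pr : E3 → ℝ) (v : E3 → E3) (θ : E3 → ℝ) (j : Fin 3) (x : E3) : ℝ :=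
  (∑ i : Fin 3, u x i * pd3 j (fun y => u y i) x)
    + (∑ i : Fin 3, v x i * pd3 j (fun y => v y i) x) + θ x * pd3 j θ x
    - u x j * (1 / 2 * ((∑ i : Fin 3, u x i * u x i) + (∑ i : Fin 3, v x i * v x i) + θ x * θ x))
    - v x j * ((∑ i : Fin 3, u x i * v x i) + θ x)
    - pr x * u x j

lemma flux_smooth {u : E3 → E3} {pr : E3 → ℝ} {v : E3 → E3} {θ : E3 → ℝ}
    (h : IsTCMSolution u pr v θ) (j : Fin 3) : Sm (flux u pr v θ j) := by
  have hu := fun i => sm_coord h.smooth_u i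
  have hv := fun i => sm_coord h.smooth_v i
  have hθ := h.smooth_θ
  have hp := h.smooth_pr
  have hu' := fun i => (hu i).pd j
  have hv' := fun i => (hv i).pd j
  have hθ' := Sm.pd hθ j
  exact (((((sm_sum _ fun i => (hu i).mul (hu' i)).add (sm_sum _ fun i => (hv i).mul (hv' i))).add
    (ContDiff.mul hθ hθ')).sub ((hu j).mul (contDiff_const.mul
      (((sm_sum _ fun i => (hu i).mul (hu i)).add (sm_sum _ fun i => (hv i).mul (hv i))).add
        (ContDiff.mul hθ hθ))))).sub
    ((hv j).mul ((sm_sum _ fun i => (hu i).mul (hv i)).add hθ))).sub (ContDiff.mul hp (hu j))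

/-- The local energy balance. The cubic terms form a divergence because `div u = 0` and
because `div (v ⊗ v) · u + (v · ∇u) · v = div ((u · v) v)`. -/
lemma div_flux {u : E3 → E3} {pr : E3 → ℝ} {v : E3 → E3} {θ : E3 → ℝ}
    (h : IsTCMSolution u pr v θ) (x : E3) : ∑ j, pd3 j (flux u pr v θ j) x = Gsq u v θ x := by
  have hu := fun i => sm_coord h.smooth_u i
  have hv := fun i => sm_coord h.smooth_v i
  have hθ := h.smooth_θ
  have hp := h.smooth_pr
  have hu' := fun j i => (hu i).pd j
  have hv' := fun j i => (hv i).pd j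
  have hθ' := fun j => Sm.pd hθ j
  have key : ∀ j, pd3 j (flux u pr v θ j) x =
      (∑ i : Fin 3, ((pd3 j (fun y => u y i) x) * (pd3 j (fun y => u y i) x)
          + u x i * pd3 j (pd3 j (fun y => u y i)) x))
      + (∑ i : Fin 3, ((pd3 j (fun y => v y i) x) * (pd3 j (fun y => v y i) x)
          + v x i * pd3 j (pd3 j (fun y => v y i)) x))
      + (pd3 j θ x * pd3 j θ x + θ x * pd3 j (pd3 j θ) x)
      - (pd3 j (fun y => u y j) x *
          (1 / 2 * ((∑ i : Fin 3, u x i * u x i) + (∑ i : Fin 3, v x i * v x i) + θ x * θ x))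
        + u x j * (1 / 2 * ((∑ i : Fin 3, (pd3 j (fun y => u y i) x * u x i
              + u x i * pd3 j (fun y => u y i) x))
            + (∑ i : Fin 3, (pd3 j (fun y => v y i) x * v x i
              + v x i * pd3 j (fun y => v y i) x))
            + (pd3 j θ x * θ x + θ x * pd3 j θ x))))
      - (pd3 j (fun y => v y j) x * ((∑ i : Fin 3, u x i * v x i) + θ x)
        + v x j * ((∑ i : Fin 3, (pd3 j (fun y => u y i) x * v x i
              + u x i * pd3 j (fun y => v y i) x)) + pd3 j θ x))
      - (pd3 j pr x * u x j + pr x * pd3 j (fun y => u y j) x) := by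
    intro j
    unfold flux
    have s1 : Sm (fun x => ∑ i : Fin 3, u x i * pd3 j (fun y => u y i) x) :=
      sm_sum _ fun i => (hu i).mul (hu' j i)
    have s2 : Sm (fun x => ∑ i : Fin 3, v x i * pd3 j (fun y => v y i) x) :=
      sm_sum _ fun i => (hv i).mul (hv' j i)
    have s3 : Sm (fun x => θ x * pd3 j θ x) := ContDiff.mul hθ (hθ' j)
    have q1 : Sm (fun x => ∑ i : Fin 3, u x i * u x i) := sm_sum _ fun i => (hu i).mul (hu i)
    have q2 : Sm (fun x => ∑ i : Fin 3, v x i * v x i) := sm_sum _ fun i => (hv i).mul (hv i)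
    have q3 : Sm (fun x => θ x * θ x) := ContDiff.mul hθ hθ
    have q4 : Sm (fun x => ∑ i : Fin 3, u x i * v x i) := sm_sum _ fun i => (hu i).mul (hv i)
    have q12 := q1.add q2
    have q123 := q12.add q3
    have q123' : Sm (fun x => 1 / 2 * ((∑ i : Fin 3, u x i * u x i)
      + (∑ i : Fin 3, v x i * v x i) + θ x * θ x)) := contDiff_const.mul q123
    have q4' := q4.add hθ
    have s12 := s1.add s2
    have s123 := s12.add s3
    have t1 := (hu j).mul q123'
    have t2 := (hv j).mul q4'
    have t3 := hp.mul (hu j)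
    rw [pd3_sub ((s123.sub t1).sub t2) t3, pd3_sub (s123.sub t1) t2, pd3_sub s123 t1,
      pd3_add s12 s3, pd3_add s1 s2, pd3_mul (hu j) q123', pd3_mul (hv j) q4', pd3_mul hp (hu j),
      pd3_const_mul q123, pd3_add q12 q3, pd3_add q1 q2, pd3_add q4 hθ, pd3_mul hθ (hθ' j),
      pd3_mul hθ hθ, pd3_sum _ (fun i => (hu i).mul (hu' j i)),
      pd3_sum _ (fun i => (hv i).mul (hv' j i)), pd3_sum _ (fun i => (hu i).mul (hu i)),
      pd3_sum _ (fun i => (hv i).mul (hv i)), pd3_sum _ (fun i => (hu i).mul (hv i))]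
    simp only [pd3_mul (hu _) (hu' j _), pd3_mul (hv _) (hv' j _), pd3_mul (hu _) (hu _),
      pd3_mul (hv _) (hv _), pd3_mul (hu _) (hv _)]
  have eu := h.eq_u x
  have ev := h.eq_v x
  have et := h.eq_θ x
  have ed := h.div_u x
  simp only [pd3_mul (hv _) (hv _)] at eu
  simp only [key, Gsq]
  simp only [lap3, Fin.sum_univ_three] at eu ev et ed ⊢
  linear_combination (-1 : ℝ) * (u x 0 * eu 0 + u x 1 * eu 1 + u x 2 * eu 2 + v x 0 * ev 0
    + v x 1 * ev 1 + v x 2 * ev 2 + θ x * et)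
    - (1 / 2 * ((u x 0 * u x 0 + u x 1 * u x 1 + u x 2 * u x 2)
      + (v x 0 * v x 0 + v x 1 * v x 1 + v x 2 * v x 2) + θ x * θ x)) * ed - pr x * ed

/-- The energy balance tested with a cutoff function. -/
lemma energy_identity {u : E3 → E3} {pr : E3 → ℝ} {v : E3 → E3} {θ : E3 → ℝ}
    (h : IsTCMSolution u pr v θ) {φ : E3 → ℝ} (hφ : Sm φ) (hc : HasCompactSupport φ) :
    ∫ x, φ x * Gsq u v θ x = - ∫ x, ∑ j, pd3 j φ x * flux u pr v θ j x := by
  have h1 : ∀ x, φ x * Gsq u v θ x = ∑ j, φ x * pd3 j (flux u pr v θ j) x := by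
    intro x
    rw [← div_flux h, Finset.mul_sum]
  have hfl := fun j => flux_smooth h j
  simp only [h1]
  rw [integral_finsetSum, integral_finsetSum, ← Finset.sum_neg_distrib]
  · exact Finset.sum_congr rfl fun j _ => ibp hφ (hfl j) (Or.inl hc) j
  · intro j _
    exact Sm.integrable ((hφ.pd j).mul (hfl j)) (hcs_pd3 hc j).mul_right
  · intro j _
    exact Sm.integrable (hφ.mul ((hfl j).pd j)) hc.mul_right

/-- The momentum equation tested with a compactly supported field `w`. -/
lemma pressure_identity {u : E3 → E3} {pr : E3 → ℝ} {v : E3 → E3} {θ : E3 → ℝ}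
    (h : IsTCMSolution u pr v θ) {w : Fin 3 → E3 → ℝ} (hw : ∀ i, Sm (w i))
    (hc : ∀ i, HasCompactSupport (w i)) :
    ∫ x, pr x * ∑ i, pd3 i (w i) x =
      ∑ i, ∑ j, ((∫ x, pd3 j (fun y => u y i) x * pd3 j (w i) x)
        + (∫ x, (u x j * pd3 j (fun y => u y i) x) * w i x)
        + ∫ x, pd3 j (fun y => v y j * v y i) x * w i x) := by
  have hu := fun i => sm_coord h.smooth_u i
  have hv := fun i => sm_coord h.smooth_v i
  have hp := h.smooth_pr
  have hu' := fun j i => (hu i).pd j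
  have hvv : ∀ j i, Sm (fun y => v y j * v y i) := fun j i => (hv j).mul (hv i)
  have e1 : ∀ x, pr x * ∑ i, pd3 i (w i) x = ∑ i, pr x * pd3 i (w i) x := fun x => Finset.mul_sum ..
  simp only [e1]
  rw [integral_finsetSum _ fun i _ => Sm.integrable (hp.mul ((hw i).pd i)) (hcs_pd3 (hc i) i).mul_left]
  refine Finset.sum_congr rfl fun i _ => ?_
  rw [ibp hp (hw i) (Or.inr (hc i)) i]
  have e2 : ∀ j, ∫ x, pd3 j (fun y => u y i) x * pd3 j (w i) x
      = - ∫ x, pd3 j (pd3 j (fun y => u y i)) x * w i x := fun j =>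
    ibp (hu' j i) (hw i) (Or.inr (hc i)) j
  simp only [e2]
  have i1 : ∀ j, Integrable fun x => pd3 j (pd3 j (fun y => u y i)) x * w i x := fun j =>
    Sm.integrable (((hu' j i).pd j).mul (hw i)) (hc i).mul_left
  have i2 : ∀ j, Integrable fun x => (u x j * pd3 j (fun y => u y i) x) * w i x := fun j =>
    Sm.integrable (((hu j).mul (hu' j i)).mul (hw i)) (hc i).mul_left
  have i3 : ∀ j, Integrable fun x => pd3 j (fun y => v y j * v y i) x * w i x := fun j =>
    Sm.integrable (((hvv j i).pd j).mul (hw i)) (hc i).mul_left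
  rw [Finset.sum_add_distrib, Finset.sum_add_distrib, Finset.sum_neg_distrib,
    ← integral_finsetSum _ fun j _ => i1 j, ← integral_finsetSum _ fun j _ => i2 j,
    ← integral_finsetSum _ fun j _ => i3 j, neg_add_eq_sub,
    ← integral_sub (integrable_finsetSum _ fun j _ => i2 j) (integrable_finsetSum _ fun j _ => i1 j)]
  have j1 : Integrable fun x => ∑ j, (u x j * pd3 j (fun y => u y i) x) * w i x
      - ∑ j, pd3 j (pd3 j (fun y => u y i)) x * w i x :=
    (integrable_finsetSum _ fun j _ => i2 j).sub (integrable_finsetSum _ fun j _ => i1 j)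
  rw [← integral_add j1 (integrable_finsetSum _ fun j _ => i3 j), ← integral_neg]
  refine integral_congr_ae (ae_of_all _ fun x => ?_)
  have e := h.eq_u x i
  simp only [lap3] at e
  simp only [← Finset.sum_mul]
  linear_combination (-(w i x)) * e

/-- The transport term moved onto the test function, using `div u = 0`. -/
lemma transport_ibp {u : E3 → E3} {pr : E3 → ℝ} {v : E3 → E3} {θ : E3 → ℝ}
    (h : IsTCMSolution u pr v θ) {w : E3 → ℝ} (hw : Sm w) (hc : HasCompactSupport w) (i : Fin 3) :
    ∑ j, ∫ x, (u x j * pd3 j (fun y => u y i) x) * w x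
      = - ∑ j, ∫ x, (u x j * u x i) * pd3 j w x := by
  have hu := fun i => sm_coord h.smooth_u i
  have hu' := fun j i => (hu i).pd j
  have e1 : ∀ j, - ∫ x, (u x j * u x i) * pd3 j w x
      = ∫ x, pd3 j (fun y => u y j * u y i) x * w x := fun j => by
    rw [ibp ((hu j).mul (hu i)) hw (Or.inr hc) j, neg_neg]
  rw [← Finset.sum_neg_distrib]
  simp only [e1]
  rw [← integral_finsetSum, ← integral_finsetSum]
  · refine integral_congr_ae (ae_of_all _ fun x => ?_)
    have e := h.div_u x
    simp only [pd3_mul (hu _) (hu i), ← Finset.sum_mul, Finset.sum_add_distrib]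
    rw [e]; ring
  · exact fun j _ => Sm.integrable ((Sm.pd ((hu j).mul (hu i)) j).mul hw) hc.mul_left
  · exact fun j _ => Sm.integrable (((hu j).mul (hu' j i)).mul hw) hc.mul_left

/-! ### Convolutions and Young's inequality -/

/-- Convolution of scalar functions on `ℝ³`. -/
def cv (f g : E3 → ℝ) (x : E3) : ℝ := ∫ t, f t * g (x - t)

lemma cv_eq (f g : E3 → ℝ) : cv f g = convolution f g (ContinuousLinearMap.mul ℝ ℝ) volume := by
  funext x
  simp [cv, convolution]

lemma sm_cv {f g : E3 → ℝ} (hf : Sm f) (hc : HasCompactSupport f) (hg : Continuous g) :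
    Sm (cv f g) := by
  rw [cv_eq]
  exact hc.contDiff_convolution_left _ hf hg.locallyIntegrable

lemma pd3_cv {f g : E3 → ℝ} (hf : Sm f) (hc : HasCompactSupport f) (hg : Continuous g) (j : Fin 3) :
    pd3 j (cv f g) = cv (pd3 j f) g := by
  funext x
  have h := hc.hasFDerivAt_convolution_left (ContinuousLinearMap.mul ℝ ℝ)
    (hf.of_le (by simp)) (hg.locallyIntegrable (μ := volume)) x
  rw [← cv_eq] at h
  unfold pd3
  rw [h.fderiv]
  have he : ConvolutionExistsAt (fderiv ℝ f) g x
      ((ContinuousLinearMap.mul ℝ ℝ).precompL E3) volume :=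
    (hc.fderiv ℝ).convolutionExists_left _ (hf.continuous_fderiv (by simp))
      hg.locallyIntegrable x
  rw [convolution, ContinuousLinearMap.integral_apply he]
  simp [cv]

lemma pd3_comp_sub {g : E3 → ℝ} (hg : Sm g) (j : Fin 3) (x t : E3) :
    pd3 j (fun s => g (x - s)) t = - pd3 j g (x - t) := by
  unfold pd3
  have h1 : HasFDerivAt (fun s : E3 => x - s) (-(ContinuousLinearMap.id ℝ E3)) t :=
    (hasFDerivAt_id t).const_sub x
  have h2 := ((hg.diff (x - t)).hasFDerivAt).comp t h1
  have : (fun s => g (x - s)) = g ∘ (fun s : E3 => x - s) := rfl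
  rw [this, h2.fderiv]
  simp

lemma sm_comp_sub {g : E3 → ℝ} (hg : Sm g) (x : E3) : Sm (fun s => g (x - s)) :=
  hg.comp (contDiff_const.sub contDiff_id)

lemma cv_pd_comm {f g : E3 → ℝ} (hf : Sm f) (hc : HasCompactSupport f) (hg : Sm g) (j : Fin 3) :
    cv (pd3 j f) g = cv f (pd3 j g) := by
  funext x
  have := ibp hf (sm_comp_sub hg x) (Or.inl hc) j
  simp only [pd3_comp_sub hg, mul_neg, integral_neg, neg_inj] at this
  exact this.symm

lemma hcs_cv {f g : E3 → ℝ} (hf : HasCompactSupport f) (hg : HasCompactSupport g) :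
    HasCompactSupport (cv f g) := by
  rw [cv_eq]
  exact hf.convolution _ hg

lemma cv_eq_zero {f g : E3 → ℝ} {a b : ℝ} (hf : ∀ x, a < ‖x‖ → f x = 0)
    (hg : ∀ x, b < ‖x‖ → g x = 0) {x : E3} (hx : a + b < ‖x‖) : cv f g x = 0 := by
  unfold cv
  rw [show (fun t => f t * g (x - t)) = fun _ => 0 from ?_, integral_zero]
  funext t
  by_cases h : a < ‖t‖
  · simp [hf t h]
  · have : b < ‖x - t‖ := by
      have := norm_sub_norm_le x t
      push Not at h
      linarith
    simp [hg _ this]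

lemma cv_integrable {f g : E3 → ℝ} (hf : Continuous f) (hc : HasCompactSupport f)
    (hg : Continuous g) (x : E3) : Integrable fun t => f t * g (x - t) :=
  (hf.mul (hg.comp (continuous_const.sub continuous_id))).integrable_of_hasCompactSupport
    hc.mul_right

/-- **Young's convolution inequality** for nonnegative functions. -/
lemma young_lintegral {k g : E3 → ℝ≥0∞} (hk : Measurable k) (hg : Measurable g) {t p s : ℝ}
    (ht : 0 < t) (hp : 0 < p) (hts : t ≤ s) (hps : p ≤ s) (h : 1 / t + 1 / p = 1 + 1 / s) :
    (∫⁻ x, (∫⁻ y, k y * g (x - y)) ^ s) ^ (1 / s)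
      ≤ (∫⁻ x, k x ^ t) ^ (1 / t) * (∫⁻ x, g x ^ p) ^ (1 / p) := by
  have hs : 0 < s := ht.trans_le hts
  have hb : 0 ≤ 1 / t - 1 / s := sub_nonneg.2 (one_div_le_one_div_of_le ht hts)
  have hc : 0 ≤ 1 / p - 1 / s := sub_nonneg.2 (one_div_le_one_div_of_le hp hps)
  set A := ∫⁻ x, k x ^ t
  set B := ∫⁻ x, g x ^ p
  have point : ∀ x, (∫⁻ y, k y * g (x - y)) ≤
      (∫⁻ y, k y ^ t * g (x - y) ^ p) ^ (1 / s) * A ^ (1 / t - 1 / s) * B ^ (1 / p - 1 / s) := by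
    intro x
    have hgx : Measurable fun y => g (x - y) := hg.comp (measurable_const.sub measurable_id)
    let F : Fin 3 → E3 → ℝ≥0∞ :=
      ![fun y => k y ^ t * g (x - y) ^ p, fun y => k y ^ t, fun y => g (x - y) ^ p]
    let e : Fin 3 → ℝ := ![1 / s, 1 / t - 1 / s, 1 / p - 1 / s]
    have H := ENNReal.lintegral_prod_norm_pow_le (μ := (volume : Measure E3)) Finset.univ (f := F)
      (p := e)
      (by
        intro i _
        fin_cases i
        · exact ((hk.pow_const t).mul (hgx.pow_const p)).aemeasurable
        · exact (hk.pow_const t).aemeasurable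
        · exact (hgx.pow_const p).aemeasurable)
      (by simp only [Fin.sum_univ_three, e]; simp; simp at h; linarith)
      (by
        intro i _
        fin_cases i
        · simp [e]; positivity
        · simpa [e] using hb
        · simpa [e] using hc)
    simp only [Fin.prod_univ_three, F, e, Matrix.cons_val_zero, Matrix.cons_val_one,
      Matrix.cons_val] at H
    have hB : ∫⁻ y, g (x - y) ^ p = B := lintegral_sub_left_eq_self (fun y => g y ^ p) x
    rw [hB] at H
    refine le_trans (le_of_eq ?_) H
    refine lintegral_congr fun y => ?_
    rw [ENNReal.mul_rpow_of_nonneg _ _ (by positivity), ← ENNReal.rpow_mul, ← ENNReal.rpow_mul,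
      ← ENNReal.rpow_mul, ← ENNReal.rpow_mul]
    have e1 : k y = k y ^ (t * (1 / s)) * k y ^ (t * (1 / t - 1 / s)) := by
      rw [← ENNReal.rpow_add_of_nonneg _ _ (by positivity) (by positivity)]
      conv_lhs => rw [← ENNReal.rpow_one (k y)]
      congr 1; field_simp; ring
    have e2 : g (x - y) = g (x - y) ^ (p * (1 / s)) * g (x - y) ^ (p * (1 / p - 1 / s)) := by
      rw [← ENNReal.rpow_add_of_nonneg _ _ (by positivity) (by positivity)]
      conv_lhs => rw [← ENNReal.rpow_one (g (x - y))]
      congr 1; field_simp; ring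
    conv_lhs => rw [e1, e2]
    ring
  have T : ∫⁻ x, ∫⁻ y, k y ^ t * g (x - y) ^ p = A * B := by
    rw [lintegral_lintegral_swap]
    · have : ∀ y, ∫⁻ x, k y ^ t * g (x - y) ^ p = k y ^ t * B := by
        intro y
        have hm : Measurable fun x => g (x - y) ^ p :=
          (hg.comp (measurable_id.sub_const y)).pow_const p
        rw [lintegral_const_mul _ hm]
        congr 1
        exact lintegral_sub_right_eq_self (fun x => g x ^ p) y
      simp only [this]
      rw [lintegral_mul_const _ (hk.pow_const t)]
    · exact (((hk.comp measurable_snd).pow_const t).mul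
        ((hg.comp (measurable_fst.sub measurable_snd)).pow_const p)).aemeasurable
  have step : ∫⁻ x, (∫⁻ y, k y * g (x - y)) ^ s
      ≤ (A * B) * (A ^ (1 / t - 1 / s) * B ^ (1 / p - 1 / s)) ^ s := by
    rw [← T, ← lintegral_mul_const'']
    · refine lintegral_mono fun x => ?_
      refine le_trans (ENNReal.rpow_le_rpow (point x) hs.le) ?_
      rw [mul_assoc, ENNReal.mul_rpow_of_nonneg _ _ hs.le, ← ENNReal.rpow_mul,
        one_div_mul_cancel hs.ne', ENNReal.rpow_one]
    · exact (Measurable.lintegral_prod_right' (f := fun z : E3 × E3 => k z.2 ^ t * g (z.1 - z.2) ^ p)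
        (((hk.comp measurable_snd).pow_const t).mul
        ((hg.comp (measurable_fst.sub measurable_snd)).pow_const p))).aemeasurable
  refine le_trans (ENNReal.rpow_le_rpow step (by positivity)) (le_of_eq ?_)
  rw [ENNReal.mul_rpow_of_nonneg _ _ (by positivity), ← ENNReal.rpow_mul, mul_one_div_cancel hs.ne',
    ENNReal.rpow_one, ENNReal.mul_rpow_of_nonneg _ _ (by positivity)]
  have e1 : A ^ (1 / t) = A ^ (1 / s) * A ^ (1 / t - 1 / s) := by
    rw [← ENNReal.rpow_add_of_nonneg _ _ (by positivity) hb]; congr 1; ring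
  have e2 : B ^ (1 / p) = B ^ (1 / s) * B ^ (1 / p - 1 / s) := by
    rw [← ENNReal.rpow_add_of_nonneg _ _ (by positivity) hc]; congr 1; ring
  rw [e1, e2]; ring

/-- The `L^s` norm over `ℝ³` as a real number. -/
def nrm (f : E3 → ℝ) (s : ℝ) : ℝ := (∫ x, |f x| ^ s) ^ (1 / s)

lemma integrable_rpow {f : E3 → ℝ} (hf : Continuous f) (hc : HasCompactSupport f) {s : ℝ}
    (hs : 0 < s) : Integrable fun x => |f x| ^ s := by
  refine Continuous.integrable_of_hasCompactSupport ?_ ?_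
  · exact (continuous_abs.comp hf).rpow_const fun x => Or.inr hs.le
  · exact hc.comp_left (g := fun y : ℝ => |y| ^ s) (by simp [hs.ne'])

lemma ofReal_nrm {f : E3 → ℝ} (hf : Continuous f) (hc : HasCompactSupport f) {s : ℝ} (hs : 0 < s) :
    ENNReal.ofReal (nrm f s) = (∫⁻ x, (ENNReal.ofReal |f x|) ^ s) ^ (1 / s) := by
  unfold nrm
  rw [← ENNReal.ofReal_rpow_of_nonneg (integral_nonneg fun x => by positivity) (by positivity),
    ofReal_integral_eq_lintegral_ofReal (integrable_rpow hf hc hs)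
      (ae_of_all _ fun x => by positivity)]
  congr 1
  refine lintegral_congr fun x => ?_
  rw [ENNReal.ofReal_rpow_of_nonneg (abs_nonneg _) hs.le]

lemma ofReal_abs_cv_le (k g : E3 → ℝ) (x : E3) :
    ENNReal.ofReal |cv k g x| ≤ ∫⁻ y, ENNReal.ofReal |k y| * ENNReal.ofReal |g (x - y)| := by
  unfold cv
  rw [← Real.norm_eq_abs, ofReal_norm]
  refine le_trans (enorm_integral_le_lintegral_enorm _) (le_of_eq ?_)
  refine lintegral_congr fun y => ?_
  rw [← ENNReal.ofReal_mul (abs_nonneg _), ← abs_mul, ← ofReal_norm, Real.norm_eq_abs]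

/-- Young's inequality for the real-valued norms of compactly supported functions. -/
lemma young {k g : E3 → ℝ} (hk : Continuous k) (hkc : HasCompactSupport k) (hg : Continuous g)
    (hgc : HasCompactSupport g) {t p s : ℝ} (ht : 0 < t) (hp : 0 < p) (hts : t ≤ s) (hps : p ≤ s)
    (h : 1 / t + 1 / p = 1 + 1 / s) : nrm (cv k g) s ≤ nrm k t * nrm g p := by
  have hs : 0 < s := ht.trans_le hts
  have hcont : Continuous (cv k g) := by
    rw [cv_eq]
    exact hkc.continuous_convolution_left _ hk hg.locallyIntegrable
  have n1 : 0 ≤ nrm k t := Real.rpow_nonneg (integral_nonneg fun x => by positivity) _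
  have n2 : 0 ≤ nrm g p := Real.rpow_nonneg (integral_nonneg fun x => by positivity) _
  rw [← ENNReal.ofReal_le_ofReal_iff (by positivity), ENNReal.ofReal_mul n1,
    ofReal_nrm hcont (hcs_cv hkc hgc) hs, ofReal_nrm hk hkc ht, ofReal_nrm hg hgc hp]
  refine le_trans ?_ (young_lintegral (k := fun x => ENNReal.ofReal |k x|)
    (g := fun x => ENNReal.ofReal |g x|) (by fun_prop) (by fun_prop) ht hp hts hps h)
  exact ENNReal.rpow_le_rpow (lintegral_mono fun x =>
    ENNReal.rpow_le_rpow (ofReal_abs_cv_le k g x) hs.le) (by positivity)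

/-! ### A regularised Newtonian kernel -/

lemma pd3_comp_normsq {h : ℝ → ℝ} (hh : ContDiff ℝ (⊤ : ℕ∞) h) (j : Fin 3) (x : E3) :
    pd3 j (fun y => h (‖y‖ ^ 2)) x = 2 * x j * deriv h (‖x‖ ^ 2) := by
  unfold pd3
  have h1 : HasFDerivAt (fun y : E3 => ‖y‖ ^ 2) (2 • (innerSL ℝ x)) x :=
    (hasStrictFDerivAt_norm_sq x).hasFDerivAt
  have h2 : HasDerivAt h (deriv h (‖x‖ ^ 2)) (‖x‖ ^ 2) :=
    ((hh.differentiable (by simp)).differentiableAt).hasDerivAt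
  have h3 := h2.comp_hasFDerivAt x h1
  have : (fun y : E3 => h (‖y‖ ^ 2)) = h ∘ fun y : E3 => ‖y‖ ^ 2 := rfl
  rw [this, h3.fderiv]
  simp [EuclideanSpace.inner_single_right]
  ring

lemma sm_comp_normsq {h : ℝ → ℝ} (hh : ContDiff ℝ (⊤ : ℕ∞) h) : Sm (fun y => h (‖y‖ ^ 2)) :=
  hh.comp (contDiff_norm_sq ℝ)

lemma smooth_deriv {h : ℝ → ℝ} (hh : ContDiff ℝ (⊤ : ℕ∞) h) : ContDiff ℝ (⊤ : ℕ∞) (deriv h) := by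
  have : ContDiff ℝ ((⊤ : ℕ∞) + 1 : WithTop ℕ∞) h := by simpa using hh
  exact (contDiff_succ_iff_deriv.1 this).2.2

/-- `t ↦ t^{-1/2}` smoothly truncated near the origin: it vanishes for `t ≤ 1/8` and equals
`t^{-1/2}` for `t ≥ 1/4`. -/
def Hk (t : ℝ) : ℝ := Real.smoothTransition (8 * t - 1) * (Real.sqrt t)⁻¹

lemma Hk_smooth : ContDiff ℝ (⊤ : ℕ∞) Hk := by
  rw [contDiff_iff_contDiffAt]
  intro t
  by_cases h : t < 1 / 8
  · have : Hk =ᶠ[nhds t] fun _ => 0 := by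
      filter_upwards [Iio_mem_nhds h] with y hy
      unfold Hk
      rw [Real.smoothTransition.zero_of_nonpos, zero_mul]
      have : y < 1 / 8 := hy
      linarith
    exact contDiffAt_const.congr_of_eventuallyEq this
  · have ht : 0 < t := by linarith
    unfold Hk
    refine ContDiffAt.mul ?_ ?_
    · exact (Real.smoothTransition.contDiff.comp
        ((contDiff_const.mul contDiff_id).sub contDiff_const)).contDiffAt
    · exact ((Real.contDiffAt_sqrt ht.ne').inv (by positivity))

lemma Hk_eq {t : ℝ} (ht : 1 / 4 ≤ t) : Hk t = t ^ (-(1:ℝ) / 2) := by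
  unfold Hk
  rw [Real.smoothTransition.one_of_one_le (by linarith), one_mul, Real.sqrt_eq_rpow,
    ← Real.rpow_neg (by linarith)]
  congr 1; norm_num

lemma Hk_deriv_eq {t : ℝ} (ht : 1 / 4 < t) : deriv Hk t = -(1/2) * t ^ (-(3:ℝ) / 2) := by
  have : Hk =ᶠ[nhds t] fun t => t ^ (-(1:ℝ) / 2) := by
    filter_upwards [Ioi_mem_nhds ht] with y hy using Hk_eq (le_of_lt hy)
  rw [this.deriv_eq, Real.deriv_rpow_const]
  norm_num

lemma Hk_deriv2_eq {t : ℝ} (ht : 1 / 4 < t) : deriv (deriv Hk) t = 3/4 * t ^ (-(5:ℝ) / 2) := by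
  have : deriv Hk =ᶠ[nhds t] fun t => -(1/2) * t ^ (-(3:ℝ) / 2) := by
    filter_upwards [Ioi_mem_nhds ht] with y hy using Hk_deriv_eq hy
  rw [this.deriv_eq, deriv_const_mul_field, Real.deriv_rpow_const]
  norm_num
  ring

/-- The regularised Newtonian kernel: smooth, and equal to `1/‖x‖` for `‖x‖ ≥ 1/2`. -/
def ka (x : E3) : ℝ := Hk (‖x‖ ^ 2)

/-- The mollifier `η = -Δ ka`. -/
def eta (x : E3) : ℝ := - lap3 ka x

lemma ka_smooth : Sm ka := sm_comp_normsq Hk_smooth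

lemma pd3_ka (j : Fin 3) : pd3 j ka = fun x => 2 * x j * deriv Hk (‖x‖ ^ 2) :=
  funext fun x => pd3_comp_normsq Hk_smooth j x

lemma pd3_coord (i j : Fin 3) (x : E3) : pd3 j (fun y : E3 => y i) x = if i = j then 1 else 0 := by
  unfold pd3
  have : (fun y : E3 => y i) = (EuclideanSpace.proj i : E3 →L[ℝ] ℝ) := rfl
  rw [this, ContinuousLinearMap.fderiv]
  simp

lemma eta_eq (x : E3) :
    eta x = -(6 * deriv Hk (‖x‖ ^ 2) + 4 * ‖x‖ ^ 2 * deriv (deriv Hk) (‖x‖ ^ 2)) := by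
  unfold eta lap3
  congr 1
  have s1 : ∀ j : Fin 3, Sm (fun y : E3 => y j) := fun j => sm_coord contDiff_id j
  have s2 : Sm (fun y => deriv Hk (‖y‖ ^ 2)) := sm_comp_normsq (smooth_deriv Hk_smooth)
  have : ∀ j : Fin 3, pd3 j (pd3 j ka) x
      = 2 * deriv Hk (‖x‖ ^ 2) + 4 * x j ^ 2 * deriv (deriv Hk) (‖x‖ ^ 2) := by
    intro j
    rw [pd3_ka]
    rw [pd3_mul (contDiff_const.mul (s1 j)) s2, pd3_const_mul (s1 j), pd3_coord,
      pd3_comp_normsq (smooth_deriv Hk_smooth)]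
    simp
    ring
  simp only [this]
  rw [EuclideanSpace.real_norm_sq_eq x, Fin.sum_univ_three, Fin.sum_univ_three]
  ring

lemma eta_smooth : Sm eta := by
  have : ∀ j, Sm (pd3 j (pd3 j ka)) := fun j => (ka_smooth.pd j).pd j
  exact (sm_sum Finset.univ this).neg

lemma eta_zero {x : E3} (hx : 1 / 2 < ‖x‖) : eta x = 0 := by
  have h : 1 / 4 < ‖x‖ ^ 2 := by nlinarith
  rw [eta_eq, Hk_deriv_eq h, Hk_deriv2_eq h]
  have : ‖x‖ ^ 2 * (‖x‖ ^ 2) ^ (-(5:ℝ) / 2) = (‖x‖ ^ 2) ^ (-(3:ℝ) / 2) := by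
    nth_rewrite 1 [← Real.rpow_one (‖x‖ ^ 2)]
    rw [← Real.rpow_add (by linarith)]
    norm_num
  linear_combination (-3) * this

lemma hcs_of_zero {f : E3 → ℝ} {a : ℝ} (h : ∀ x, a < ‖x‖ → f x = 0) : HasCompactSupport f :=
  HasCompactSupport.intro (isCompact_closedBall (0 : E3) a) fun x hx =>
    h x (by simpa using hx)

lemma eta_hcs : HasCompactSupport eta := hcs_of_zero fun _ hx => eta_zero hx

/-- The total mass of the mollifier. -/
def c0 : ℝ := ∫ x, eta x

/-- `∫ η = 3 |B₁| > 0`, computed in polar coordinates. -/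
lemma c0_pos : 0 < c0 := by
  let f : ℝ → ℝ := fun r => -(6 * deriv Hk (r ^ 2) + 4 * r ^ 2 * deriv (deriv Hk) (r ^ 2))
  have h1 : c0 = ∫ x : E3, f ‖x‖ := integral_congr_ae (ae_of_all _ fun x => eta_eq x)
  rw [h1, integral_fun_norm_addHaar]
  have hd : Module.finrank ℝ E3 = 3 := by simp
  rw [hd]
  have hf0 : ∀ r, 1 < r → f r = 0 := by
    intro r hr
    have := eta_zero (x := EuclideanSpace.single 0 r) (by
      simp [abs_of_pos (by linarith : (0:ℝ) < r)]; linarith)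
    rw [eta_eq] at this
    simpa [f, abs_of_pos (by linarith : (0:ℝ) < r)] using this
  have hc : Continuous f := by
    have c1 : Continuous (deriv Hk) := (smooth_deriv Hk_smooth).continuous
    have c2 : Continuous (deriv (deriv Hk)) := (smooth_deriv (smooth_deriv Hk_smooth)).continuous
    fun_prop
  have h2 : ∫ y in Set.Ioi (0:ℝ), y ^ (3 - 1) • f y = ∫ y in (0:ℝ)..1, y ^ 2 * f y := by
    rw [intervalIntegral.integral_of_le zero_le_one]
    refine setIntegral_eq_of_subset_of_forall_sdiff_eq_zero measurableSet_Ioi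
      (fun y hy => hy.1) ?_
    intro y hy
    have : 1 < y := by
      by_contra hcon
      exact hy.2 ⟨hy.1, not_lt.1 hcon⟩
    simp [hf0 y this]
  have h3 : ∫ y in (0:ℝ)..1, y ^ 2 * f y = 1 := by
    rw [intervalIntegral.integral_eq_sub_of_hasDerivAt
      (f := fun r => -(2 * r ^ 3 * deriv Hk (r ^ 2)))]
    · rw [one_pow, Hk_deriv_eq (by norm_num)]; norm_num
    · intro r _
      have d1 : HasDerivAt (deriv Hk) (deriv (deriv Hk) (r ^ 2)) (r ^ 2) :=
        (((smooth_deriv Hk_smooth).differentiable (by simp)).differentiableAt).hasDerivAt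
      have d2 : HasDerivAt (fun r : ℝ => r ^ 2) (2 * r) r := by simpa using hasDerivAt_pow 2 r
      have d3 : HasDerivAt (fun r : ℝ => 2 * r ^ 3) (2 * (3 * r ^ 2)) r := by
        simpa using (hasDerivAt_pow 3 r).const_mul 2
      have := ((d3.mul (HasDerivAt.comp (h := fun r : ℝ => r ^ 2) r d1 d2)).neg)
      convert this using 1
      · rfl
      · simp only [f, Function.comp]; ring
    · exact (by fun_prop : Continuous fun y => y ^ 2 * f y).intervalIntegrable _ _
  rw [h2, h3]
  have : 0 < (volume : Measure E3).real (ball 0 1) := by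
    rw [measureReal_def]
    exact ENNReal.toReal_pos (measure_ball_pos _ _ one_pos).ne' measure_ball_lt_top.ne
  simpa using this

/-! ### Rescaled kernels -/

/-- The kernel at scale `s`; it equals `1/‖x‖` for `‖x‖ ≥ s/2`. -/
def kA (s : ℝ) (x : E3) : ℝ := s⁻¹ * ka (s⁻¹ • x)

/-- The mollifier at scale `s`. -/
def etas (s : ℝ) (x : E3) : ℝ := s⁻¹ ^ 3 * eta (s⁻¹ • x)

/-- The Newtonian kernel truncated to scales between `ε` and `d`. -/
def kM (ε d : ℝ) (x : E3) : ℝ := kA ε x - kA d x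

lemma sm_comp_smul {f : E3 → ℝ} (hf : Sm f) (c : ℝ) : Sm (fun y => f (c • y)) :=
  hf.comp (contDiff_const_smul c)

lemma kA_smooth (s : ℝ) : Sm (kA s) := contDiff_const.mul (sm_comp_smul ka_smooth _)

lemma etas_smooth (s : ℝ) : Sm (etas s) := contDiff_const.mul (sm_comp_smul eta_smooth _)

lemma kM_smooth (ε d : ℝ) : Sm (kM ε d) := (kA_smooth ε).sub (kA_smooth d)

lemma pd3_scale {f : E3 → ℝ} (hf : Sm f) (a c : ℝ) (j : Fin 3) :
    pd3 j (fun y => a * f (c • y)) = fun y => (a * c) * pd3 j f (c • y) := by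
  funext x
  rw [pd3_const_mul (sm_comp_smul hf c), pd3_comp_smul c hf]; ring

lemma pd3_kA (s : ℝ) (j : Fin 3) : pd3 j (kA s) = fun x => (s⁻¹ * s⁻¹) * pd3 j ka (s⁻¹ • x) :=
  pd3_scale ka_smooth _ _ _

lemma pd3_etas (s : ℝ) (j : Fin 3) :
    pd3 j (etas s) = fun x => (s⁻¹ ^ 3 * s⁻¹) * pd3 j eta (s⁻¹ • x) :=
  pd3_scale eta_smooth _ _ _

lemma lap3_kA (s : ℝ) (x : E3) : lap3 (kA s) x = - etas s x := by
  unfold lap3 etas eta lap3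
  simp only [pd3_kA]
  have : ∀ j, pd3 j (fun x => (s⁻¹ * s⁻¹) * pd3 j ka (s⁻¹ • x))
      = fun x => (s⁻¹ * s⁻¹ * s⁻¹) * pd3 j (pd3 j ka) (s⁻¹ • x) := fun j =>
    pd3_scale (ka_smooth.pd j) _ _ _
  simp only [this]
  rw [← Finset.mul_sum]; ring

lemma lap3_kM (ε d : ℝ) (x : E3) : lap3 (kM ε d) x = etas d x - etas ε x := by
  have : ∀ j, pd3 j (pd3 j (kM ε d)) x = pd3 j (pd3 j (kA ε)) x - pd3 j (pd3 j (kA d)) x := by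
    intro j
    have e : pd3 j (kM ε d) = fun y => pd3 j (kA ε) y - pd3 j (kA d) y := by
      funext y
      exact pd3_sub (kA_smooth ε) (kA_smooth d) j y
    rw [e, pd3_sub ((kA_smooth ε).pd j) ((kA_smooth d).pd j)]
  have h1 := lap3_kA ε x
  have h2 := lap3_kA d x
  unfold lap3 at *
  simp only [this, Finset.sum_sub_distrib, h1, h2]; ring

lemma etas_zero {s : ℝ} (hs : 0 < s) {x : E3} (hx : s / 2 < ‖x‖) : etas s x = 0 := by
  unfold etas
  rw [eta_zero, mul_zero]
  rw [norm_smul, Real.norm_of_nonneg (by positivity), lt_inv_mul_iff₀ hs]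
  linarith

lemma kA_eq {s : ℝ} (hs : 0 < s) {x : E3} (hx : s / 2 ≤ ‖x‖) : kA s x = ‖x‖⁻¹ := by
  have hx0 : 0 < ‖x‖ := by linarith
  have h : 1 / 2 ≤ s⁻¹ * ‖x‖ := by rw [le_inv_mul_iff₀ hs]; linarith
  unfold kA ka
  rw [norm_smul, Real.norm_of_nonneg (by positivity), Hk_eq (by nlinarith),
    ← Real.rpow_natCast, ← Real.rpow_mul (by positivity)]
  norm_num
  rw [Real.rpow_neg_one]
  field_simp

lemma kM_zero {ε d : ℝ} (hε : 0 < ε) (hd : ε ≤ d) {x : E3} (hx : d / 2 ≤ ‖x‖) : kM ε d x = 0 := by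
  unfold kM
  rw [kA_eq hε (by linarith), kA_eq (by linarith) hx, sub_self]

lemma etas_hcs {s : ℝ} (hs : 0 < s) : HasCompactSupport (etas s) :=
  hcs_of_zero fun _ hx => etas_zero hs hx

lemma kM_hcs {ε d : ℝ} (hε : 0 < ε) (hd : ε ≤ d) : HasCompactSupport (kM ε d) :=
  hcs_of_zero fun _ hx => kM_zero hε hd hx.le

lemma pd3_zero_of_zero {f : E3 → ℝ} {a : ℝ} (h : ∀ x, a < ‖x‖ → f x = 0) (j : Fin 3) {x : E3}
    (hx : a < ‖x‖) : pd3 j f x = 0 := by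
  have : f =ᶠ[nhds x] fun _ => 0 := by
    filter_upwards [(isOpen_lt continuous_const continuous_norm).mem_nhds hx] with y hy using h y hy
  unfold pd3
  rw [this.fderiv_eq]; simp

/-- `|∇ka|` decays like `‖x‖⁻²`, as for the Newtonian kernel. -/
lemma exists_pd_ka_bound : ∃ C : ℝ, 0 < C ∧ ∀ j x, |pd3 j ka x| * ‖x‖ ^ 2 ≤ C := by
  have hex : ∀ j : Fin 3, ∃ C, ∀ x : E3, ‖x‖ ≤ 1 → |pd3 j ka x| * ‖x‖ ^ 2 ≤ C := by
    intro j
    have hc : Continuous fun x => |pd3 j ka x| * ‖x‖ ^ 2 := by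
      have := (ka_smooth.pd j).continuous
      fun_prop
    obtain ⟨C, hC⟩ := (isCompact_closedBall (0 : E3) 1).bddAbove_image hc.continuousOn
    exact ⟨C, fun x hx => hC ⟨x, by simpa using hx, rfl⟩⟩
  choose C hC using hex
  refine ⟨1 + ∑ j, |C j|, by positivity, fun j x => ?_⟩
  by_cases hx : ‖x‖ ≤ 1
  · have := hC j x hx
    have h2 : |C j| ≤ ∑ j, |C j| := Finset.single_le_sum (f := fun j => |C j|)
      (fun i _ => abs_nonneg _) (Finset.mem_univ j)
    linarith [le_abs_self (C j)]
  · push Not at hx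
    rw [pd3_ka]
    have h1 : 1 / 4 < ‖x‖ ^ 2 := by nlinarith
    simp only []
    rw [Hk_deriv_eq h1, ← Real.rpow_natCast, ← Real.rpow_mul (by positivity)]
    norm_num
    have hxj : |x j| ≤ ‖x‖ := by
      have := EuclideanSpace.norm_eq x
      have h3 : x j ^ 2 ≤ ‖x‖ ^ 2 := by
        rw [EuclideanSpace.real_norm_sq_eq]
        exact Finset.single_le_sum (f := fun i => x i ^ 2) (fun i _ => sq_nonneg _)
          (Finset.mem_univ j)
      exact abs_le_of_sq_le_sq h3 (by positivity)
    have hx0 : 0 < ‖x‖ := by linarith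
    have h0 : 0 ≤ ∑ j, |C j| := by positivity
    have : |x j| * (‖x‖ ^ 3)⁻¹ * ‖x‖ ^ 2 ≤ 1 := by
      rw [show |x j| * (‖x‖ ^ 3)⁻¹ * ‖x‖ ^ 2 = |x j| / ‖x‖ by field_simp]
      exact div_le_one_of_le₀ hxj hx0.le
    linarith

/-- A bound for `|∂_j ka| ‖x‖²`. -/
def Ca : ℝ := exists_pd_ka_bound.choose

lemma Ca_pos : 0 < Ca := exists_pd_ka_bound.choose_spec.1

lemma pd_ka_le (j : Fin 3) (x : E3) : |pd3 j ka x| * ‖x‖ ^ 2 ≤ Ca :=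
  exists_pd_ka_bound.choose_spec.2 j x

lemma pd_kA_le {s : ℝ} (hs : 0 < s) (j : Fin 3) (x : E3) : |pd3 j (kA s) x| * ‖x‖ ^ 2 ≤ Ca := by
  rw [pd3_kA]
  refine le_trans (le_of_eq ?_) (pd_ka_le j (s⁻¹ • x))
  simp only []
  rw [norm_smul, Real.norm_of_nonneg (by positivity : 0 ≤ s⁻¹), abs_mul,
    abs_of_pos (by positivity : 0 < s⁻¹ * s⁻¹)]
  ring

/-- The truncated singular kernel `‖x‖^{-2}` on `‖x‖ ≤ d`. -/
def Kd (d : ℝ) (x : E3) : ℝ := if ‖x‖ ≤ d then (‖x‖ ^ 2)⁻¹ else 0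

lemma Kd_nonneg (d : ℝ) (x : E3) : 0 ≤ Kd d x := by
  unfold Kd; split_ifs <;> positivity

lemma Kd_measurable (d : ℝ) : Measurable (Kd d) := by
  unfold Kd
  refine Measurable.ite (measurableSet_le measurable_norm measurable_const) ?_ measurable_const
  fun_prop

lemma pd_kM_le {ε d : ℝ} (hε : 0 < ε) (hd : ε ≤ d) (j : Fin 3) {x : E3} (hx : x ≠ 0) :
    |pd3 j (kM ε d) x| ≤ 2 * Ca * Kd d x := by
  have hx0 : 0 < ‖x‖ := norm_pos_iff.2 hx
  unfold Kd
  split_ifs with h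
  · rw [← div_eq_mul_inv, le_div_iff₀ (by positivity)]
    have e : pd3 j (kM ε d) x = pd3 j (kA ε) x - pd3 j (kA d) x :=
      pd3_sub (kA_smooth ε) (kA_smooth d) j x
    rw [e]
    have h1 := pd_kA_le hε j x
    have h2 := pd_kA_le (hε.trans_le hd) j x
    have h3 := abs_sub (pd3 j (kA ε) x) (pd3 j (kA d) x)
    nlinarith [sq_nonneg ‖x‖]
  · push Not at h
    rw [pd3_zero_of_zero (a := d / 2) (fun y hy => kM_zero hε hd hy.le) j (by linarith)]
    simp

lemma Kd_scale {d : ℝ} (hd : 0 < d) (x : E3) : Kd d x = (d ^ 2)⁻¹ * Kd 1 (d⁻¹ • x) := by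
  unfold Kd
  have e : ‖d⁻¹ • x‖ = d⁻¹ * ‖x‖ := by
    rw [norm_smul, Real.norm_of_nonneg (by positivity)]
  rw [e]
  have : d⁻¹ * ‖x‖ ≤ 1 ↔ ‖x‖ ≤ d := by rw [inv_mul_le_iff₀ hd, mul_one]
  simp only [this]
  split_ifs
  · field_simp
  · simp

lemma Kd_integrable {t : ℝ} (ht : 0 < t) (ht2 : t < 3 / 2) : Integrable fun x => Kd 1 x ^ t := by
  let f : ℝ → ℝ := fun r => (if r ≤ 1 then (r ^ 2)⁻¹ else 0) ^ t
  change Integrable fun x : E3 => f ‖x‖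
  rw [integrable_fun_norm_addHaar]
  have hd : Module.finrank ℝ E3 = 3 := by simp
  rw [hd]
  have h1 : IntegrableOn (fun y : ℝ => y ^ (2 - 2 * t)) (Set.Ioc 0 1) := by
    have := intervalIntegral.intervalIntegrable_rpow' (a := 0) (b := 1) (r := 2 - 2 * t)
      (by linarith)
    rwa [intervalIntegrable_iff_integrableOn_Ioc_of_le zero_le_one] at this
  have h2 : IntegrableOn (fun y : ℝ => y ^ (3 - 1) • f y) (Set.Ioc 0 1) := by
    refine h1.congr_fun ?_ measurableSet_Ioc
    intro y hy
    simp only [f, if_pos hy.2, smul_eq_mul]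
    rw [← Real.rpow_natCast, ← Real.rpow_neg hy.1.le,
      ← Real.rpow_mul hy.1.le, ← Real.rpow_add hy.1]
    congr 1; push_cast; ring
  refine h2.of_forall_sdiff_eq_zero measurableSet_Ioi ?_
  intro y hy
  have : 1 < y := by
    by_contra hcon
    exact hy.2 ⟨hy.1, not_lt.1 hcon⟩
  simp [f, not_le.2 this, ht.ne']

lemma integral_scale {f : E3 → ℝ} {s : ℝ} (hs : 0 < s) :
    ∫ x, f (s⁻¹ • x) = s ^ 3 * ∫ x, f x := by
  rw [Measure.integral_comp_inv_smul_of_nonneg _ _ hs.le]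
  simp

lemma nrm_nonneg (f : E3 → ℝ) (t : ℝ) : 0 ≤ nrm f t :=
  Real.rpow_nonneg (integral_nonneg fun x => by positivity) _

lemma nrm_scale (f : E3 → ℝ) (c : ℝ) {s t : ℝ} (hs : 0 < s) (ht : 0 < t) :
    nrm (fun x => c * f (s⁻¹ • x)) t = |c| * s ^ (3 / t) * nrm f t := by
  unfold nrm
  have : ∀ x, |c * f (s⁻¹ • x)| ^ t = |c| ^ t * |f (s⁻¹ • x)| ^ t := by
    intro x; rw [abs_mul, Real.mul_rpow (abs_nonneg _) (abs_nonneg _)]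
  simp only [this]
  have h0 : 0 ≤ ∫ x, |f x| ^ t := integral_nonneg fun x => by positivity
  rw [integral_const_mul, integral_scale (f := fun x => |f x| ^ t) hs,
    Real.mul_rpow (by positivity) (by positivity), Real.mul_rpow (by positivity) h0,
    ← Real.rpow_mul (abs_nonneg _), mul_one_div_cancel ht.ne', Real.rpow_one,
    ← Real.rpow_natCast, ← Real.rpow_mul hs.le, mul_assoc]
  congr 3; push_cast; ring

lemma nrm_etas {s t : ℝ} (hs : 0 < s) (ht : 0 < t) :
    nrm (etas s) t = s ^ (3 / t - 3) * nrm eta t := by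
  have := nrm_scale eta (s⁻¹ ^ 3) hs ht
  unfold etas
  rw [this, abs_of_pos (by positivity)]
  congr 1
  rw [Real.rpow_sub hs, inv_pow]
  norm_cast
  field_simp

lemma nrm_etas_one {s : ℝ} (hs : 0 < s) : nrm (etas s) 1 = nrm eta 1 := by
  rw [nrm_etas hs one_pos]; norm_num

lemma nrm_pd_etas {s : ℝ} (hs : 0 < s) (j : Fin 3) :
    nrm (pd3 j (etas s)) 1 = s⁻¹ * nrm (pd3 j eta) 1 := by
  rw [pd3_etas, nrm_scale _ _ hs one_pos, abs_of_pos (by positivity)]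
  congr 1
  norm_num
  field_simp

lemma nrm_mono {f g : E3 → ℝ} {t : ℝ} (ht : 0 < t) (hg : Integrable fun x => |g x| ^ t)
    (h : ∀ᵐ x, |f x| ≤ |g x|) : nrm f t ≤ nrm g t := by
  unfold nrm
  refine Real.rpow_le_rpow (integral_nonneg fun x => by positivity) ?_ (by positivity)
  refine integral_mono_of_nonneg (ae_of_all _ fun x => by positivity) hg ?_
  filter_upwards [h] with x hx using Real.rpow_le_rpow (abs_nonneg _) hx ht.le

/-- The gradient of the truncated Newtonian kernel is in `L^t`, `t < 3/2`, uniformly in the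
inner truncation scale. -/
lemma nrm_pd_kM {ε d t : ℝ} (hε : 0 < ε) (hd : ε ≤ d) (ht : 0 < t) (ht2 : t < 3 / 2) (j : Fin 3) :
    nrm (pd3 j (kM ε d)) t ≤ 2 * Ca * nrm (Kd 1) t * d ^ (3 / t - 2) := by
  have hd0 : 0 < d := hε.trans_le hd
  have e : (fun x => 2 * Ca * Kd d x) = fun x => (2 * Ca * (d ^ 2)⁻¹) * Kd 1 (d⁻¹ • x) := by
    funext x; rw [Kd_scale hd0]; ring
  have hC := Ca_pos
  have hI : Integrable fun x => |2 * Ca * Kd d x| ^ t := by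
    have e2 : (fun x => |2 * Ca * Kd d x| ^ t)
        = fun x => (2 * Ca * (d ^ 2)⁻¹) ^ t * Kd 1 (d⁻¹ • x) ^ t := by
      funext x
      have : 2 * Ca * Kd d x = (2 * Ca * (d ^ 2)⁻¹) * Kd 1 (d⁻¹ • x) := congrFun e x
      rw [this, abs_of_nonneg (mul_nonneg (by positivity) (Kd_nonneg _ _)),
        Real.mul_rpow (by positivity) (Kd_nonneg _ _)]
    rw [e2]
    exact ((Kd_integrable ht ht2).comp_smul (by positivity)).const_mul _
  have h1 : nrm (pd3 j (kM ε d)) t ≤ nrm (fun x => 2 * Ca * Kd d x) t := by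
    refine nrm_mono ht hI ?_
    have : ∀ᵐ x : E3, x ≠ 0 := by simp [ae_iff, measure_singleton]
    filter_upwards [this] with x hx
    exact (pd_kM_le hε hd j hx).trans (le_abs_self _)
  refine h1.trans (le_of_eq ?_)
  rw [e, nrm_scale _ _ hd0 ht, abs_of_pos (by positivity), Real.rpow_sub hd0]
  norm_cast
  field_simp

lemma cv_etas_eq {s : ℝ} (hs : 0 < s) (g : E3 → ℝ) (x : E3) :
    cv (etas s) g x = ∫ y, eta y * g (x - s • y) := by
  have := integral_scale (f := fun y => eta y * g (x - s • y)) hs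
  have h2 : ∫ y, eta y * g (x - s • y) = (s ^ 3)⁻¹ * ∫ t, eta (s⁻¹ • t) * g (x - t) := by
    have e : ∀ t : E3, s • s⁻¹ • t = t := fun t => smul_inv_smul₀ hs.ne' t
    simp only [e] at this
    rw [this]; field_simp
  rw [h2, ← integral_const_mul]
  unfold cv etas
  refine integral_congr_ae (ae_of_all _ fun t => ?_)
  simp only [inv_pow]; ring

/-- Mollification converges: `η_ε * g → c₀ g` pointwise. -/
lemma cv_etas_tendsto {g : E3 → ℝ} (hg : Continuous g) (x : E3) :
    Tendsto (fun n : ℕ => cv (etas (1 / (n + 1 : ℝ))) g x) atTop (nhds (c0 * g x)) := by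
  have e : ∀ n : ℕ, cv (etas (1 / (n + 1 : ℝ))) g x
      = ∫ y, eta y * g (x - (1 / (n + 1 : ℝ)) • y) := fun n => cv_etas_eq (by positivity) g x
  simp only [e]
  have e2 : c0 * g x = ∫ y, eta y * g x := by rw [integral_mul_const]; rfl
  rw [e2]
  obtain ⟨C, hC⟩ := (isCompact_closedBall x 1).bddAbove_image (f := fun y => |g y|)
    (by fun_prop)
  refine tendsto_integral_of_dominated_convergence (fun y => |eta y| * C) ?_ ?_ ?_ ?_
  · intro n
    have := eta_smooth.continuous
    exact Continuous.aestronglyMeasurable (by fun_prop)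
  · exact ((eta_smooth.integrable eta_hcs).abs).mul_const C
  · intro n
    refine ae_of_all _ fun y => ?_
    by_cases hy : 1 / 2 < ‖y‖
    · simp [eta_zero hy]
    · rw [Real.norm_eq_abs, abs_mul]
      refine mul_le_mul_of_nonneg_left (hC ⟨_, ?_, rfl⟩) (abs_nonneg _)
      rw [mem_closedBall, dist_eq_norm, sub_sub_cancel_left, norm_neg, norm_smul, Real.norm_of_nonneg (by positivity)]
      have : 1 / ((n:ℝ) + 1) ≤ 1 := div_le_one_of_le₀ (by linarith [n.cast_nonneg (α := ℝ)]) (by positivity)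
      nlinarith [norm_nonneg y]
  · refine ae_of_all _ fun y => ?_
    have h0 : Tendsto (fun n : ℕ => x - (1 / (n + 1 : ℝ)) • y) atTop (nhds (x - (0:ℝ) • y)) :=
      tendsto_const_nhds.sub (tendsto_one_div_add_atTop_nhds_zero_nat.smul_const y)
    rw [zero_smul, sub_zero] at h0
    exact tendsto_const_nhds.mul ((hg.tendsto x).comp h0)

/-! ### Norms over balls -/

/-- The `L^s` norm over the ball `B_ρ` as a real number. -/
def nB (f : E3 → ℝ) (s ρ : ℝ) : ℝ := (∫ x in ball (0 : E3) ρ, |f x| ^ s) ^ (1 / s)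

lemma nB_nonneg (f : E3 → ℝ) (s ρ : ℝ) : 0 ≤ nB f s ρ :=
  Real.rpow_nonneg (integral_nonneg fun x => by positivity) _

lemma integrableOn_ball {f : E3 → ℝ} (hf : Continuous f) (ρ : ℝ) :
    IntegrableOn f (ball (0 : E3) ρ) :=
  (hf.continuousOn.integrableOn_compact (isCompact_closedBall (0 : E3) ρ)).mono_set
    ball_subset_closedBall

lemma cont_rpow {f : E3 → ℝ} (hf : Continuous f) {s : ℝ} (hs : 0 < s) :
    Continuous fun x => |f x| ^ s :=
  (continuous_abs.comp hf).rpow_const fun _ => Or.inr hs.le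

lemma integrableOn_ball_rpow {f : E3 → ℝ} (hf : Continuous f) {s : ℝ} (hs : 0 < s) (ρ : ℝ) :
    IntegrableOn (fun x => |f x| ^ s) (ball (0 : E3) ρ) := integrableOn_ball (cont_rpow hf hs) ρ

lemma nB_rpow {f : E3 → ℝ} {s ρ : ℝ} (hs : 0 < s) :
    nB f s ρ ^ s = ∫ x in ball (0 : E3) ρ, |f x| ^ s := by
  unfold nB
  rw [← Real.rpow_mul (integral_nonneg fun x => by positivity), one_div_mul_cancel hs.ne',
    Real.rpow_one]

lemma nB_sq {f : E3 → ℝ} {ρ : ℝ} : nB f 2 ρ ^ 2 = ∫ x in ball (0 : E3) ρ, f x ^ 2 := by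
  have := nB_rpow (f := f) (ρ := ρ) (s := 2) two_pos
  simpa using this

lemma nB_le {f g : E3 → ℝ} (hg : Continuous g) {s ρ c : ℝ} (hs : 0 < s) (hc : 0 ≤ c)
    (h : ∀ x ∈ ball (0 : E3) ρ, |f x| ≤ c * |g x|) : nB f s ρ ≤ c * nB g s ρ := by
  have e : c * nB g s ρ = (∫ x in ball (0 : E3) ρ, c ^ s * |g x| ^ s) ^ (1 / s) := by
    unfold nB
    rw [integral_const_mul, Real.mul_rpow (by positivity)
      (integral_nonneg fun x => by positivity), ← Real.rpow_mul hc, mul_one_div_cancel hs.ne',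
      Real.rpow_one]
  rw [e]
  refine Real.rpow_le_rpow (integral_nonneg fun x => by positivity) ?_ (by positivity)
  refine integral_mono_of_nonneg (ae_of_all _ fun x => by positivity)
    ((integrableOn_ball_rpow hg hs ρ).const_mul _) ?_
  refine (ae_restrict_iff' measurableSet_ball).2 (ae_of_all _ fun x hx => ?_)
  simp only []
  rw [← Real.mul_rpow hc (abs_nonneg _)]
  exact Real.rpow_le_rpow (abs_nonneg _) (h x hx) hs.le

lemma nB_mono {f : E3 → ℝ} (hf : Continuous f) {s ρ τ : ℝ} (hs : 0 < s) (h : ρ ≤ τ) :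
    nB f s ρ ≤ nB f s τ := by
  refine Real.rpow_le_rpow (integral_nonneg fun x => by positivity) ?_ (by positivity)
  exact setIntegral_mono_set (integrableOn_ball_rpow hf hs τ)
    (ae_of_all _ fun x => by positivity) (ball_subset_ball h).eventuallyLE

lemma nrm_eq_nB {f : E3 → ℝ} {s ρ : ℝ} (hs : 0 < s) (h : ∀ x, ρ ≤ ‖x‖ → f x = 0) :
    nrm f s = nB f s ρ := by
  unfold nrm nB
  rw [setIntegral_eq_integral_of_forall_compl_eq_zero]
  intro x hx
  rw [h x (by simpa using hx)]
  simp [hs.ne']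

lemma memLp_ball {f : E3 → ℝ} (hf : Continuous f) (s : ℝ≥0∞) (ρ : ℝ) :
    MemLp f s (volume.restrict (ball (0 : E3) ρ)) := by
  have : IsFiniteMeasure (volume.restrict (ball (0 : E3) ρ)) :=
    ⟨by rw [Measure.restrict_apply_univ]; exact measure_ball_lt_top⟩
  obtain ⟨C, hC⟩ := (isCompact_closedBall (0 : E3) ρ).exists_bound_of_continuousOn hf.continuousOn
  exact MemLp.of_bound hf.aestronglyMeasurable C
    ((ae_restrict_iff' measurableSet_ball).2 (ae_of_all _ fun x hx =>
      hC x (ball_subset_closedBall hx)))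

lemma holder2 {f g : E3 → ℝ} (hf : Continuous f) (hg : Continuous g) {a b ρ : ℝ}
    (ha : 1 < a) (h : 1 / a + 1 / b = 1) :
    ∫ x in ball (0 : E3) ρ, |f x| * |g x| ≤ nB f a ρ * nB g b ρ := by
  have hb : a.HolderConjugate b := by
    rw [Real.holderConjugate_iff]; exact ⟨ha, by simpa using h⟩
  exact integral_mul_le_Lp_mul_Lq_of_nonneg (μ := volume.restrict (ball (0 : E3) ρ)) hb
    (f := fun x => |f x|) (g := fun x => |g x|) (ae_of_all _ fun x => abs_nonneg _)
    (ae_of_all _ fun x => abs_nonneg _) (memLp_ball hf.abs _ _) (memLp_ball hg.abs _ _)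

lemma ofReal_nB {f : E3 → ℝ} (hf : Continuous f) {s ρ : ℝ} (hs : 0 < s) :
    ENNReal.ofReal (nB f s ρ) = (∫⁻ x in ball (0 : E3) ρ, (ENNReal.ofReal |f x|) ^ s) ^ (1 / s) := by
  unfold nB
  rw [← ENNReal.ofReal_rpow_of_nonneg (integral_nonneg fun x => by positivity) (by positivity),
    ofReal_integral_eq_lintegral_ofReal (integrableOn_ball_rpow hf hs ρ)
      (ae_of_all _ fun x => by positivity)]
  congr 1
  refine lintegral_congr fun x => ?_
  rw [ENNReal.ofReal_rpow_of_nonneg (abs_nonneg _) hs.le]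

lemma holder3 {f g k : E3 → ℝ} (hf : Continuous f) (hg : Continuous g) (hk : Continuous k)
    {a b c ρ : ℝ} (ha : 0 < a) (hb : 0 < b) (hc : 0 < c) (h : 1 / a + 1 / b + 1 / c = 1) :
    ∫ x in ball (0 : E3) ρ, |f x| * |g x| * |k x| ≤ nB f a ρ * nB g b ρ * nB k c ρ := by
  let F : Fin 3 → E3 → ℝ≥0∞ := ![fun x => ENNReal.ofReal |f x| ^ a,
    fun x => ENNReal.ofReal |g x| ^ b, fun x => ENNReal.ofReal |k x| ^ c]
  let e : Fin 3 → ℝ := ![1 / a, 1 / b, 1 / c]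
  have H := ENNReal.lintegral_prod_norm_pow_le (μ := volume.restrict (ball (0 : E3) ρ))
    Finset.univ (f := F) (p := e)
      (by
        intro i _
        fin_cases i
        · exact (by fun_prop : Measurable fun x => ENNReal.ofReal |f x| ^ a).aemeasurable
        · exact (by fun_prop : Measurable fun x => ENNReal.ofReal |g x| ^ b).aemeasurable
        · exact (by fun_prop : Measurable fun x => ENNReal.ofReal |k x| ^ c).aemeasurable)
      (by simp only [Fin.sum_univ_three, e]; simpa using h)
      (by
        intro i _
        fin_cases i <;> simp [e] <;> positivity)
  simp only [Fin.prod_univ_three, F, e, Matrix.cons_val_zero, Matrix.cons_val_one,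
      Matrix.cons_val] at H
  rw [← ofReal_nB hf ha, ← ofReal_nB hg hb, ← ofReal_nB hk hc,
    ← ENNReal.ofReal_mul (nB_nonneg _ _ _),
    ← ENNReal.ofReal_mul (mul_nonneg (nB_nonneg _ _ _) (nB_nonneg _ _ _))] at H
  rw [← ENNReal.ofReal_le_ofReal_iff (mul_nonneg (mul_nonneg (nB_nonneg _ _ _) (nB_nonneg _ _ _))
    (nB_nonneg _ _ _))]
  refine le_trans (le_of_eq ?_) H
  rw [ofReal_integral_eq_lintegral_ofReal (integrableOn_ball (by fun_prop) ρ)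
      (ae_of_all _ fun x => by positivity)]
  refine lintegral_congr fun x => ?_
  rw [← ENNReal.rpow_mul, ← ENNReal.rpow_mul, ← ENNReal.rpow_mul, mul_one_div_cancel ha.ne',
    mul_one_div_cancel hb.ne', mul_one_div_cancel hc.ne', ENNReal.rpow_one, ENNReal.rpow_one,
    ENNReal.rpow_one, ENNReal.ofReal_mul (by positivity), ENNReal.ofReal_mul (by positivity)]

lemma nB_add {f g : E3 → ℝ} (hf : Continuous f) (hg : Continuous g) {s ρ : ℝ} (hs : 1 ≤ s) :
    nB (fun x => f x + g x) s ρ ≤ nB f s ρ + nB g s ρ := by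
  have hs0 : 0 < s := by linarith
  have hfg : Continuous fun x => f x + g x := hf.add hg
  rw [← ENNReal.ofReal_le_ofReal_iff (add_nonneg (nB_nonneg _ _ _) (nB_nonneg _ _ _)),
    ENNReal.ofReal_add (nB_nonneg _ _ _) (nB_nonneg _ _ _), ofReal_nB hf hs0, ofReal_nB hg hs0,
    ofReal_nB hfg hs0]
  refine le_trans ?_ (ENNReal.lintegral_Lp_add_le
    (by fun_prop : Measurable fun x => ENNReal.ofReal |f x|).aemeasurable
    (by fun_prop : Measurable fun x => ENNReal.ofReal |g x|).aemeasurable hs)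
  refine ENNReal.rpow_le_rpow (lintegral_mono fun x => ?_) (by positivity)
  refine ENNReal.rpow_le_rpow ?_ hs0.le
  simp only [Pi.add_apply]
  rw [← ENNReal.ofReal_add (abs_nonneg _) (abs_nonneg _)]
  exact ENNReal.ofReal_le_ofReal (abs_add_le _ _)

lemma nB_neg (f : E3 → ℝ) (s ρ : ℝ) : nB (fun x => - f x) s ρ = nB f s ρ := by
  simp [nB]

/-- A product integral over the whole space, one factor being supported in the ball. -/
lemma abs_integral_le_ball {f w : E3 → ℝ} {ρ : ℝ}
    (h : ∀ x, ρ ≤ ‖x‖ → w x = 0) :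
    |∫ x, f x * w x| ≤ ∫ x in ball (0 : E3) ρ, |f x| * |w x| := by
  rw [← setIntegral_eq_integral_of_forall_compl_eq_zero (s := ball (0 : E3) ρ)]
  · refine (abs_integral_le_integral_abs).trans (le_of_eq ?_)
    simp only [abs_mul]
  · intro x hx
    rw [h x (by simpa using hx), mul_zero]

lemma abs_integral_le_nB {f w : E3 → ℝ} (hf : Continuous f) (hw : Continuous w) {a b ρ : ℝ}
    (h : ∀ x, ρ ≤ ‖x‖ → w x = 0) (ha : 1 < a) (hab : 1 / a + 1 / b = 1) :
    |∫ x, f x * w x| ≤ nB f a ρ * nB w b ρ :=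
  (abs_integral_le_ball h).trans (holder2 hf hw ha hab)

/-! ### A test field with prescribed divergence -/

/-- The test field `w = -∇(M * div F) + η_d * F`; its divergence is `η_ε * div F`. -/
def tw (ε d : ℝ) (F : Fin 3 → E3 → ℝ) (g : E3 → ℝ) (i : Fin 3) (x : E3) : ℝ :=
  - pd3 i (cv (kM ε d) g) x + cv (etas d) (F i) x

section
variable {ε d : ℝ} {F : Fin 3 → E3 → ℝ} {g : E3 → ℝ}

lemma tw_smooth (hε : 0 < ε) (hd : ε ≤ d) (hF : ∀ i, Sm (F i)) (hg : Sm g) (i : Fin 3) :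
    Sm (tw ε d F g i) :=
  ((sm_cv (kM_smooth ε d) (kM_hcs hε hd) hg.continuous).pd i).neg.add
    (sm_cv (etas_smooth d) (etas_hcs (hε.trans_le hd)) (hF i).continuous)

lemma cv_sub {k l g : E3 → ℝ} (hk : Continuous k) (hkc : HasCompactSupport k) (hl : Continuous l)
    (hlc : HasCompactSupport l) (hg : Continuous g) (x : E3) :
    cv (fun y => k y - l y) g x = cv k g x - cv l g x := by
  unfold cv
  rw [← integral_sub (cv_integrable hk hkc hg x) (cv_integrable hl hlc hg x)]
  simp only [sub_mul]

lemma lap3_cv {k g : E3 → ℝ} (hk : Sm k) (hkc : HasCompactSupport k) (hg : Continuous g) (x : E3) :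
    lap3 (cv k g) x = cv (lap3 k) g x := by
  unfold lap3
  have e : ∀ j, pd3 j (pd3 j (cv k g)) = cv (pd3 j (pd3 j k)) g := fun j => by
    rw [pd3_cv hk hkc hg, pd3_cv (hk.pd j) (hcs_pd3 hkc j) hg]
  simp only [e]
  unfold cv
  rw [← integral_finsetSum]
  · simp only [Finset.sum_mul]
  · intro j _
    exact cv_integrable ((hk.pd j).pd j).continuous (hcs_pd3 (hcs_pd3 hkc j) j) hg x

lemma lap3_cv_kM (hε : 0 < ε) (hd : ε ≤ d) (hg : Continuous g) :
    lap3 (cv (kM ε d) g) = fun x => cv (etas d) g x - cv (etas ε) g x := by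
  funext x
  rw [lap3_cv (kM_smooth ε d) (kM_hcs hε hd) hg]
  have : lap3 (kM ε d) = fun y => etas d y - etas ε y := funext fun y => lap3_kM ε d y
  rw [this, cv_sub (etas_smooth d).continuous (etas_hcs (hε.trans_le hd)) (etas_smooth ε).continuous
    (etas_hcs hε) hg]

lemma cv_sum_right {k : E3 → ℝ} {f : Fin 3 → E3 → ℝ} (hk : Continuous k)
    (hkc : HasCompactSupport k) (hf : ∀ i, Continuous (f i)) (x : E3) :
    cv k (fun y => ∑ i, f i y) x = ∑ i, cv k (f i) x := by
  unfold cv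
  rw [← integral_finsetSum]
  · simp only [Finset.mul_sum]
  · intro j _
    exact cv_integrable hk hkc (hf j) x

/-- Since `-ΔM = η_ε - η_d`, the two `η_d` contributions to the divergence cancel. -/
lemma div_tw (hε : 0 < ε) (hd : ε ≤ d) (hF : ∀ i, Sm (F i))
    (hg : g = fun x => ∑ i, pd3 i (F i) x) (x : E3) :
    ∑ i, pd3 i (tw ε d F g i) x = cv (etas ε) g x := by
  have hgs : Sm g := by rw [hg]; exact sm_sum _ fun i => (hF i).pd i
  have hd0 := hε.trans_le hd
  have s1 := sm_cv (kM_smooth ε d) (kM_hcs hε hd) hgs.continuous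
  have s2 := fun i => sm_cv (etas_smooth d) (etas_hcs hd0) (hF i).continuous
  have e : ∀ i, pd3 i (tw ε d F g i) x
      = - pd3 i (pd3 i (cv (kM ε d) g)) x + cv (etas d) (pd3 i (F i)) x := by
    intro i
    have := pd3_add (f := fun y => - pd3 i (cv (kM ε d) g) y) (s1.pd i).neg (s2 i) i x
    unfold tw
    rw [this, pd3_neg, pd3_cv (etas_smooth d) (etas_hcs hd0) (hF i).continuous,
      cv_pd_comm (etas_smooth d) (etas_hcs hd0) (hF i)]
  simp only [e, Finset.sum_add_distrib, Finset.sum_neg_distrib]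
  rw [← cv_sum_right (etas_smooth d).continuous (etas_hcs hd0) (fun i => ((hF i).pd i).continuous),
    ← hg]
  have := congrFun (lap3_cv_kM hε hd hgs.continuous) x
  unfold lap3 at this
  simp only [this]; ring

lemma tw_zero (hε : 0 < ε) (hd : ε ≤ d) {σ : ℝ} (hF : ∀ i x, σ < ‖x‖ → F i x = 0)
    (hg : ∀ x, σ < ‖x‖ → g x = 0) (i : Fin 3) {x : E3}
    (hx : d / 2 + σ < ‖x‖) : tw ε d F g i x = 0 := by
  unfold tw
  rw [pd3_zero_of_zero (a := d / 2 + σ) (fun y hy => cv_eq_zero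
    (fun z hz => kM_zero hε hd (le_of_lt hz)) hg hy) i hx,
    cv_eq_zero (fun z hz => etas_zero (hε.trans_le hd) hz) (hF i) hx]
  simp

lemma nrm_sq {f : E3 → ℝ} : nrm f 2 ^ 2 = ∫ x, f x ^ 2 := by
  unfold nrm
  rw [← Real.rpow_natCast, ← Real.rpow_mul (integral_nonneg fun x => by positivity)]
  norm_num

/-- `‖∂_i∂_j f‖₂ ≤ ‖Δf‖₂`, by integrating by parts twice. -/
lemma hess_le {f : E3 → ℝ} (hf : Sm f) (hc : HasCompactSupport f) (i j : Fin 3) :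
    nrm (pd3 j (pd3 i f)) 2 ≤ nrm (lap3 f) 2 := by
  have hpp := fun a b => (hf.pd a).pd b
  have hcc := fun a b => hcs_pd3 (hcs_pd3 hc a) b
  have key : ∀ a b : Fin 3, ∫ x, pd3 b (pd3 a f) x ^ 2
      = ∫ x, pd3 a (pd3 a f) x * pd3 b (pd3 b f) x := by
    intro a b
    have h1 := ibp (hpp a b) (hf.pd a) (Or.inl (hcc a b)) b
    have h2 := ibp (hf.pd a) (hpp b b) (Or.inl (hcs_pd3 hc a)) a
    have e : pd3 b (pd3 b (pd3 a f)) = pd3 a (pd3 b (pd3 b f)) := by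
      have e1 : pd3 b (pd3 a f) = pd3 a (pd3 b f) := funext fun y => pd3_comm hf b a y
      rw [e1]
      exact funext fun y => pd3_comm (hf.pd b) b a y
    calc ∫ x, pd3 b (pd3 a f) x ^ 2 = ∫ x, pd3 b (pd3 a f) x * pd3 b (pd3 a f) x := by
          simp only [sq]
      _ = - ∫ x, pd3 b (pd3 b (pd3 a f)) x * pd3 a f x := h1
      _ = - ∫ x, pd3 a f x * pd3 a (pd3 b (pd3 b f)) x := by
          rw [e]; simp only [mul_comm]
      _ = ∫ x, pd3 a (pd3 a f) x * pd3 b (pd3 b f) x := by rw [h2, neg_neg]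
  have tot : ∑ a, ∑ b, ∫ x, pd3 b (pd3 a f) x ^ 2 = ∫ x, lap3 f x ^ 2 := by
    simp only [key]
    have hI : ∀ a b, Integrable fun x => pd3 a (pd3 a f) x * pd3 b (pd3 b f) x := fun a b =>
      Sm.integrable ((hpp a a).mul (hpp b b)) (hcc a a).mul_right
    simp only [← integral_finsetSum _ (fun b (_ : b ∈ Finset.univ) => hI _ b)]
    rw [← integral_finsetSum]
    · unfold lap3
      simp only [sq, Finset.sum_mul_sum]
    · intro a _
      exact integrable_finsetSum _ fun b _ => hI a b
  have nn : ∀ a b, 0 ≤ ∫ x, pd3 b (pd3 a f) x ^ 2 := fun a b =>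
    integral_nonneg fun x => sq_nonneg _
  have le1 : ∫ x, pd3 j (pd3 i f) x ^ 2 ≤ ∫ x, lap3 f x ^ 2 := by
    rw [← tot]
    refine le_trans ?_ (Finset.single_le_sum
      (f := fun a => ∑ b, ∫ x, pd3 b (pd3 a f) x ^ 2)
      (fun a _ => Finset.sum_nonneg fun b _ => nn a b) (Finset.mem_univ i))
    exact Finset.single_le_sum (f := fun b => ∫ x, pd3 b (pd3 i f) x ^ 2) (fun b _ => nn i b)
      (Finset.mem_univ j)
  rw [← nrm_sq, ← nrm_sq] at le1
  exact (sq_le_sq₀ (nrm_nonneg _ _) (nrm_nonneg _ _)).1 le1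

/-- The constant in the bounds for the test field. -/
def Cη : ℝ := 2 * nrm eta 1 + ∑ j, nrm (pd3 j eta) 1

lemma Cη_nonneg : 0 ≤ Cη := by
  unfold Cη
  have := nrm_nonneg eta 1
  have : 0 ≤ ∑ j, nrm (pd3 j eta) 1 := Finset.sum_nonneg fun j _ => nrm_nonneg _ _
  positivity

/-- The Hessian part is controlled through `hess_le`, the rest by Young with `‖∇η_d‖₁ ≲ 1/d`. -/
lemma pd_tw_L2 (hε : 0 < ε) (hd : ε ≤ d) {σ τ : ℝ} (hF : ∀ i, Sm (F i)) (hgs : Sm g)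
    (hF0 : ∀ i x, σ < ‖x‖ → F i x = 0) (hg0 : ∀ x, σ < ‖x‖ → g x = 0) (hτ : d / 2 + σ < τ)
    (i j : Fin 3) :
    nB (pd3 j (tw ε d F g i)) 2 τ ≤ Cη * (nrm g 2 + d⁻¹ * nrm (F i) 2) := by
  have hd0 := hε.trans_le hd
  set f := cv (kM ε d) g with hf
  have hgc := hcs_of_zero hg0
  have hFc := hcs_of_zero (hF0 i)
  have sf : Sm f := sm_cv (kM_smooth ε d) (kM_hcs hε hd) hgs.continuous
  have cf : HasCompactSupport f := hcs_cv (kM_hcs hε hd) hgc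
  have s2 := sm_cv (etas_smooth d) (etas_hcs hd0) (hF i).continuous
  have f0 : ∀ x, d / 2 + σ < ‖x‖ → f x = 0 := fun y hy => cv_eq_zero
    (fun z hz => kM_zero hε hd (le_of_lt hz)) hg0 hy
  have e : pd3 j (tw ε d F g i) = fun x => (- pd3 j (pd3 i f) x) + cv (pd3 j (etas d)) (F i) x := by
    funext x
    have := pd3_add (f := fun y => - pd3 i (cv (kM ε d) g) y) (sf.pd i).neg s2 j x
    unfold tw
    rw [this, pd3_neg, pd3_cv (etas_smooth d) (etas_hcs hd0) (hF i).continuous]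
  have s3 : Sm (cv (pd3 j (etas d)) (F i)) :=
    sm_cv ((etas_smooth d).pd j) (hcs_pd3 (etas_hcs hd0) j) (hF i).continuous
  have z3 : ∀ x, τ ≤ ‖x‖ → cv (pd3 j (etas d)) (F i) x = 0 := fun x hx =>
    cv_eq_zero (fun z hz => pd3_zero_of_zero (fun y hy => etas_zero hd0 hy) j hz) (hF0 i)
      (by linarith)
  rw [e]
  refine (nB_add (f := fun x => - pd3 j (pd3 i f) x) ((sf.pd i).pd j).neg.continuous
    s3.continuous one_le_two).trans ?_
  rw [nB_neg, ← nrm_eq_nB two_pos (fun x hx => pd3_zero_of_zero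
    (fun y hy => pd3_zero_of_zero f0 i hy) j (by linarith)), ← nrm_eq_nB two_pos z3]
  have y1 : ∀ s, 0 < s → nrm (cv (etas s) g) 2 ≤ nrm eta 1 * nrm g 2 := by
    intro s hs
    rw [← nrm_etas_one hs]
    exact young (etas_smooth s).continuous (etas_hcs hs) hgs.continuous hgc one_pos two_pos
      one_le_two le_rfl (by norm_num)
  have y2 : nrm (cv (pd3 j (etas d)) (F i)) 2 ≤ (d⁻¹ * nrm (pd3 j eta) 1) * nrm (F i) 2 := by
    rw [← nrm_pd_etas hd0]
    exact young ((etas_smooth d).pd j).continuous (hcs_pd3 (etas_hcs hd0) j) (hF i).continuous hFc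
      one_pos two_pos one_le_two le_rfl (by norm_num)
  have y3 : nrm (lap3 f) 2 ≤ 2 * nrm eta 1 * nrm g 2 := by
    rw [hf, lap3_cv_kM hε hd hgs.continuous]
    have z : ∀ s, 0 < s → s ≤ d → ∀ x, τ ≤ ‖x‖ → cv (etas s) g x = 0 := fun s hs hsd x hx =>
      cv_eq_zero (fun z hz => etas_zero hs hz) hg0 (by linarith)
    have c1 := (sm_cv (etas_smooth d) (etas_hcs hd0) hgs.continuous).continuous
    have c2 := (sm_cv (etas_smooth ε) (etas_hcs hε) hgs.continuous).continuous
    rw [nrm_eq_nB (ρ := τ) two_pos (fun x hx => by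
      rw [z d hd0 le_rfl x hx, z ε hε hd x hx, sub_zero])]
    have := nB_add (g := fun x => - cv (etas ε) g x) (ρ := τ) c1 c2.neg one_le_two
    rw [nB_neg, ← nrm_eq_nB two_pos (z d hd0 le_rfl), ← nrm_eq_nB two_pos (z ε hε hd)] at this
    simp only [← sub_eq_add_neg] at this
    linarith [y1 d hd0, y1 ε hε]
  have y4 := hess_le sf cf i j
  have h0 := nrm_nonneg g 2
  have h1 := nrm_nonneg (F i) 2
  have h2 := nrm_nonneg eta 1
  have h3 : nrm (pd3 j eta) 1 ≤ ∑ j, nrm (pd3 j eta) 1 := Finset.single_le_sum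
    (f := fun j => nrm (pd3 j eta) 1) (fun j _ => nrm_nonneg _ _) (Finset.mem_univ j)
  have h4 : 0 ≤ ∑ j, nrm (pd3 j eta) 1 := Finset.sum_nonneg fun j _ => nrm_nonneg _ _
  have h5 : 0 ≤ d⁻¹ * nrm (F i) 2 := by positivity
  unfold Cη
  have h6 : nrm (pd3 j eta) 1 * (d⁻¹ * nrm (F i) 2)
      ≤ (∑ j, nrm (pd3 j eta) 1) * (d⁻¹ * nrm (F i) 2) := mul_le_mul_of_nonneg_right h3 h5
  nlinarith [mul_nonneg h2 h5, mul_nonneg h4 h0]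

/-- The constant in the `L^{2p}` bound for the test field. -/
def Cp (p : ℝ) : ℝ := 2 * Ca * nrm (Kd 1) (2 * p / (2 * p - 1)) + nrm eta (2 * p / (2 * p - 1))

lemma Cp_nonneg (p : ℝ) : 0 ≤ Cp p :=
  add_nonneg (mul_nonneg (by linarith [Ca_pos]) (nrm_nonneg _ _)) (nrm_nonneg _ _)

/-- Young's inequality with `∇M ∈ L^t`, `t = 2p/(2p-1)`; here `p > 3/2` is exactly the condition
`t < 3/2` under which the singularity `‖x‖⁻²` is in `L^t`. -/
lemma tw_L2p (hε : 0 < ε) (hd : ε ≤ d) {σ τ p : ℝ} (hp : 3 / 2 < p) (hF : ∀ i, Sm (F i))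
    (hgs : Sm g) (hF0 : ∀ i x, σ < ‖x‖ → F i x = 0) (hg0 : ∀ x, σ < ‖x‖ → g x = 0)
    (hτ : d / 2 + σ < τ) (i : Fin 3) :
    nB (tw ε d F g i) (2 * p) τ
      ≤ Cp p * d ^ (-(3 / (2 * p))) * (d * nrm g p + nrm (F i) p) := by
  have hd0 := hε.trans_le hd
  set t := 2 * p / (2 * p - 1) with ht
  have hp0 : 0 < p := by linarith
  have hp1 : 0 < 2 * p - 1 := by linarith
  have ht0 : 0 < t := by positivity
  have ht2 : t < 3 / 2 := by rw [ht, div_lt_iff₀ hp1]; linarith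
  have hts : t ≤ 2 * p := by rw [ht, div_le_iff₀ hp1]; nlinarith
  have hY : 1 / t + 1 / p = 1 + 1 / (2 * p) := by rw [ht]; field_simp; ring
  have hgc := hcs_of_zero hg0
  have hFc := hcs_of_zero (hF0 i)
  have e : tw ε d F g i = fun x => (- cv (pd3 i (kM ε d)) g x) + cv (etas d) (F i) x := by
    funext x
    unfold tw
    rw [pd3_cv (kM_smooth ε d) (kM_hcs hε hd) hgs.continuous]
  have c1 := (sm_cv ((kM_smooth ε d).pd i) (hcs_pd3 (kM_hcs hε hd) i) hgs.continuous).continuous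
  have c2 := (sm_cv (etas_smooth d) (etas_hcs hd0) (hF i).continuous).continuous
  have z1 : ∀ x, τ ≤ ‖x‖ → cv (pd3 i (kM ε d)) g x = 0 := fun x hx =>
    cv_eq_zero (fun z hz => pd3_zero_of_zero (fun y hy => kM_zero hε hd (le_of_lt hy)) i hz) hg0
      (by linarith)
  have z2 : ∀ x, τ ≤ ‖x‖ → cv (etas d) (F i) x = 0 := fun x hx =>
    cv_eq_zero (fun z hz => etas_zero hd0 hz) (hF0 i) (by linarith)
  have hpp : 0 < 2 * p := by positivity
  rw [e]
  refine (nB_add (f := fun x => - cv (pd3 i (kM ε d)) g x) c1.neg c2 (by linarith)).trans ?_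
  rw [nB_neg, ← nrm_eq_nB hpp z1, ← nrm_eq_nB hpp z2]
  have y1 := young ((kM_smooth ε d).pd i).continuous (hcs_pd3 (kM_hcs hε hd) i) hgs.continuous hgc
    ht0 hp0 hts (by linarith) hY
  have y2 := young (etas_smooth d).continuous (etas_hcs hd0) (hF i).continuous hFc
    ht0 hp0 hts (by linarith) hY
  have y3 := nrm_pd_kM hε hd ht0 ht2 i
  rw [nrm_etas hd0 ht0] at y2
  have x1 : 3 / t - 3 = -(3 / (2 * p)) := by rw [ht]; field_simp; ring
  have x2 : d ^ (3 / t - 2) = d ^ (-(3 / (2 * p))) * d := by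
    rw [show 3 / t - 2 = -(3 / (2 * p)) + 1 by linarith, Real.rpow_add hd0, Real.rpow_one]
  rw [x1] at y2
  rw [x2] at y3
  have h0 := nrm_nonneg g p
  have h1 := nrm_nonneg (F i) p
  have h2 := nrm_nonneg eta t
  have h3 := nrm_nonneg (Kd 1) t
  have h4 : 0 < d ^ (-(3 / (2 * p))) := by positivity
  have h5 := Ca_pos
  unfold Cp
  rw [← ht]
  have y4 := mul_le_mul_of_nonneg_right y3 h0
  have : 0 ≤ nrm eta t * d ^ (-(3 / (2 * p))) * (d * nrm g p) := by positivity
  have : 0 ≤ 2 * Ca * nrm (Kd 1) t * d ^ (-(3 / (2 * p))) * nrm (F i) p := by positivity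
  linarith

end

/-! ### The pressure term -/

/-- The length of the full gradient. -/
def Gr (u v : E3 → E3) (θ : E3 → ℝ) (x : E3) : ℝ := Real.sqrt (Gsq u v θ x)

lemma abs_coord_le (x : E3) (i : Fin 3) : |x i| ≤ ‖x‖ := PiLp.norm_apply_le x i

lemma Gsq_nonneg (u v : E3 → E3) (θ : E3 → ℝ) (x : E3) : 0 ≤ Gsq u v θ x := by
  unfold Gsq; positivity

lemma Gr_nonneg (u v : E3 → E3) (θ : E3 → ℝ) (x : E3) : 0 ≤ Gr u v θ x := Real.sqrt_nonneg _

lemma Gr_sq (u v : E3 → E3) (θ : E3 → ℝ) (x : E3) : Gr u v θ x ^ 2 = Gsq u v θ x :=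
  Real.sq_sqrt (Gsq_nonneg u v θ x)

lemma dsum_ge (f : Fin 3 → Fin 3 → ℝ) (i j : Fin 3) : f i j ^ 2 ≤ ∑ i, ∑ j, f i j ^ 2 := by
  refine le_trans ?_ (Finset.single_le_sum (f := fun a => ∑ b, f a b ^ 2)
      (fun a _ => Finset.sum_nonneg fun b _ => sq_nonneg _) (Finset.mem_univ i))
  exact Finset.single_le_sum (f := fun b => f i b ^ 2) (fun b _ => sq_nonneg _)
      (Finset.mem_univ j)

lemma pd_u_le (u v : E3 → E3) (θ : E3 → ℝ) (i j : Fin 3) (x : E3) :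
    |pd3 j (fun y => u y i) x| ≤ Gr u v θ x := by
  refine Real.abs_le_sqrt ?_
  unfold Gsq
  have := dsum_ge (fun i j => pd3 j (fun y => u y i) x) i j
  have h1 : 0 ≤ ∑ i : Fin 3, ∑ j : Fin 3, (pd3 j (fun y => v y i) x) ^ 2 := by positivity
  have h2 : 0 ≤ ∑ j : Fin 3, (pd3 j θ x) ^ 2 := by positivity
  linarith

lemma pd_v_le (u v : E3 → E3) (θ : E3 → ℝ) (i j : Fin 3) (x : E3) :
    |pd3 j (fun y => v y i) x| ≤ Gr u v θ x := by
  refine Real.abs_le_sqrt ?_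
  unfold Gsq
  have := dsum_ge (fun i j => pd3 j (fun y => v y i) x) i j
  have h1 : 0 ≤ ∑ i : Fin 3, ∑ j : Fin 3, (pd3 j (fun y => u y i) x) ^ 2 := by positivity
  have h2 : 0 ≤ ∑ j : Fin 3, (pd3 j θ x) ^ 2 := by positivity
  linarith

lemma pd_θ_le (u v : E3 → E3) (θ : E3 → ℝ) (j : Fin 3) (x : E3) :
    |pd3 j θ x| ≤ Gr u v θ x := by
  refine Real.abs_le_sqrt ?_
  unfold Gsq
  have : (pd3 j θ x) ^ 2 ≤ ∑ j : Fin 3, (pd3 j θ x) ^ 2 :=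
    Finset.single_le_sum (f := fun j => (pd3 j θ x) ^ 2) (fun b _ => sq_nonneg _)
      (Finset.mem_univ j)
  have h1 : 0 ≤ ∑ i : Fin 3, ∑ j : Fin 3, (pd3 j (fun y => u y i) x) ^ 2 := by positivity
  have h2 : 0 ≤ ∑ i : Fin 3, ∑ j : Fin 3, (pd3 j (fun y => v y i) x) ^ 2 := by positivity
  linarith

lemma Gsq_cont {u v : E3 → E3} {θ : E3 → ℝ} (hu : ContDiff ℝ (⊤ : ℕ∞) u)
    (hv : ContDiff ℝ (⊤ : ℕ∞) v) (hθ : Sm θ) : Continuous (Gsq u v θ) := by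
  have h1 := fun i j => ((sm_coord hu i).pd j).continuous
  have h2 := fun i j => ((sm_coord hv i).pd j).continuous
  have h3 := fun j => (Sm.pd hθ j).continuous
  unfold Gsq
  refine ((continuous_finsetSum _ fun i _ => continuous_finsetSum _ fun j _ => (h1 i j).pow 2).add
    (continuous_finsetSum _ fun i _ => continuous_finsetSum _ fun j _ => (h2 i j).pow 2)).add
    (continuous_finsetSum _ fun j _ => (h3 j).pow 2)

lemma Gr_cont {u v : E3 → E3} {θ : E3 → ℝ} (hu : ContDiff ℝ (⊤ : ℕ∞) u)
    (hv : ContDiff ℝ (⊤ : ℕ∞) v) (hθ : Sm θ) : Continuous (Gr u v θ) :=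
  Real.continuous_sqrt.comp (Gsq_cont hu hv hθ)

/-- Passing to the limit in the inner truncation scale. -/
lemma press_limit {pr g : E3 → ℝ} {σ d B : ℝ} (hpr : Continuous pr) (hg : Sm g)
    (hg0 : ∀ x, σ < ‖x‖ → g x = 0) (hd : 0 < d)
    (h : ∀ ε, 0 < ε → ε ≤ d → |∫ x, pr x * cv (etas ε) g x| ≤ B) :
    |c0 * ∫ x, pr x * g x| ≤ B := by
  obtain ⟨C, hC⟩ := (hcs_of_zero hg0).exists_bound_of_continuous hg.continuous
  have hC0 : 0 ≤ C := (norm_nonneg _).trans (hC 0)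
  have hI := eta_smooth.integrable eta_hcs
  have lim : Tendsto (fun n : ℕ => ∫ x, pr x * cv (etas (1 / (n + 1 : ℝ))) g x) atTop
      (nhds (∫ x, pr x * (c0 * g x))) := by
    refine tendsto_integral_of_dominated_convergence
      (fun x => (closedBall (0 : E3) (σ + 1)).indicator
        (fun x => |pr x| * ((∫ y, |eta y|) * C)) x) ?_ ?_ ?_ ?_
    · intro n
      exact (hpr.mul (sm_cv (etas_smooth _) (etas_hcs (by positivity))
        hg.continuous).continuous).aestronglyMeasurable
    · rw [integrable_indicator_iff measurableSet_closedBall]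
      exact (by fun_prop : Continuous fun x => |pr x| * ((∫ y, |eta y|) * C)).continuousOn.integrableOn_compact
        (isCompact_closedBall _ _)
    · intro n
      refine ae_of_all _ fun x => ?_
      by_cases hx : x ∈ closedBall (0 : E3) (σ + 1)
      · rw [Set.indicator_of_mem hx, Real.norm_eq_abs, abs_mul]
        refine mul_le_mul_of_nonneg_left ?_ (abs_nonneg _)
        rw [cv_etas_eq (by positivity), ← integral_mul_const]
        refine (abs_integral_le_integral_abs).trans ?_
        refine integral_mono_of_nonneg (ae_of_all _ fun y => abs_nonneg _)
          (hI.abs.mul_const C) (ae_of_all _ fun y => ?_)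
        simp only [abs_mul]
        exact mul_le_mul_of_nonneg_left (hC _) (abs_nonneg _)
      · rw [Set.indicator_of_notMem hx]
        have h1 : 1 / ((n:ℝ) + 1) ≤ 1 :=
          div_le_one_of_le₀ (by linarith [n.cast_nonneg (α := ℝ)]) (by positivity)
        have hx' : σ + 1 < ‖x‖ := by simpa using hx
        rw [cv_eq_zero (fun z hz => etas_zero (by positivity) hz) hg0 (by linarith)]
        simp
    · exact ae_of_all _ fun x => tendsto_const_nhds.mul (cv_etas_tendsto hg.continuous x)
  have e : c0 * ∫ x, pr x * g x = ∫ x, pr x * (c0 * g x) := by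
    rw [← integral_const_mul]
    congr 1; funext x; ring
  rw [e]
  refine le_of_tendsto lim.abs ?_
  have h0 := (tendsto_one_div_add_atTop_nhds_zero_nat (𝕜 := ℝ)).eventually (gt_mem_nhds hd)
  filter_upwards [h0] with n hn
  exact h _ (by positivity) hn.le

lemma nB_pow_two {f : E3 → ℝ} {s ρ : ℝ} (hs : 0 < s) :
    nB (fun x => f x ^ 2) s ρ = nB f (2 * s) ρ ^ 2 := by
  unfold nB
  rw [← Real.rpow_natCast, ← Real.rpow_mul (integral_nonneg fun x => by positivity)]
  have : ∀ x, |f x ^ 2| ^ s = |f x| ^ (2 * s) := fun x => by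
    rw [abs_pow, ← Real.rpow_natCast, ← Real.rpow_mul (abs_nonneg _)]; norm_num
  simp only [this]
  congr 1; push_cast; field_simp

section
variable {u : E3 → E3} {pr : E3 → ℝ} {v : E3 → E3} {θ : E3 → ℝ}

/-- `u · ∇φ = div (φ u)`. -/
lemma div_phi_u (h : IsTCMSolution u pr v θ) {φ : E3 → ℝ} (hφ : Sm φ) (x : E3) :
    ∑ i, pd3 i (fun y => φ y * u y i) x = ∑ i, pd3 i φ x * u x i := by
  have hu := fun i => sm_coord h.smooth_u i
  have : ∀ i, pd3 i (fun y => φ y * u y i) x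
      = pd3 i φ x * u x i + φ x * pd3 i (fun y => u y i) x := fun i => pd3_mul hφ (hu i) i x
  simp only [this, Finset.sum_add_distrib, ← Finset.mul_sum, h.div_u x, mul_zero, add_zero]

lemma abs_sum3_le {f : Fin 3 → ℝ} {B : ℝ} (h : ∀ i, |f i| ≤ B) : |∑ i, f i| ≤ 3 * B := by
  refine (Finset.abs_sum_le_sum_abs _ _).trans ?_
  refine (Finset.sum_le_sum fun i _ => h i).trans (le_of_eq ?_)
  simp

/-- Two bounds for the pressure flux: the first uses only `L²` bounds for the gradient of the test
field, the second also its `L^{2p}` norm. -/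
lemma pressure_bounds (h : IsTCMSolution u pr v θ) {φ : E3 → ℝ} (hφ : Sm φ) {σ τ d L : ℝ}
    (hφ0 : ∀ x, σ < ‖x‖ → φ x = 0) (hφ1 : ∀ x, |φ x| ≤ 1) (hd : 0 < d) (hL : 0 ≤ L)
    (hφd : ∀ j x, |pd3 j φ x| ≤ L / d) (hτ : d / 2 + σ < τ) :
    |c0 * ∫ x, pr x * ∑ i, pd3 i φ x * u x i| ≤
      9 * (nB (Gr u v θ) 2 τ + nB (fun x => ‖u x‖) 4 τ ^ 2 + nB (fun x => ‖v x‖) 4 τ ^ 2)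
        * (Cη * ((3 * L + 1) * (d⁻¹ * nB (fun x => ‖u x‖) 2 τ))) ∧
    ∀ p, 3 / 2 < p → |c0 * ∫ x, pr x * ∑ i, pd3 i φ x * u x i| ≤
      9 * nB (Gr u v θ) 2 τ * (Cη * ((3 * L + 1) * (d⁻¹ * nB (fun x => ‖u x‖) 2 τ)))
      + 9 * (nB (fun x => ‖u x‖) (2 * p / (p - 1)) τ + 2 * nB (fun x => ‖v x‖) (2 * p / (p - 1)) τ)
        * nB (Gr u v θ) 2 τ
        * (Cp p * d ^ (-(3 / (2 * p))) * ((3 * L + 1) * nB (fun x => ‖u x‖) p τ)) := by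
  have hu := fun i => sm_coord h.smooth_u i
  have hv := fun i => sm_coord h.smooth_v i
  have hu' := fun i j => (hu i).pd j
  have hv' := fun i j => (hv i).pd j
  have hUc : Continuous fun x => ‖u x‖ := h.smooth_u.continuous.norm
  have hVc : Continuous fun x => ‖v x‖ := h.smooth_v.continuous.norm
  have hGc : Continuous (Gr u v θ) := Gr_cont h.smooth_u h.smooth_v h.smooth_θ
  set F : Fin 3 → E3 → ℝ := fun i x => φ x * u x i with hFdef
  set g : E3 → ℝ := fun x => ∑ i, pd3 i (F i) x with hgdef
  have hF : ∀ i, Sm (F i) := fun i => hφ.mul (hu i)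
  have hg : Sm g := sm_sum _ fun i => (hF i).pd i
  have geq : ∀ x, g x = ∑ i, pd3 i φ x * u x i := fun x => div_phi_u h hφ x
  have hF0 : ∀ i x, σ < ‖x‖ → F i x = 0 := fun i x hx => by simp [F, hφ0 x hx]
  have hg0 : ∀ x, σ < ‖x‖ → g x = 0 := fun x hx => by
    rw [geq]
    refine Finset.sum_eq_zero fun i _ => ?_
    rw [pd3_zero_of_zero hφ0 i hx, zero_mul]
  have gb : ∀ x, |g x| ≤ (3 * (L / d)) * |‖u x‖| := by
    intro x
    rw [geq, abs_norm, mul_assoc]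
    refine abs_sum3_le fun i => ?_
    rw [abs_mul]
    exact mul_le_mul (hφd i x) (abs_coord_le _ _) (abs_nonneg _) (by positivity)
  have Fb : ∀ i x, |F i x| ≤ 1 * |‖u x‖| := by
    intro i x
    rw [abs_norm, abs_mul]
    exact mul_le_mul (hφ1 x) (abs_coord_le _ _) (abs_nonneg _) zero_le_one
  have ng : ∀ s, 0 < s → nrm g s ≤ 3 * (L / d) * nB (fun x => ‖u x‖) s τ := fun s hs => by
    rw [nrm_eq_nB (ρ := τ) hs fun x hx => hg0 x (by linarith)]
    exact nB_le hUc hs (by positivity) fun x _ => gb x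
  have nF : ∀ i s, 0 < s → nrm (F i) s ≤ nB (fun x => ‖u x‖) s τ := fun i s hs => by
    rw [nrm_eq_nB (ρ := τ) hs fun x hx => hF0 i x (by linarith)]
    have := nB_le (f := F i) (ρ := τ) hUc hs zero_le_one fun x _ => Fb i x
    rwa [one_mul] at this
  have hCη := Cη_nonneg
  set D := Cη * ((3 * L + 1) * (d⁻¹ * nB (fun x => ‖u x‖) 2 τ)) with hD
  -- estimates valid for every inner scale
  have hDb : ∀ ε, 0 < ε → ε ≤ d → ∀ i j, nB (pd3 j (tw ε d F g i)) 2 τ ≤ D := by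
    intro ε hε hεd i j
    refine (pd_tw_L2 hε hεd hF hg hF0 hg0 hτ i j).trans ?_
    refine mul_le_mul_of_nonneg_left ?_ hCη
    have h1 := ng 2 two_pos
    have h2 := mul_le_mul_of_nonneg_left (nF i 2 two_pos) (inv_nonneg.2 hd.le)
    have e : 3 * (L / d) * nB (fun x => ‖u x‖) 2 τ
        = 3 * L * (d⁻¹ * nB (fun x => ‖u x‖) 2 τ) := by rw [div_eq_mul_inv]; ring
    linarith
  have wz : ∀ ε, 0 < ε → ε ≤ d → ∀ i x, τ ≤ ‖x‖ → tw ε d F g i x = 0 := fun ε hε hεd i x hx =>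
    tw_zero hε hεd hF0 hg0 i (by linarith)
  have wdz : ∀ ε, 0 < ε → ε ≤ d → ∀ i j x, τ ≤ ‖x‖ → pd3 j (tw ε d F g i) x = 0 :=
    fun ε hε hεd i j x hx =>
      pd3_zero_of_zero (fun y hy => tw_zero hε hεd hF0 hg0 i hy) j (by linarith)
  have ws : ∀ ε, 0 < ε → ε ≤ d → ∀ i, Sm (tw ε d F g i) := fun ε hε hεd i =>
    tw_smooth hε hεd hF hg i
  have wc : ∀ ε, 0 < ε → ε ≤ d → ∀ i, HasCompactSupport (tw ε d F g i) := fun ε hε hεd i =>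
    hcs_of_zero fun x hx => wz ε hε hεd i x (le_of_lt hx)
  have nGu : ∀ i j, nB (pd3 j fun y => u y i) 2 τ ≤ nB (Gr u v θ) 2 τ := fun i j => by
    have := nB_le (f := pd3 j fun y => u y i) (ρ := τ) hGc two_pos zero_le_one fun x _ => by
      rw [one_mul]; exact (pd_u_le u v θ i j x).trans (le_abs_self _)
    rwa [one_mul] at this
  have visc : ∀ ε, 0 < ε → ε ≤ d → ∀ i j,
      |∫ x, pd3 j (fun y => u y i) x * pd3 j (tw ε d F g i) x| ≤ nB (Gr u v θ) 2 τ * D :=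
    fun ε hε hεd i j =>
    (abs_integral_le_nB (hu' i j).continuous ((ws ε hε hεd i).pd j).continuous
      (wdz ε hε hεd i j) one_lt_two (by norm_num)).trans
      (mul_le_mul (nGu i j) (hDb ε hε hεd i j) (nB_nonneg _ _ _) (nB_nonneg _ _ _))
  have quad : ∀ z : E3 → E3, Continuous (fun x => ‖z x‖) → ∀ i j,
      nB (fun x => z x j * z x i) 2 τ ≤ nB (fun x => ‖z x‖) 4 τ ^ 2 := by
    intro z hz i j
    have := nB_le (f := fun x => z x j * z x i) (g := fun x => ‖z x‖ ^ 2) (ρ := τ) (hz.pow 2)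
      two_pos zero_le_one fun x _ => by
        rw [one_mul, abs_mul, abs_pow, abs_norm, sq]
        exact mul_le_mul (abs_coord_le _ _) (abs_coord_le _ _) (abs_nonneg _) (norm_nonneg _)
    rw [one_mul, nB_pow_two two_pos] at this
    norm_num at this
    exact this
  have ident : ∀ ε, 0 < ε → ε ≤ d → ∫ x, pr x * cv (etas ε) g x
      = ∑ i, ∑ j, ((∫ x, pd3 j (fun y => u y i) x * pd3 j (tw ε d F g i) x)
        + (∫ x, (u x j * pd3 j (fun y => u y i) x) * tw ε d F g i x)
        + ∫ x, pd3 j (fun y => v y j * v y i) x * tw ε d F g i x) := by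
    intro ε hε hεd
    rw [← pressure_identity h (ws ε hε hεd) (wc ε hε hεd)]
    refine integral_congr_ae (ae_of_all _ fun x => ?_)
    simp only [div_tw hε hεd hF hgdef x]
  have goal_eq : (∫ x, pr x * ∑ i, pd3 i φ x * u x i) = ∫ x, pr x * g x := by
    simp only [geq]
  rw [goal_eq]
  constructor
  · refine press_limit h.smooth_pr.continuous hg hg0 hd fun ε hε hεd => ?_
    rw [ident ε hε hεd]
    have e : ∀ i, ∑ j, ((∫ x, pd3 j (fun y => u y i) x * pd3 j (tw ε d F g i) x)
        + (∫ x, (u x j * pd3 j (fun y => u y i) x) * tw ε d F g i x)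
        + ∫ x, pd3 j (fun y => v y j * v y i) x * tw ε d F g i x)
        = ∑ j, ((∫ x, pd3 j (fun y => u y i) x * pd3 j (tw ε d F g i) x)
        - (∫ x, (u x j * u x i) * pd3 j (tw ε d F g i) x)
        - ∫ x, (v x j * v x i) * pd3 j (tw ε d F g i) x) := by
      intro i
      simp only [Finset.sum_add_distrib, Finset.sum_sub_distrib]
      rw [transport_ibp h (ws ε hε hεd i) (wc ε hε hεd i) i]
      have : ∀ j, ∫ x, pd3 j (fun y => v y j * v y i) x * tw ε d F g i x
          = - ∫ x, (v x j * v x i) * pd3 j (tw ε d F g i) x := fun j => by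
        rw [ibp ((hv j).mul (hv i)) (ws ε hε hεd i) (Or.inr (wc ε hε hεd i)) j, neg_neg]
      simp only [this, Finset.sum_neg_distrib]
      ring
    simp only [e]
    have b : ∀ i j, |((∫ x, pd3 j (fun y => u y i) x * pd3 j (tw ε d F g i) x)
        - (∫ x, (u x j * u x i) * pd3 j (tw ε d F g i) x)
        - ∫ x, (v x j * v x i) * pd3 j (tw ε d F g i) x)|
        ≤ (nB (Gr u v θ) 2 τ + nB (fun x => ‖u x‖) 4 τ ^ 2 + nB (fun x => ‖v x‖) 4 τ ^ 2) * D := by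
      intro i j
      have b1 := visc ε hε hεd i j
      have b2 : ∀ z : E3 → E3, ContDiff ℝ (⊤ : ℕ∞) z →
          |∫ x, (z x j * z x i) * pd3 j (tw ε d F g i) x| ≤ nB (fun x => ‖z x‖) 4 τ ^ 2 * D := by
        intro z hz
        exact (abs_integral_le_nB (((sm_coord hz j).mul (sm_coord hz i)).continuous)
          ((ws ε hε hεd i).pd j).continuous
          (wdz ε hε hεd i j) one_lt_two (by norm_num)).trans
          (mul_le_mul (quad z hz.continuous.norm i j) (hDb ε hε hεd i j) (nB_nonneg _ _ _)
            (sq_nonneg _))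
      have b3 := b2 u h.smooth_u
      have b4 := b2 v h.smooth_v
      have a1 := abs_sub ((∫ x, pd3 j (fun y => u y i) x * pd3 j (tw ε d F g i) x)
        - (∫ x, (u x j * u x i) * pd3 j (tw ε d F g i) x))
        (∫ x, (v x j * v x i) * pd3 j (tw ε d F g i) x)
      have a2 := abs_sub (∫ x, pd3 j (fun y => u y i) x * pd3 j (tw ε d F g i) x)
        (∫ x, (u x j * u x i) * pd3 j (tw ε d F g i) x)
      linarith
    have := abs_sum3_le fun i => abs_sum3_le (b i)
    linarith
  · intro p hp
    refine press_limit h.smooth_pr.continuous hg hg0 hd fun ε hε hεd => ?_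
    rw [ident ε hε hεd]
    set E := Cp p * d ^ (-(3 / (2 * p))) * ((3 * L + 1) * nB (fun x => ‖u x‖) p τ) with hE
    have hp0 : 0 < p := by linarith
    have hp1 : 0 < p - 1 := by linarith
    have hEb : ∀ i, nB (tw ε d F g i) (2 * p) τ ≤ E := by
      intro i
      refine (tw_L2p hε hεd hp hF hg hF0 hg0 hτ i).trans ?_
      refine mul_le_mul_of_nonneg_left ?_ (mul_nonneg (Cp_nonneg p) (by positivity))
      have h1 := mul_le_mul_of_nonneg_left (ng p hp0) hd.le
      have h2 := nF i p hp0
      have e : d * (3 * (L / d) * nB (fun x => ‖u x‖) p τ) = 3 * L * nB (fun x => ‖u x‖) p τ := by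
        field_simp
      linarith
    have conv : ∀ (z : E3 → E3) (f : E3 → ℝ) (c : ℝ), 0 ≤ c → Continuous z → 
        (∀ x, |f x| ≤ c * (‖z x‖ * Gr u v θ x)) → ∀ i,
        |∫ x, f x * tw ε d F g i x|
          ≤ c * (nB (fun x => ‖z x‖) (2 * p / (p - 1)) τ * nB (Gr u v θ) 2 τ * E) := by
      intro z f c hc hz hfz i
      have wcont := (ws ε hε hεd i).continuous
      refine (abs_integral_le_ball (wz ε hε hεd i)).trans ?_
      have h3 := holder3 (ρ := τ) hz.norm hGc wcont (a := 2 * p / (p - 1)) (b := 2)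
        (c := 2 * p) (by positivity) two_pos (by positivity) (by field_simp; ring)
      have h4 : ∫ x in ball (0 : E3) τ, |f x| * |tw ε d F g i x|
          ≤ ∫ x in ball (0 : E3) τ, c * (|‖z x‖| * |Gr u v θ x| * |tw ε d F g i x|) := by
        refine integral_mono_of_nonneg (ae_of_all _ fun x => by positivity)
          (integrableOn_ball (by fun_prop) τ) (ae_of_all _ fun x => ?_)
        have := mul_le_mul_of_nonneg_right (hfz x) (abs_nonneg (tw ε d F g i x))
        simp only [abs_norm, abs_of_nonneg (Gr_nonneg u v θ x)]
        linarith
      refine h4.trans ?_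
      rw [integral_const_mul]
      refine mul_le_mul_of_nonneg_left (h3.trans ?_) hc
      exact mul_le_mul_of_nonneg_left (hEb i) (mul_nonneg (nB_nonneg _ _ _) (nB_nonneg _ _ _))
    have b : ∀ i j, |((∫ x, pd3 j (fun y => u y i) x * pd3 j (tw ε d F g i) x)
        + (∫ x, (u x j * pd3 j (fun y => u y i) x) * tw ε d F g i x)
        + ∫ x, pd3 j (fun y => v y j * v y i) x * tw ε d F g i x)|
        ≤ nB (Gr u v θ) 2 τ * D
          + (nB (fun x => ‖u x‖) (2 * p / (p - 1)) τ + 2 * nB (fun x => ‖v x‖) (2 * p / (p - 1)) τ)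
          * nB (Gr u v θ) 2 τ * E := by
      intro i j
      have b1 := visc ε hε hεd i j
      have b2 := conv u (fun x => u x j * pd3 j (fun y => u y i) x) 1 zero_le_one
        h.smooth_u.continuous (fun x => by
          rw [one_mul, abs_mul]
          exact mul_le_mul (abs_coord_le _ _) (pd_u_le u v θ i j x) (abs_nonneg _)
            (norm_nonneg _)) i
      have b3 := conv v (pd3 j (fun y => v y j * v y i)) 2 zero_le_two
        h.smooth_v.continuous (fun x => by
          rw [pd3_mul (hv j) (hv i)]
          have m1 : |pd3 j (fun y => v y j) x * v x i| ≤ ‖v x‖ * Gr u v θ x := by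
            rw [abs_mul, mul_comm]
            exact mul_le_mul (abs_coord_le _ _) (pd_v_le u v θ j j x) (abs_nonneg _)
              (norm_nonneg _)
          have m2 : |v x j * pd3 j (fun y => v y i) x| ≤ ‖v x‖ * Gr u v θ x := by
            rw [abs_mul]
            exact mul_le_mul (abs_coord_le _ _) (pd_v_le u v θ i j x) (abs_nonneg _)
              (norm_nonneg _)
          refine (abs_add_le _ _).trans ?_
          linarith) i
      have a1 := abs_add_le ((∫ x, pd3 j (fun y => u y i) x * pd3 j (tw ε d F g i) x)
        + (∫ x, (u x j * pd3 j (fun y => u y i) x) * tw ε d F g i x))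
        (∫ x, pd3 j (fun y => v y j * v y i) x * tw ε d F g i x)
      have a2 := abs_add_le (∫ x, pd3 j (fun y => u y i) x * pd3 j (tw ε d F g i) x)
        (∫ x, (u x j * pd3 j (fun y => u y i) x) * tw ε d F g i x)
      linarith
    have := abs_sum3_le fun i => abs_sum3_le (b i)
    linarith

end

/-! ### Cutoff functions and the Sobolev inequality on balls -/

lemma sT_deriv_bdd : ∃ M : ℝ, 0 ≤ M ∧ ∀ t, |deriv Real.smoothTransition t| ≤ M := by
  have hc : Continuous (deriv Real.smoothTransition) :=
    (smooth_deriv (Real.smoothTransition.contDiff)).continuous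
  obtain ⟨M, hM⟩ := (isCompact_Icc (a := (0:ℝ)) (b := 1)).exists_bound_of_continuousOn
    hc.continuousOn
  refine ⟨max M 0, le_max_right _ _, fun t => ?_⟩
  by_cases ht : t ∈ Set.Icc (0:ℝ) 1
  · exact (hM t ht).trans (le_max_left _ _)
  · have : deriv Real.smoothTransition t = 0 := by
      rw [Set.mem_Icc, not_and_or, not_le, not_le] at ht
      rcases ht with ht | ht
      · have : Real.smoothTransition =ᶠ[nhds t] fun _ => 0 := by
          filter_upwards [eventually_lt_nhds ht] with s hs
          exact Real.smoothTransition.zero_of_nonpos hs.le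
        rw [this.deriv_eq]; simp
      · have : Real.smoothTransition =ᶠ[nhds t] fun _ => 1 := by
          filter_upwards [eventually_gt_nhds ht] with s hs
          exact Real.smoothTransition.one_of_one_le hs.le
        rw [this.deriv_eq]; simp
    rw [this]; simp

/-- An absolute constant controlling the gradients of the radial cutoff functions. -/
def Lc : ℝ := 2 * sT_deriv_bdd.choose

lemma Lc_nonneg : 0 ≤ Lc := mul_nonneg zero_le_two sT_deriv_bdd.choose_spec.1

/-- A radial cutoff between `B_ρ` and `B_σ` with gradient of size `1/(σ - ρ)`. -/
lemma exists_cutoff {ρ σ : ℝ} (hρ : 0 ≤ ρ) (h : ρ < σ) : ∃ φ : E3 → ℝ, Sm φ ∧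
    (∀ x, ‖x‖ ≤ ρ → φ x = 1) ∧ (∀ x, σ ≤ ‖x‖ → φ x = 0) ∧ (∀ x, 0 ≤ φ x) ∧ (∀ x, φ x ≤ 1) ∧
    ∀ j x, |pd3 j φ x| ≤ Lc / (σ - ρ) := by
  have hD : 0 < σ ^ 2 - ρ ^ 2 := by nlinarith
  let h' : ℝ → ℝ := fun t => 1 - Real.smoothTransition ((t - ρ ^ 2) / (σ ^ 2 - ρ ^ 2))
  have hsm : ContDiff ℝ (⊤ : ℕ∞) h' := by
    refine contDiff_const.sub (Real.smoothTransition.contDiff.comp ?_)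
    fun_prop
  have hz : ∀ x : E3, σ ≤ ‖x‖ → h' (‖x‖ ^ 2) = 0 := by
    intro x hx
    simp only [h']
    rw [Real.smoothTransition.one_of_one_le, sub_self]
    rw [le_div_iff₀ hD]; nlinarith
  refine ⟨fun x => h' (‖x‖ ^ 2), sm_comp_normsq hsm, ?_, hz, ?_, ?_, ?_⟩
  · intro x hx
    simp only [h']
    rw [Real.smoothTransition.zero_of_nonpos, sub_zero]
    refine div_nonpos_of_nonpos_of_nonneg ?_ hD.le
    have := norm_nonneg x
    nlinarith
  · intro x
    have := Real.smoothTransition.le_one ((‖x‖ ^ 2 - ρ ^ 2) / (σ ^ 2 - ρ ^ 2))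
    simp only [h']; linarith
  · intro x
    have := Real.smoothTransition.nonneg ((‖x‖ ^ 2 - ρ ^ 2) / (σ ^ 2 - ρ ^ 2))
    simp only [h']; linarith
  · intro j x
    have hpos : 0 ≤ Lc / (σ - ρ) := div_nonneg Lc_nonneg (by linarith)
    by_cases hx : σ < ‖x‖
    · rw [pd3_zero_of_zero (a := σ) (fun y hy => hz y hy.le) j hx, abs_zero]; exact hpos
    · push Not at hx
      rw [pd3_comp_normsq hsm]
      have hd : deriv h' (‖x‖ ^ 2) = - (deriv Real.smoothTransition
          ((‖x‖ ^ 2 - ρ ^ 2) / (σ ^ 2 - ρ ^ 2)) * (1 / (σ ^ 2 - ρ ^ 2))) := by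
        have a1 : HasDerivAt (fun t : ℝ => (t - ρ ^ 2) / (σ ^ 2 - ρ ^ 2)) (1 / (σ ^ 2 - ρ ^ 2))
            (‖x‖ ^ 2) := ((hasDerivAt_id _).sub_const _).div_const _
        have a2 : HasDerivAt Real.smoothTransition (deriv Real.smoothTransition
          ((‖x‖ ^ 2 - ρ ^ 2) / (σ ^ 2 - ρ ^ 2))) ((‖x‖ ^ 2 - ρ ^ 2) / (σ ^ 2 - ρ ^ 2)) :=
          (((Real.smoothTransition.contDiff (n := (⊤ : ℕ∞))).differentiable
            (by simp)).differentiableAt).hasDerivAt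
        exact ((a2.comp (‖x‖ ^ 2) a1).const_sub 1).deriv
      rw [hd]
      have hM := sT_deriv_bdd.choose_spec.2 ((‖x‖ ^ 2 - ρ ^ 2) / (σ ^ 2 - ρ ^ 2))
      have hx' := (abs_coord_le x j).trans hx
      rw [abs_mul, abs_mul, abs_neg, abs_mul, abs_of_pos (two_pos (α := ℝ)),
        abs_of_pos (by positivity : 0 < 1 / (σ ^ 2 - ρ ^ 2))]
      have hb : 2 * |x j| * (|deriv Real.smoothTransition
          ((‖x‖ ^ 2 - ρ ^ 2) / (σ ^ 2 - ρ ^ 2))| * (1 / (σ ^ 2 - ρ ^ 2))) ≤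
          2 * σ * (sT_deriv_bdd.choose * (1 / (σ ^ 2 - ρ ^ 2))) := by
        have : 0 ≤ σ := by linarith
        gcongr
      refine hb.trans ?_
      have hM0 := sT_deriv_bdd.choose_spec.1
      unfold Lc
      rw [show 2 * σ * (sT_deriv_bdd.choose * (1 / (σ ^ 2 - ρ ^ 2)))
        = 2 * sT_deriv_bdd.choose * (σ / (σ ^ 2 - ρ ^ 2)) by ring, mul_div_assoc,
        mul_assoc, mul_div_assoc' ]
      rw [← mul_div_assoc, ← mul_div_assoc]
      rw [div_le_div_iff₀ hD (by linarith)]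
      have : σ * (σ - ρ) ≤ σ ^ 2 - ρ ^ 2 := by nlinarith
      nlinarith

lemma norm_fderiv_le_sum {f : E3 → ℝ} (x : E3) : ‖fderiv ℝ f x‖ ≤ ∑ j, |pd3 j f x| := by
  refine ContinuousLinearMap.opNorm_le_bound _ (Finset.sum_nonneg fun _ _ => abs_nonneg _) ?_
  intro y
  have hy : y = ∑ j, y j • EuclideanSpace.single j (1:ℝ) := by
    ext i
    fin_cases i <;> simp [Fin.sum_univ_three]
  have : fderiv ℝ f x y = ∑ j, y j * pd3 j f x := by
    conv_lhs => rw [hy]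
    simp [map_sum, pd3]
  rw [this, Finset.sum_mul]
  refine (Finset.abs_sum_le_sum_abs _ _).trans (Finset.sum_le_sum fun j _ => ?_)
  rw [abs_mul, mul_comm]
  exact mul_le_mul_of_nonneg_left (abs_coord_le y j) (abs_nonneg _)

/-- The Sobolev constant of the embedding of exponent `s`. -/
def Sob (s : ℝ) : ℝ := SNormLESNormFDerivOfEqConst ℝ (volume : Measure E3) s.toNNReal

lemma Sob_nonneg (s : ℝ) : 0 ≤ Sob s := NNReal.coe_nonneg _

lemma eLpNorm_ofReal {f : E3 → ℝ} {s : ℝ} (hs : 0 < s) (μ : Measure E3) :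
    eLpNorm f (ENNReal.ofReal s) μ = (∫⁻ x, (ENNReal.ofReal |f x|) ^ s ∂μ) ^ (1 / s) := by
  rw [eLpNorm_eq_lintegral_rpow_enorm_toReal (by simpa using hs) (by simp),
    ENNReal.toReal_ofReal hs.le]
  simp only [Real.enorm_eq_ofReal_abs]

/-- The Gagliardo–Nirenberg–Sobolev inequality in terms of partial derivatives. -/
lemma sobolev_lintegral {f : E3 → ℝ} (hf : Sm f) (hc : HasCompactSupport f) {s r : ℝ} (hs : 1 ≤ s)
    (hr : 0 < r) (h : 1 / r = 1 / s - 1 / 3) :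
    (∫⁻ x, (ENNReal.ofReal |f x|) ^ r) ^ (1 / r) ≤ ENNReal.ofReal (Sob s) *
      (∫⁻ x, (ENNReal.ofReal |(∑ j, |pd3 j f x| : ℝ)|) ^ s) ^ (1 / s) := by
  have hs0 : 0 < s := by linarith
  have H := eLpNorm_le_eLpNorm_fderiv_of_eq (F := ℝ) (μ := (volume : Measure E3)) (u := f)
    (hf.of_le (by simp)) hc (p := s.toNNReal) (p' := r.toNNReal)
    (by rw [← NNReal.coe_le_coe, Real.coe_toNNReal s hs0.le]; simpa using hs) (by simp)
    (by rw [NNReal.coe_inv, Real.coe_toNNReal s hs0.le, Real.coe_toNNReal r hr.le]; simpa using h)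
  rw [← eLpNorm_ofReal hr]
  refine H.trans ?_
  have e : ((SNormLESNormFDerivOfEqConst ℝ (volume : Measure E3) s.toNNReal : ℝ≥0) : ℝ≥0∞)
      = ENNReal.ofReal (Sob s) := by
    unfold Sob; rw [ENNReal.ofReal_coe_nnreal]
  rw [e]
  refine mul_le_mul_right ?_ _
  rw [← eLpNorm_ofReal (f := fun x => ∑ j, |pd3 j f x|) hs0]
  refine eLpNorm_mono_real fun x => norm_fderiv_le_sum x

lemma lintegral_rpow_eq_nB {f : E3 → ℝ} (hf : Continuous f) {s ρ : ℝ} (hs : 0 < s)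
    (h0 : ∀ x, ρ ≤ ‖x‖ → f x = 0) :
    (∫⁻ x, (ENNReal.ofReal |f x|) ^ s) ^ (1 / s) = ENNReal.ofReal (nB f s ρ) := by
  rw [ofReal_nB hf hs, ← lintegral_indicator measurableSet_ball]
  congr 1
  refine lintegral_congr fun x => ?_
  by_cases hx : x ∈ ball (0 : E3) ρ
  · rw [Set.indicator_of_mem hx]
  · rw [Set.indicator_of_notMem hx, h0 x (by simpa using hx)]
    simp [hs]

/-- Local Sobolev inequality `W^{1,2} ⊂ L⁶` on concentric balls. -/
lemma sobolev_ball {f G : E3 → ℝ} (hf : Sm f) (hG : Continuous G)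
    (hfG : ∀ j x, |pd3 j f x| ≤ G x) {ρ σ : ℝ} (hρ : 0 ≤ ρ) (h : ρ < σ) :
    nB f 6 ρ ≤ Sob 2 * (3 * nB G 2 σ + 3 * (Lc / (σ - ρ)) * nB f 2 σ) := by
  obtain ⟨φ, hφ, h1, h0, hp, hl, hd⟩ := exists_cutoff hρ h
  have hφf : Sm fun x => φ x * f x := hφ.mul hf
  have hG0 : ∀ x, 0 ≤ G x := fun x => (abs_nonneg _).trans (hfG 0 x)
  have hL : 0 ≤ Lc / (σ - ρ) := div_nonneg Lc_nonneg (by linarith)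
  have hz : ∀ x, σ ≤ ‖x‖ → φ x * f x = 0 := fun x hx => by rw [h0 x hx, zero_mul]
  have hc : HasCompactSupport fun x => φ x * f x := hcs_of_zero fun x hx => hz x (le_of_lt hx)
  have H := sobolev_lintegral hφf hc (s := 2) (r := 6) (by norm_num) (by norm_num) (by norm_num)
  have hSc : Continuous fun x => ∑ j, |pd3 j (fun x => φ x * f x) x| :=
    continuous_finsetSum _ fun j _ => (hφf.pd j).continuous.abs
  have hS0 : ∀ x, σ ≤ ‖x‖ → ∑ j, |pd3 j (fun x => φ x * f x) x| = 0 := by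
    -- the cutoff attains its minimum value `0` there, so its gradient vanishes
    intro x hx
    refine Finset.sum_eq_zero fun j _ => ?_
    have hm : pd3 j φ x = 0 := by
      have : IsLocalMin φ x := Filter.Eventually.of_forall fun y => by rw [h0 x hx]; exact hp y
      unfold pd3; rw [this.fderiv_eq_zero]; simp
    rw [pd3_mul hφ hf, h0 x hx, hm]; simp
  have hS : ∀ x, ∑ j, |pd3 j (fun x => φ x * f x) x| = |(∑ j, |pd3 j (fun x => φ x * f x) x| : ℝ)| :=
    fun x => (abs_of_nonneg (Finset.sum_nonneg fun _ _ => abs_nonneg _)).symm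
  rw [lintegral_rpow_eq_nB hφf.continuous (by norm_num) hz, lintegral_rpow_eq_nB hSc (by norm_num)
    hS0, ← ENNReal.ofReal_mul (Sob_nonneg _),
    ENNReal.ofReal_le_ofReal_iff (mul_nonneg (Sob_nonneg _) (nB_nonneg _ _ _))] at H
  have e1 : nB f 6 ρ ≤ nB (fun x => φ x * f x) 6 σ := by
    refine le_trans ?_ (nB_mono hφf.continuous (by norm_num) h.le)
    have := nB_le (f := f) (g := fun x => φ x * f x) hφf.continuous (s := 6) (ρ := ρ) (c := 1)
      (by norm_num) (by norm_num) (fun x hx => by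
        rw [h1 x (by simpa using (mem_ball_zero_iff.1 hx).le)]; simp)
    simpa using this
  refine e1.trans (H.trans (mul_le_mul_of_nonneg_left ?_ (Sob_nonneg _)))
  have hbound : ∀ x, |(∑ j, |pd3 j (fun x => φ x * f x) x| : ℝ)| ≤
      1 * |(3 * G x + 3 * (Lc / (σ - ρ)) * |f x| : ℝ)| := by
    intro x
    rw [← hS x, one_mul, abs_of_nonneg (by have := hG0 x; positivity), Fin.sum_univ_three]
    have : ∀ j, |pd3 j (fun x => φ x * f x) x| ≤ G x + Lc / (σ - ρ) * |f x| := by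
      intro j
      rw [pd3_mul hφ hf]
      refine (abs_add_le _ _).trans ?_
      rw [abs_mul, abs_mul]
      have a1 : |pd3 j φ x| * |f x| ≤ Lc / (σ - ρ) * |f x| := by gcongr; exact hd j x
      have a2 : |φ x| * |pd3 j f x| ≤ 1 * G x := by
        gcongr
        · exact abs_le.2 ⟨by linarith [hp x], hl x⟩
        · exact hfG j x
      linarith
    linarith [this 0, this 1, this 2]
  have hcg : Continuous fun x => 3 * G x + 3 * (Lc / (σ - ρ)) * |f x| := by
    have := hf.continuous
    fun_prop
  refine (nB_le hcg (s := 2) (ρ := σ) (by norm_num) zero_le_one fun x _ => hbound x).trans ?_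
  rw [one_mul]
  refine (nB_add (f := fun x => 3 * G x) (g := fun x => 3 * (Lc / (σ - ρ)) * |f x|)
    (by fun_prop) (by have := hf.continuous; fun_prop) (by norm_num)).trans ?_
  refine add_le_add ?_ ?_
  · exact nB_le hG (by norm_num) (by norm_num) fun x _ => by rw [abs_mul]; simp
  · exact nB_le hf.continuous (by norm_num) (by positivity) fun x _ => by
      rw [abs_mul, abs_abs, abs_of_nonneg (by positivity : 0 ≤ 3 * (Lc / (σ - ρ)))]

/-! ### The local energy inequality -/

/-- The pressure-free part of the right-hand side of the local energy inequality, for an annular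
layer of width `d` inside `B_τ`. -/
def bse (U V T G : E3 → ℝ) (d τ : ℝ) : ℝ :=
  d⁻¹ * nB G 2 τ * (nB U 2 τ + nB V 2 τ + nB T 2 τ)
    + (d⁻¹) ^ 2 * (nB U 2 τ ^ 2 + nB V 2 τ ^ 2 + nB T 2 τ ^ 2)
    + d⁻¹ * (∫ x in ball (0 : E3) τ, U x * (U x ^ 2 + V x ^ 2 + T x ^ 2))
    + d⁻¹ * ∫ x in ball (0 : E3) τ, T x * V x

/-- The pressure contribution, first form. -/
def wA (U V : E3 → ℝ) (d τ : ℝ) : ℝ := d⁻¹ * nB U 2 τ * (nB U 4 τ ^ 2 + nB V 4 τ ^ 2)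

/-- The pressure contribution, second form. -/
def wB (p : ℝ) (U V G : E3 → ℝ) (d τ : ℝ) : ℝ :=
  nB G 2 τ * (nB U (2 * p / (p - 1)) τ + nB V (2 * p / (p - 1)) τ) * nB U p τ
    * d ^ (-(3 / (2 * p)))

/-- The local energy: the squared `L²` norm of the gradient and squared `L⁶` norms of the fields. -/
def Xen (U V T G : E3 → ℝ) (ρ : ℝ) : ℝ :=
  nB G 2 ρ ^ 2 + nB U 6 ρ ^ 2 + nB V 6 ρ ^ 2 + nB T 6 ρ ^ 2

section
variable {u : E3 → E3} {pr : E3 → ℝ} {v : E3 → E3} {θ : E3 → ℝ}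

/-- Pointwise bound for the energy flux without its pressure part. -/
lemma flux_bound (φ : E3 → ℝ) {Λ : ℝ} (x : E3) (hφ : ∀ j, |pd3 j φ x| ≤ Λ) :
    |∑ j, pd3 j φ x * (flux u pr v θ j x + pr x * u x j)| ≤
      3 * (Λ * (3 * (Gr u v θ x * (‖u x‖ + ‖v x‖ + |θ x|))
        + 4 * (‖u x‖ * (‖u x‖ ^ 2 + ‖v x‖ ^ 2 + |θ x| ^ 2)) + |θ x| * ‖v x‖)) := by
  refine abs_sum3_le fun j => ?_
  rw [abs_mul]
  refine mul_le_mul (hφ j) ?_ (abs_nonneg _) ((abs_nonneg _).trans (hφ j))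
  have hG := Gr_nonneg u v θ x
  have hU := norm_nonneg (u x)
  have hV := norm_nonneg (v x)
  have hT := abs_nonneg (θ x)
  have s1 : ∑ i : Fin 3, u x i * u x i = ‖u x‖ ^ 2 := by
    rw [EuclideanSpace.real_norm_sq_eq]; simp [sq]
  have s2 : ∑ i : Fin 3, v x i * v x i = ‖v x‖ ^ 2 := by
    rw [EuclideanSpace.real_norm_sq_eq]; simp [sq]
  have s3 : θ x * θ x = |θ x| ^ 2 := by rw [sq_abs]; ring
  have a1 : |∑ i : Fin 3, u x i * pd3 j (fun y => u y i) x| ≤ 3 * (‖u x‖ * Gr u v θ x) :=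
    abs_sum3_le fun i => by
      rw [abs_mul]
      exact mul_le_mul (abs_coord_le _ _) (pd_u_le u v θ i j x) (abs_nonneg _) hU
  have a2 : |∑ i : Fin 3, v x i * pd3 j (fun y => v y i) x| ≤ 3 * (‖v x‖ * Gr u v θ x) :=
    abs_sum3_le fun i => by
      rw [abs_mul]
      exact mul_le_mul (abs_coord_le _ _) (pd_v_le u v θ i j x) (abs_nonneg _) hV
  have a3 : |θ x * pd3 j θ x| ≤ |θ x| * Gr u v θ x := by
    rw [abs_mul]
    exact mul_le_mul_of_nonneg_left (pd_θ_le u v θ j x) hT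
  have a4 : |∑ i : Fin 3, u x i * v x i| ≤ 3 * (‖u x‖ * ‖v x‖) :=
    abs_sum3_le fun i => by
      rw [abs_mul]
      exact mul_le_mul (abs_coord_le _ _) (abs_coord_le _ _) (abs_nonneg _) hU
  have a5 : |u x j * (1 / 2 * (‖u x‖ ^ 2 + ‖v x‖ ^ 2 + |θ x| ^ 2))| ≤
      ‖u x‖ * (‖u x‖ ^ 2 + ‖v x‖ ^ 2 + |θ x| ^ 2) := by
    rw [abs_mul, abs_of_nonneg (by positivity : 0 ≤ 1 / 2 * (‖u x‖ ^ 2 + ‖v x‖ ^ 2 + |θ x| ^ 2))]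
    refine mul_le_mul (abs_coord_le _ _) ?_ (by positivity) hU
    nlinarith [sq_nonneg ‖u x‖, sq_nonneg ‖v x‖, sq_nonneg |θ x|]
  have a6 : |v x j * ((∑ i : Fin 3, u x i * v x i) + θ x)| ≤
      ‖v x‖ * (3 * (‖u x‖ * ‖v x‖) + |θ x|) := by
    rw [abs_mul]
    refine mul_le_mul (abs_coord_le _ _) ?_ (abs_nonneg _) hV
    exact (abs_add_le _ _).trans (by linarith)
  have e : flux u pr v θ j x + pr x * u x j =
      (∑ i : Fin 3, u x i * pd3 j (fun y => u y i) x)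
        + (∑ i : Fin 3, v x i * pd3 j (fun y => v y i) x) + θ x * pd3 j θ x
        - u x j * (1 / 2 * (‖u x‖ ^ 2 + ‖v x‖ ^ 2 + |θ x| ^ 2))
        - v x j * ((∑ i : Fin 3, u x i * v x i) + θ x) := by
    unfold flux; rw [s1, s2, s3]; ring
  rw [e]
  refine (abs_sub _ _).trans ?_
  refine (add_le_add (abs_sub _ _) a6).trans ?_
  refine (add_le_add (add_le_add ((abs_add_le _ _).trans (add_le_add (abs_add_le _ _) le_rfl))
    a5) le_rfl).trans ?_
  have p1 : 0 ≤ ‖u x‖ * |θ x| ^ 2 := by positivity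
  have p2 : 0 ≤ ‖u x‖ * ‖u x‖ ^ 2 := by positivity
  have p3 : 0 ≤ |θ x| * Gr u v θ x := by positivity
  nlinarith

lemma bse_nonneg {U V T G : E3 → ℝ} (hU : ∀ x, 0 ≤ U x) (hV : ∀ x, 0 ≤ V x) (hT : ∀ x, 0 ≤ T x)
    {d τ : ℝ} (hd : 0 < d) : 0 ≤ bse U V T G d τ := by
  unfold bse
  have := nB_nonneg G 2 τ
  have := nB_nonneg U 2 τ
  have := nB_nonneg V 2 τ
  have := nB_nonneg T 2 τ
  have : 0 ≤ ∫ x in ball (0 : E3) τ, U x * (U x ^ 2 + V x ^ 2 + T x ^ 2) :=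
    integral_nonneg fun x => mul_nonneg (hU x) (by positivity)
  have : 0 ≤ ∫ x in ball (0 : E3) τ, T x * V x :=
    integral_nonneg fun x => mul_nonneg (hT x) (hV x)
  positivity

lemma bse_half {U V T G : E3 → ℝ} (hU : ∀ x, 0 ≤ U x) (hV : ∀ x, 0 ≤ V x) (hT : ∀ x, 0 ≤ T x)
    {d τ : ℝ} (hd : 0 < d) : bse U V T G (d / 2) τ ≤ 4 * bse U V T G d τ := by
  unfold bse
  have := nB_nonneg G 2 τ
  have := nB_nonneg U 2 τ
  have := nB_nonneg V 2 τ
  have := nB_nonneg T 2 τ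
  have h1 : 0 ≤ ∫ x in ball (0 : E3) τ, U x * (U x ^ 2 + V x ^ 2 + T x ^ 2) :=
    integral_nonneg fun x => mul_nonneg (hU x) (by positivity)
  have h2 : 0 ≤ ∫ x in ball (0 : E3) τ, T x * V x :=
    integral_nonneg fun x => mul_nonneg (hT x) (hV x)
  have e : (d / 2)⁻¹ = 2 * d⁻¹ := by rw [inv_div]; ring
  rw [e]
  have k1 : 0 ≤ d⁻¹ * nB G 2 τ * (nB U 2 τ + nB V 2 τ + nB T 2 τ) := by positivity
  have k2 := mul_nonneg (inv_nonneg.2 hd.le) h1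
  have k3 := mul_nonneg (inv_nonneg.2 hd.le) h2
  nlinarith

/-- Pressure-free part of the energy estimate. -/
lemma energy_step (h : IsTCMSolution u pr v θ) {φ : E3 → ℝ} (hφ : Sm φ) {ρ σ τ Λ : ℝ}
    (h1 : ∀ x, ‖x‖ ≤ ρ → φ x = 1) (h0 : ∀ x, σ < ‖x‖ → φ x = 0) (hp : ∀ x, 0 ≤ φ x)
    (hd : ∀ j x, |pd3 j φ x| ≤ Λ) (hστ : σ < τ) :
    nB (Gr u v θ) 2 ρ ^ 2 ≤ 3 * Λ * (3 * (nB (Gr u v θ) 2 τ * (nB (fun x => ‖u x‖) 2 τ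
        + nB (fun x => ‖v x‖) 2 τ + nB (fun x => |θ x|) 2 τ))
        + 4 * (∫ x in ball (0 : E3) τ, ‖u x‖ * (‖u x‖ ^ 2 + ‖v x‖ ^ 2 + |θ x| ^ 2))
        + ∫ x in ball (0 : E3) τ, |θ x| * ‖v x‖)
      + |∫ x, pr x * ∑ i, pd3 i φ x * u x i| := by
  have hc : HasCompactSupport φ := hcs_of_zero h0
  have hGc := Gsq_cont h.smooth_u h.smooth_v h.smooth_θ
  have hGr := Gr_cont h.smooth_u h.smooth_v h.smooth_θ
  have hcu := h.smooth_u.continuous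
  have hcv := h.smooth_v.continuous
  have hcθ := h.smooth_θ.continuous
  have hΛ : 0 ≤ Λ := (abs_nonneg _).trans (hd 0 0)
  have hui := fun i => sm_coord h.smooth_u i
  have hintg : Integrable fun x => φ x * Gsq u v θ x :=
    (hφ.continuous.mul hGc).integrable_of_hasCompactSupport hc.mul_right
  have e1 : nB (Gr u v θ) 2 ρ ^ 2 ≤ ∫ x, φ x * Gsq u v θ x := by
    rw [nB_sq]
    calc ∫ x in ball (0 : E3) ρ, Gr u v θ x ^ 2 = ∫ x in ball (0 : E3) ρ, φ x * Gsq u v θ x := by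
          refine setIntegral_congr_fun measurableSet_ball fun x hx => ?_
          rw [Gr_sq, h1 x (mem_ball_zero_iff.1 hx).le, one_mul]
      _ ≤ _ := setIntegral_le_integral hintg
          (ae_of_all _ fun x => mul_nonneg (hp x) (Gsq_nonneg u v θ x))
  have smS : Sm fun x => ∑ j, pd3 j φ x * (flux u pr v θ j x + pr x * u x j) :=
    sm_sum _ fun j => (hφ.pd j).mul ((flux_smooth h j).add (h.smooth_pr.mul (hui j)))
  have smP : Sm fun x => pr x * ∑ i, pd3 i φ x * u x i :=
    h.smooth_pr.mul (sm_sum _ fun j => (hφ.pd j).mul (hui j))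
  have z : ∀ x, σ < ‖x‖ → ∀ j, pd3 j φ x = 0 := fun x hx j => pd3_zero_of_zero h0 j hx
  have zS : ∀ x, σ < ‖x‖ → ∑ j, pd3 j φ x * (flux u pr v θ j x + pr x * u x j) = 0 := by
    intro x hx; simp [z x hx]
  have zP : ∀ x, σ < ‖x‖ → pr x * ∑ i, pd3 i φ x * u x i = 0 := by
    intro x hx; simp [z x hx]
  have e2 : ∫ x, φ x * Gsq u v θ x =
      - (∫ x, ∑ j, pd3 j φ x * (flux u pr v θ j x + pr x * u x j))
        + ∫ x, pr x * ∑ i, pd3 i φ x * u x i := by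
    rw [energy_identity h hφ hc, neg_add_eq_sub, ← integral_sub (smP.integrable (hcs_of_zero zP))
      (smS.integrable (hcs_of_zero zS)), ← integral_neg]
    congr 1; ext x
    rw [Finset.mul_sum, ← Finset.sum_sub_distrib, ← Finset.sum_neg_distrib]
    refine Finset.sum_congr rfl fun j _ => by ring
  have e3 : |∫ x, ∑ j, pd3 j φ x * (flux u pr v θ j x + pr x * u x j)| ≤
      3 * Λ * (3 * (nB (Gr u v θ) 2 τ * (nB (fun x => ‖u x‖) 2 τ
        + nB (fun x => ‖v x‖) 2 τ + nB (fun x => |θ x|) 2 τ))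
        + 4 * (∫ x in ball (0 : E3) τ, ‖u x‖ * (‖u x‖ ^ 2 + ‖v x‖ ^ 2 + |θ x| ^ 2))
        + ∫ x in ball (0 : E3) τ, |θ x| * ‖v x‖) := by
    rw [← setIntegral_eq_integral_of_forall_compl_eq_zero (s := ball (0 : E3) τ)
      (fun x hx => zS x (lt_of_lt_of_le hστ (by simpa using hx)))]
    refine abs_integral_le_integral_abs.trans ?_
    have i1 : ∀ f : E3 → ℝ, Continuous f →
        ∫ x in ball (0 : E3) τ, Gr u v θ x * |f x| ≤ nB (Gr u v θ) 2 τ * nB f 2 τ := by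
      intro f hf
      have := holder2 hGr hf (ρ := τ) (a := 2) (b := 2) (by norm_num) (by norm_num)
      simpa only [abs_of_nonneg (Gr_nonneg u v θ _)] using this
    have j1 := i1 (fun x => ‖u x‖) hcu.norm
    have j2 := i1 (fun x => ‖v x‖) hcv.norm
    have j3 := i1 (fun x => |θ x|) hcθ.abs
    simp only [abs_norm, abs_abs] at j1 j2 j3
    have c1 : Continuous fun x => Gr u v θ x * ‖u x‖ := hGr.mul hcu.norm
    have c2 : Continuous fun x => Gr u v θ x * ‖v x‖ := hGr.mul hcv.norm
    have c3 : Continuous fun x => Gr u v θ x * |θ x| := hGr.mul hcθ.abs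
    have c4 : Continuous fun x => ‖u x‖ * (‖u x‖ ^ 2 + ‖v x‖ ^ 2 + |θ x| ^ 2) := by fun_prop
    have c5 : Continuous fun x => |θ x| * ‖v x‖ := by fun_prop
    have n1 := integrableOn_ball c1 τ
    have n2 := integrableOn_ball c2 τ
    have n3 := integrableOn_ball c3 τ
    have n4 := integrableOn_ball c4 τ
    have n5 := integrableOn_ball c5 τ
    calc ∫ x in ball (0 : E3) τ, |∑ j, pd3 j φ x * (flux u pr v θ j x + pr x * u x j)|
        ≤ ∫ x in ball (0 : E3) τ, 3 * Λ * (3 * (Gr u v θ x * ‖u x‖ + Gr u v θ x * ‖v x‖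
            + Gr u v θ x * |θ x|)
            + 4 * (‖u x‖ * (‖u x‖ ^ 2 + ‖v x‖ ^ 2 + |θ x| ^ 2)) + |θ x| * ‖v x‖) := by
          refine integral_mono (integrableOn_ball smS.continuous.abs τ)
            (((((n1.add n2).add n3).const_mul 3).add (n4.const_mul 4)).add n5 |>.const_mul _) ?_
          intro x
          refine (flux_bound φ x (fun j => hd j x)).trans (le_of_eq ?_)
          simp only []
          ring
      _ = 3 * Λ * (3 * ((∫ x in ball (0 : E3) τ, Gr u v θ x * ‖u x‖)
            + (∫ x in ball (0 : E3) τ, Gr u v θ x * ‖v x‖)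
            + (∫ x in ball (0 : E3) τ, Gr u v θ x * |θ x|))
            + 4 * (∫ x in ball (0 : E3) τ, ‖u x‖ * (‖u x‖ ^ 2 + ‖v x‖ ^ 2 + |θ x| ^ 2))
            + ∫ x in ball (0 : E3) τ, |θ x| * ‖v x‖) := by
          have m12 : IntegrableOn (fun x => Gr u v θ x * ‖u x‖ + Gr u v θ x * ‖v x‖)
            (ball (0 : E3) τ) := n1.add n2
          have m123 : IntegrableOn (fun x => 3 * (Gr u v θ x * ‖u x‖ + Gr u v θ x * ‖v x‖
            + Gr u v θ x * |θ x|)) (ball (0 : E3) τ) := (m12.add n3).const_mul 3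
          have m4 : IntegrableOn (fun x => 4 * (‖u x‖ * (‖u x‖ ^ 2 + ‖v x‖ ^ 2 + |θ x| ^ 2)))
            (ball (0 : E3) τ) := n4.const_mul 4
          have m5 : IntegrableOn (fun x => 3 * (Gr u v θ x * ‖u x‖ + Gr u v θ x * ‖v x‖
            + Gr u v θ x * |θ x|) + 4 * (‖u x‖ * (‖u x‖ ^ 2 + ‖v x‖ ^ 2 + |θ x| ^ 2)))
            (ball (0 : E3) τ) := m123.add m4
          rw [integral_const_mul, integral_add m5 n5, integral_add m123 m4,
            integral_const_mul, integral_const_mul, integral_add m12 n3, integral_add n1 n2]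
      _ ≤ _ := by
          refine mul_le_mul_of_nonneg_left ?_ (by positivity)
          linarith
  rw [e2] at e1
  have := neg_le_abs (∫ x, ∑ j, pd3 j φ x * (flux u pr v θ j x + pr x * u x j))
  have := le_abs_self (∫ x, pr x * ∑ i, pd3 i φ x * u x i)
  linarith

end

section
variable {u : E3 → E3} {pr : E3 → ℝ} {v : E3 → E3} {θ : E3 → ℝ}

lemma wA_nonneg (U V : E3 → ℝ) {d : ℝ} (τ : ℝ) (hd : 0 < d) : 0 ≤ wA U V d τ := by
  unfold wA
  have := nB_nonneg U 2 τ
  positivity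

lemma wB_nonneg (p : ℝ) (U V G : E3 → ℝ) {d : ℝ} (τ : ℝ) (hd : 0 < d) : 0 ≤ wB p U V G d τ := by
  unfold wB
  have := nB_nonneg G 2 τ
  have := nB_nonneg U p τ
  have := nB_nonneg U (2 * p / (p - 1)) τ
  have := nB_nonneg V (2 * p / (p - 1)) τ
  positivity

set_option maxHeartbeats 1000000 in
/-- The energy estimate for the gradient: the energy identity with a cutoff between `B_ρ` and the
ball of radius `ρ + (τ - ρ)/4`, combined with either bound for the pressure. -/
lemma energy1 (h : IsTCMSolution u pr v θ) {p : ℝ} (hp : 3 / 2 < p) : ∃ C, 0 ≤ C ∧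
    ∀ ρ τ, 0 < ρ → ρ < τ →
      nB (Gr u v θ) 2 ρ ^ 2 ≤ C * (bse (fun x => ‖u x‖) (fun x => ‖v x‖) (fun x => |θ x|)
        (Gr u v θ) (τ - ρ) τ + wA (fun x => ‖u x‖) (fun x => ‖v x‖) (τ - ρ) τ) ∧
      nB (Gr u v θ) 2 ρ ^ 2 ≤ C * (bse (fun x => ‖u x‖) (fun x => ‖v x‖) (fun x => |θ x|)
        (Gr u v θ) (τ - ρ) τ + wB p (fun x => ‖u x‖) (fun x => ‖v x‖) (Gr u v θ) (τ - ρ) τ) := by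
  have hL := Lc_nonneg
  have hc0 := c0_pos
  have hη := Cη_nonneg
  have hCp := Cp_nonneg p
  set K : ℝ := 18 * c0⁻¹ * Cη * (6 * Lc + 1) with hK
  set K2 : ℝ := 18 * c0⁻¹ * Cp p * 2 ^ (3 / (2 * p)) * (6 * Lc + 1) with hK2
  have hK0 : 0 ≤ K := by positivity
  have hK20 : 0 ≤ K2 := by positivity
  refine ⟨48 * Lc + K + K2, by positivity, fun ρ τ hρ hρτ => ?_⟩
  set d := τ - ρ with hd
  have hd0 : 0 < d := sub_pos.2 hρτ
  obtain ⟨φ, hφ, h1, h0, hφp, hφl, hφd⟩ := exists_cutoff hρ.le (by linarith : ρ < ρ + d / 4)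
  have hdd : ∀ j x, |pd3 j φ x| ≤ 4 * Lc * d⁻¹ := fun j x => (hφd j x).trans (le_of_eq (by
    rw [add_sub_cancel_left]; field_simp))
  have H := energy_step h hφ h1 (fun x hx => h0 x hx.le) hφp hdd (by linarith : ρ + d / 4 < τ)
  obtain ⟨PA, PB⟩ := pressure_bounds h hφ (σ := ρ + d / 4) (τ := τ) (d := d / 2) (L := 2 * Lc)
    (fun x hx => h0 x hx.le) (fun x => abs_le.2 ⟨by linarith [hφp x], hφl x⟩) (by linarith)
    (by linarith) (fun j x => (hdd j x).trans (le_of_eq (by field_simp; ring))) (by linarith)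
  have PB := PB p hp
  rw [abs_mul, abs_of_pos hc0] at PA PB
  have nG := nB_nonneg (Gr u v θ) 2 τ
  have nU := nB_nonneg (fun x => ‖u x‖) 2 τ
  have nV := nB_nonneg (fun x => ‖v x‖) 2 τ
  have nT := nB_nonneg (fun x => |θ x|) 2 τ
  have nUp := nB_nonneg (fun x => ‖u x‖) p τ
  have nU' := nB_nonneg (fun x => ‖u x‖) (2 * p / (p - 1)) τ
  have nV' := nB_nonneg (fun x => ‖v x‖) (2 * p / (p - 1)) τ
  have I1 : 0 ≤ ∫ x in ball (0 : E3) τ, ‖u x‖ * (‖u x‖ ^ 2 + ‖v x‖ ^ 2 + |θ x| ^ 2) :=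
    integral_nonneg fun x => by positivity
  have I2 : 0 ≤ ∫ x in ball (0 : E3) τ, |θ x| * ‖v x‖ := integral_nonneg fun x => by positivity
  have hA0 := wA_nonneg (fun x => ‖u x‖) (fun x => ‖v x‖) τ hd0
  have hB0 := wB_nonneg p (fun x => ‖u x‖) (fun x => ‖v x‖) (Gr u v θ) τ hd0
  have hb0 : 0 ≤ bse (fun x => ‖u x‖) (fun x => ‖v x‖) (fun x => |θ x|) (Gr u v θ) d τ :=
    bse_nonneg (fun x => norm_nonneg _) (fun x => norm_nonneg _) (fun x => abs_nonneg _) hd0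
  have hd1 : 0 ≤ d⁻¹ := inv_nonneg.2 hd0.le
  have hb1 : d⁻¹ * nB (Gr u v θ) 2 τ * nB (fun x => ‖u x‖) 2 τ ≤
      bse (fun x => ‖u x‖) (fun x => ‖v x‖) (fun x => |θ x|) (Gr u v θ) d τ := by
    have k1 : 0 ≤ d⁻¹ * nB (Gr u v θ) 2 τ * (nB (fun x => ‖v x‖) 2 τ + nB (fun x => |θ x|) 2 τ) := by
      positivity
    have k2 := mul_nonneg hd1 I1
    have k3 := mul_nonneg hd1 I2
    have k4 : 0 ≤ (d⁻¹) ^ 2 * (nB (fun x => ‖u x‖) 2 τ ^ 2 + nB (fun x => ‖v x‖) 2 τ ^ 2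
      + nB (fun x => |θ x|) 2 τ ^ 2) := by positivity
    unfold bse
    linarith
  have hb2 : 3 * (4 * Lc * d⁻¹) * (3 * (nB (Gr u v θ) 2 τ * (nB (fun x => ‖u x‖) 2 τ
        + nB (fun x => ‖v x‖) 2 τ + nB (fun x => |θ x|) 2 τ))
        + 4 * (∫ x in ball (0 : E3) τ, ‖u x‖ * (‖u x‖ ^ 2 + ‖v x‖ ^ 2 + |θ x| ^ 2))
        + ∫ x in ball (0 : E3) τ, |θ x| * ‖v x‖) ≤
      48 * Lc * bse (fun x => ‖u x‖) (fun x => ‖v x‖) (fun x => |θ x|) (Gr u v θ) d τ := by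
    rw [show ∀ y : ℝ, 3 * (4 * Lc * d⁻¹) * y = 12 * Lc * (d⁻¹ * y) from fun y => by ring,
      show ∀ y : ℝ, 48 * Lc * y = 12 * Lc * (4 * y) from fun y => by ring]
    refine mul_le_mul_of_nonneg_left ?_ (by positivity)
    have k1 : 0 ≤ d⁻¹ * nB (Gr u v θ) 2 τ * (nB (fun x => ‖u x‖) 2 τ
        + nB (fun x => ‖v x‖) 2 τ + nB (fun x => |θ x|) 2 τ) := by positivity
    have k2 := mul_nonneg hd1 I1
    have k3 := mul_nonneg hd1 I2
    have k4 : 0 ≤ (d⁻¹) ^ 2 * (nB (fun x => ‖u x‖) 2 τ ^ 2 + nB (fun x => ‖v x‖) 2 τ ^ 2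
      + nB (fun x => |θ x|) 2 τ ^ 2) := by positivity
    unfold bse
    linarith
  have hcc : c0⁻¹ * c0 = 1 := inv_mul_cancel₀ hc0.ne'
  constructor
  · have hP : |∫ x, pr x * ∑ i, pd3 i φ x * u x i| ≤ K * (d⁻¹ * nB (Gr u v θ) 2 τ *
        nB (fun x => ‖u x‖) 2 τ + wA (fun x => ‖u x‖) (fun x => ‖v x‖) d τ) := by
      have := mul_le_mul_of_nonneg_left PA (inv_nonneg.2 hc0.le)
      rw [← mul_assoc, hcc, one_mul] at this
      refine this.trans (le_of_eq ?_)
      rw [hK]; unfold wA; rw [inv_div]; ring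
    have : 0 ≤ K2 * (bse (fun x => ‖u x‖) (fun x => ‖v x‖) (fun x => |θ x|) (Gr u v θ) d τ
      + wA (fun x => ‖u x‖) (fun x => ‖v x‖) d τ) := by positivity
    have := mul_nonneg hL hA0
    have := mul_le_mul_of_nonneg_left hb1 hK0
    linarith
  · have hP : |∫ x, pr x * ∑ i, pd3 i φ x * u x i| ≤ K * (d⁻¹ * nB (Gr u v θ) 2 τ *
        nB (fun x => ‖u x‖) 2 τ) +
        K2 * wB p (fun x => ‖u x‖) (fun x => ‖v x‖) (Gr u v θ) d τ := by
      have := mul_le_mul_of_nonneg_left PB (inv_nonneg.2 hc0.le)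
      rw [← mul_assoc, hcc, one_mul] at this
      refine this.trans ?_
      have e : (d / 2) ^ (-(3 / (2 * p))) = 2 ^ (3 / (2 * p)) * d ^ (-(3 / (2 * p))) := by
        rw [Real.div_rpow hd0.le two_pos.le, Real.rpow_neg two_pos.le, div_inv_eq_mul, mul_comm]
      rw [e, hK, hK2, mul_add]
      refine add_le_add (le_of_eq (by rw [inv_div]; ring)) ?_
      have hx : 0 ≤ c0⁻¹ * nB (Gr u v θ) 2 τ * (Cp p * (2 ^ (3 / (2 * p)) * d ^ (-(3 / (2 * p))))
        * ((3 * (2 * Lc) + 1) * nB (fun x => ‖u x‖) p τ)) * nB (fun x => ‖u x‖) (2 * p / (p - 1)) τ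
        := by positivity
      unfold wB
      linarith
    have := mul_le_mul_of_nonneg_left hb1 hK0
    have := mul_nonneg hL hB0
    have := mul_nonneg hK0 hB0
    have := mul_nonneg hK20 hb0
    linarith

/-- The local energy inequality, with the two alternative treatments of the pressure. -/
lemma energy_ineq (h : IsTCMSolution u pr v θ) {p : ℝ} (hp : 3 / 2 < p) : ∃ C, 0 ≤ C ∧
    ∀ ρ τ, 0 < ρ → ρ < τ →
      Xen (fun x => ‖u x‖) (fun x => ‖v x‖) (fun x => |θ x|) (Gr u v θ) ρ ≤
        C * (bse (fun x => ‖u x‖) (fun x => ‖v x‖) (fun x => |θ x|)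
        (Gr u v θ) (τ - ρ) τ + wA (fun x => ‖u x‖) (fun x => ‖v x‖) (τ - ρ) τ) ∧
      Xen (fun x => ‖u x‖) (fun x => ‖v x‖) (fun x => |θ x|) (Gr u v θ) ρ ≤
        C * (bse (fun x => ‖u x‖) (fun x => ‖v x‖) (fun x => |θ x|)
        (Gr u v θ) (τ - ρ) τ + wB p (fun x => ‖u x‖) (fun x => ‖v x‖) (Gr u v θ) (τ - ρ) τ) := by
  obtain ⟨C, hC, H⟩ := energy1 h hp
  have hL := Lc_nonneg
  have hS := Sob_nonneg 2
  set K3 : ℝ := 4 + 2 ^ (3 / (2 * p)) with hK3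
  have hK30 : 0 ≤ K3 := by positivity
  have hGr := Gr_cont h.smooth_u h.smooth_v h.smooth_θ
  have key : ∀ ρ τ Q, 0 < ρ → ρ < τ → nB (Gr u v θ) 2 ((ρ + τ) / 2) ^ 2 ≤ C * K3 * Q →
      bse (fun x => ‖u x‖) (fun x => ‖v x‖) (fun x => |θ x|) (Gr u v θ) (τ - ρ) τ ≤ Q →
      Xen (fun x => ‖u x‖) (fun x => ‖v x‖) (fun x => |θ x|) (Gr u v θ) ρ ≤
        (C * K3 + 54 * Sob 2 ^ 2 * (9 * (C * K3) + 36 * Lc ^ 2)) * Q := by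
    intro ρ τ Q hρ hρτ hQ hbQ
    have hd0 : 0 < τ - ρ := sub_pos.2 hρτ
    set m := (ρ + τ) / 2 with hm
    have hρm : ρ < m := by rw [hm]; linarith
    have hmτ : m < τ := by rw [hm]; linarith
    have hb0 := bse_nonneg (G := Gr u v θ) (τ := τ) (fun x => norm_nonneg (u x))
      (fun x => norm_nonneg (v x)) (fun x => abs_nonneg (θ x)) hd0
    have hQ0 : 0 ≤ Q := hb0.trans hbQ
    -- the scalar estimate, for any component
    have sc : ∀ f : E3 → ℝ, Sm f → (∀ j x, |pd3 j f x| ≤ Gr u v θ x) →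
        nB f 6 ρ ≤ Sob 2 * (3 * nB (Gr u v θ) 2 m + 6 * Lc * (τ - ρ)⁻¹ * nB f 2 τ) := by
      intro f hf hfG
      refine (sobolev_ball hf hGr hfG hρ.le hρm).trans ?_
      refine mul_le_mul_of_nonneg_left ?_ hS
      have e : 3 * (Lc / (m - ρ)) = 6 * Lc * (τ - ρ)⁻¹ := by
        rw [hm, show (ρ + τ) / 2 - ρ = (τ - ρ) / 2 by ring]; field_simp; ring
      rw [e]
      have := nB_mono hf.continuous (s := 2) (by norm_num) hmτ.le
      gcongr
    have sq : ∀ a b : ℝ, 0 ≤ a → 0 ≤ b → a ≤ 3 * (Sob 2 * (3 * nB (Gr u v θ) 2 m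
        + 6 * Lc * (τ - ρ)⁻¹ * b)) → (τ - ρ)⁻¹ ^ 2 * b ^ 2 ≤ Q →
        a ^ 2 ≤ 18 * Sob 2 ^ 2 * (9 * (C * K3) + 36 * Lc ^ 2) * Q := by
      intro a b ha hb hab hbq
      have h1 : a ^ 2 ≤ (3 * (Sob 2 * (3 * nB (Gr u v θ) 2 m + 6 * Lc * (τ - ρ)⁻¹ * b))) ^ 2 :=
        pow_le_pow_left₀ ha hab 2
      have h2 : (3 * nB (Gr u v θ) 2 m + 6 * Lc * (τ - ρ)⁻¹ * b) ^ 2 ≤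
          2 * (9 * (C * K3 * Q) + 36 * Lc ^ 2 * Q) := by
        have k1 := sq_nonneg (3 * nB (Gr u v θ) 2 m - 6 * Lc * (τ - ρ)⁻¹ * b)
        have k2 := mul_le_mul_of_nonneg_left hbq (sq_nonneg Lc)
        nlinarith
      calc a ^ 2 ≤ 9 * Sob 2 ^ 2 * (3 * nB (Gr u v θ) 2 m + 6 * Lc * (τ - ρ)⁻¹ * b) ^ 2 := by
            refine h1.trans (le_of_eq (by ring))
        _ ≤ 9 * Sob 2 ^ 2 * (2 * (9 * (C * K3 * Q) + 36 * Lc ^ 2 * Q)) := by gcongr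
        _ = _ := by ring
    have vec : ∀ w : E3 → E3, ContDiff ℝ (⊤ : ℕ∞) w →
        (∀ i j x, |pd3 j (fun y => w y i) x| ≤ Gr u v θ x) →
        nB (fun x => ‖w x‖) 6 ρ ≤ 3 * (Sob 2 * (3 * nB (Gr u v θ) 2 m
        + 6 * Lc * (τ - ρ)⁻¹ * nB (fun x => ‖w x‖) 2 τ)) := by
      intro w hw hwG
      have hwc := hw.continuous
      have hci := fun i => (sm_coord hw i).continuous
      have k : ∀ i, nB (fun x => |w x i|) 6 ρ ≤ Sob 2 * (3 * nB (Gr u v θ) 2 m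
          + 6 * Lc * (τ - ρ)⁻¹ * nB (fun x => ‖w x‖) 2 τ) := by
        intro i
        have e : nB (fun x => |w x i|) 6 ρ = nB (fun x => w x i) 6 ρ := by simp [nB]
        rw [e]
        refine (sc _ (sm_coord hw i) (hwG i)).trans ?_
        have := nB_le (f := fun x => w x i) (g := fun x => ‖w x‖) hwc.norm (s := 2) (ρ := τ)
          (c := 1) (by norm_num) zero_le_one (fun x _ => by
            rw [one_mul, abs_norm]; exact abs_coord_le _ _)
        rw [one_mul] at this
        have hd1 : 0 ≤ (τ - ρ)⁻¹ := inv_nonneg.2 hd0.le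
        gcongr
      have tri : nB (fun x => ‖w x‖) 6 ρ ≤ nB (fun x => |w x 0|) 6 ρ + nB (fun x => |w x 1|) 6 ρ
          + nB (fun x => |w x 2|) 6 ρ := by
        have c0 := (hci 0).abs
        have c1 := (hci 1).abs
        have c2 := (hci 2).abs
        have t1 := nB_le (f := fun x => ‖w x‖) (g := fun x => |w x 0| + |w x 1| + |w x 2|)
          ((c0.add c1).add c2) (s := 6) (ρ := ρ) (c := 1) (by norm_num) zero_le_one (fun x _ => by
            rw [one_mul, abs_norm, abs_of_nonneg (a := |w x 0| + |w x 1| + |w x 2|) (by positivity)]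
            refine abs_le_of_sq_le_sq' ?_ (by positivity) |>.2
            rw [EuclideanSpace.real_norm_sq_eq, Fin.sum_univ_three, ← sq_abs (w x 0),
              ← sq_abs (w x 1), ← sq_abs (w x 2)]
            have := mul_nonneg (abs_nonneg (w x 0)) (abs_nonneg (w x 1))
            have := mul_nonneg (abs_nonneg (w x 0)) (abs_nonneg (w x 2))
            have := mul_nonneg (abs_nonneg (w x 1)) (abs_nonneg (w x 2))
            nlinarith)
        rw [one_mul] at t1
        refine t1.trans ((nB_add (c0.add c1) c2 (by norm_num)).trans ?_)
        exact add_le_add (nB_add c0 c1 (by norm_num)) le_rfl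
      linarith [k 0, k 1, k 2]
    have hd1 : 0 ≤ (τ - ρ)⁻¹ := inv_nonneg.2 hd0.le
    have nG := nB_nonneg (Gr u v θ) 2 τ
    have nU := nB_nonneg (fun x => ‖u x‖) 2 τ
    have nV := nB_nonneg (fun x => ‖v x‖) 2 τ
    have nT := nB_nonneg (fun x => |θ x|) 2 τ
    have I1 : 0 ≤ ∫ x in ball (0 : E3) τ, ‖u x‖ * (‖u x‖ ^ 2 + ‖v x‖ ^ 2 + |θ x| ^ 2) :=
      integral_nonneg fun x => by positivity
    have I2 : 0 ≤ ∫ x in ball (0 : E3) τ, |θ x| * ‖v x‖ := integral_nonneg fun x => by positivity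
    have hb2 : (τ - ρ)⁻¹ ^ 2 * (nB (fun x => ‖u x‖) 2 τ ^ 2 + nB (fun x => ‖v x‖) 2 τ ^ 2
        + nB (fun x => |θ x|) 2 τ ^ 2) ≤ Q := by
      refine le_trans ?_ hbQ
      unfold bse
      have k1 : 0 ≤ (τ - ρ)⁻¹ * nB (Gr u v θ) 2 τ * (nB (fun x => ‖u x‖) 2 τ
        + nB (fun x => ‖v x‖) 2 τ + nB (fun x => |θ x|) 2 τ) := by positivity
      have k2 := mul_nonneg hd1 I1
      have k3 := mul_nonneg hd1 I2
      linarith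
    have z1 : 0 ≤ (τ - ρ)⁻¹ ^ 2 * nB (fun x => ‖u x‖) 2 τ ^ 2 := by positivity
    have z2 : 0 ≤ (τ - ρ)⁻¹ ^ 2 * nB (fun x => ‖v x‖) 2 τ ^ 2 := by positivity
    have z3 : 0 ≤ (τ - ρ)⁻¹ ^ 2 * nB (fun x => |θ x|) 2 τ ^ 2 := by positivity
    have r1 := sq _ _ (nB_nonneg _ _ _) nU (vec u h.smooth_u (fun i j x => pd_u_le u v θ i j x))
      (by linarith)
    have r2 := sq _ _ (nB_nonneg _ _ _) nV (vec v h.smooth_v (fun i j x => pd_v_le u v θ i j x))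
      (by linarith)
    have eT : ∀ s t, nB (fun x => |θ x|) s t = nB θ s t := fun s t => by simp [nB]
    have r3 := sq (nB (fun x => |θ x|) 6 ρ) (nB (fun x => |θ x|) 2 τ) (nB_nonneg _ _ _) nT (by
      rw [eT, eT]
      have := sc θ h.smooth_θ (fun j x => pd_θ_le u v θ j x)
      have : 0 ≤ nB θ 6 ρ := nB_nonneg _ _ _
      linarith) (by linarith)
    have r0 : nB (Gr u v θ) 2 ρ ^ 2 ≤ C * K3 * Q :=
      (pow_le_pow_left₀ (nB_nonneg _ _ _) (nB_mono hGr (by norm_num) hρm.le) 2).trans hQ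
    unfold Xen
    linarith
  have h2p : (1:ℝ) ≤ 2 ^ (3 / (2 * p)) := Real.one_le_rpow (by norm_num) (by positivity)
  refine ⟨C * K3 + 54 * Sob 2 ^ 2 * (9 * (C * K3) + 36 * Lc ^ 2), by positivity,
    fun ρ τ hρ hρτ => ?_⟩
  have hd0 : 0 < τ - ρ := sub_pos.2 hρτ
  obtain ⟨HA, HB⟩ := H ((ρ + τ) / 2) τ (by linarith) (by linarith)
  rw [show τ - (ρ + τ) / 2 = (τ - ρ) / 2 by ring] at HA HB
  have hh := bse_half (G := Gr u v θ) (τ := τ) (fun x => norm_nonneg (u x))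
      (fun x => norm_nonneg (v x)) (fun x => abs_nonneg (θ x)) hd0
  have hb0 := bse_nonneg (G := Gr u v θ) (τ := τ) (fun x => norm_nonneg (u x))
      (fun x => norm_nonneg (v x)) (fun x => abs_nonneg (θ x)) hd0
  have hA0 := wA_nonneg (fun x => ‖u x‖) (fun x => ‖v x‖) τ hd0
  have hB0 := wB_nonneg p (fun x => ‖u x‖) (fun x => ‖v x‖) (Gr u v θ) τ hd0
  constructor
  · refine key ρ τ _ hρ hρτ (HA.trans ?_) (by linarith)
    have eA : wA (fun x => ‖u x‖) (fun x => ‖v x‖) ((τ - ρ) / 2) τ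
        = 2 * wA (fun x => ‖u x‖) (fun x => ‖v x‖) (τ - ρ) τ := by
      unfold wA; rw [inv_div]; ring
    rw [eA, mul_assoc]
    refine mul_le_mul_of_nonneg_left ?_ hC
    have := mul_nonneg (by linarith : (0:ℝ) ≤ 2 ^ (3 / (2 * p))) hb0
    have := mul_nonneg (by linarith : (0:ℝ) ≤ 2 ^ (3 / (2 * p))) hA0
    rw [hK3]; nlinarith
  · refine key ρ τ _ hρ hρτ (HB.trans ?_) (by linarith)
    have eB : wB p (fun x => ‖u x‖) (fun x => ‖v x‖) (Gr u v θ) ((τ - ρ) / 2) τ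
        = 2 ^ (3 / (2 * p)) * wB p (fun x => ‖u x‖) (fun x => ‖v x‖) (Gr u v θ) (τ - ρ) τ := by
      unfold wB
      rw [Real.div_rpow hd0.le two_pos.le, Real.rpow_neg two_pos.le, div_inv_eq_mul]; ring
    rw [eB, mul_assoc]
    refine mul_le_mul_of_nonneg_left ?_ hC
    have := mul_nonneg (by linarith : (0:ℝ) ≤ 2 ^ (3 / (2 * p))) hb0
    rw [hK3]; nlinarith

end

/-! ### Comparison of norms over balls -/

/-- The volume of the unit ball. -/
def vB : ℝ := (volume (ball (0 : E3) 1)).toReal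

lemma vB_nonneg : 0 ≤ vB := ENNReal.toReal_nonneg

lemma vol_ball {τ : ℝ} (hτ : 0 ≤ τ) : (volume (ball (0 : E3) τ)).toReal = vB * τ ^ 3 := by
  rw [Measure.addHaar_ball _ _ hτ, ENNReal.toReal_mul, ENNReal.toReal_ofReal (by positivity)]
  simp [vB, mul_comm]

lemma holder_set {F : E3 → ℝ} (hF : Continuous F) {S : Set E3} {τ : ℝ}
    (hτ : 0 ≤ τ) (hSτ : S ⊆ ball (0 : E3) τ) {s P : ℝ} (hs : 0 < s) (hsP : s < P) :
    ∫ x in S, |F x| ^ s ≤ (∫ x in S, |F x| ^ P) ^ (s / P) * (vB * τ ^ 3) ^ (1 - s / P) := by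
  have hP : 0 < P := hs.trans hsP
  have hlt : s / P < 1 := (div_lt_one hP).2 hsP
  have hvol : (volume S).toReal ≤ vB * τ ^ 3 := by
    rw [← vol_ball hτ]
    exact ENNReal.toReal_mono measure_ball_lt_top.ne (measure_mono hSτ)
  have hfin : IsFiniteMeasure (volume.restrict S) :=
    ⟨by rw [Measure.restrict_apply_univ]; exact (measure_mono hSτ).trans_lt measure_ball_lt_top⟩
  have hconj : (P / s).HolderConjugate (1 - s / P)⁻¹ := by
    rw [Real.holderConjugate_iff]
    refine ⟨(one_lt_div hs).2 hsP, ?_⟩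
    rw [inv_inv, inv_div]; ring
  have H := integral_mul_le_Lp_mul_Lq_of_nonneg (μ := volume.restrict S) hconj
    (f := fun x => |F x| ^ s) (g := fun _ => (1:ℝ)) (ae_of_all _ fun x => by positivity)
    (ae_of_all _ fun x => zero_le_one)
    ((memLp_ball (cont_rpow hF hs) _ τ).mono_measure (Measure.restrict_mono hSτ le_rfl))
    (memLp_const _)
  simp only [mul_one, Real.one_rpow, integral_const, smul_eq_mul, one_div, inv_inv, inv_div] at H
  have e : ∀ x, (|F x| ^ s) ^ (P / s) = |F x| ^ P := fun x => by
    rw [← Real.rpow_mul (abs_nonneg _), mul_div_cancel₀ _ hs.ne']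
  simp only [e] at H
  refine H.trans (mul_le_mul_of_nonneg_left ?_ (by positivity))
  refine Real.rpow_le_rpow (by positivity) ?_ (by linarith)
  simpa [Measure.real] using hvol

/-- Hölder's inequality on a ball of finite volume. -/
lemma nB_le_of_le {F : E3 → ℝ} (hF : Continuous F) {s P τ : ℝ} (hs : 0 < s) (hsP : s ≤ P)
    (hτ : 0 ≤ τ) : nB F s τ ≤ nB F P τ * (vB * τ ^ 3) ^ (1 / s - 1 / P) := by
  rcases hsP.eq_or_lt with rfl | hlt
  · simp
  have hP : 0 < P := hs.trans hlt
  have hv := vB_nonneg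
  have H := holder_set hF hτ subset_rfl hs hlt
  have h0 : 0 ≤ ∫ x in ball (0 : E3) τ, |F x| ^ P := integral_nonneg fun x => by positivity
  calc nB F s τ ≤ ((∫ x in ball (0 : E3) τ, |F x| ^ P) ^ (s / P)
        * (vB * τ ^ 3) ^ (1 - s / P)) ^ (1 / s) :=
        Real.rpow_le_rpow (integral_nonneg fun x => by positivity) H (by positivity)
    _ = _ := by
        rw [Real.mul_rpow (by positivity) (by positivity), ← Real.rpow_mul h0,
          ← Real.rpow_mul (by positivity)]
        unfold nB
        congr 2 <;> field_simp

/-- Interpolation of Lebesgue norms over a ball. -/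
lemma nB_interp {F : E3 → ℝ} (hF : Continuous F) {s P Q a τ : ℝ} (hs : 0 < s) (hP : 0 < P)
    (hQ : 0 < Q) (ha : 0 < a) (ha1 : a < 1) (h : 1 / s = (1 - a) / P + a / Q) :
    nB F s τ ≤ nB F P τ ^ (1 - a) * nB F Q τ ^ a := by
  have hb : 0 < 1 - a := by linarith
  have hx : 1 < P / ((1 - a) * s) := by
    rw [one_lt_div (by positivity)]
    have h1 : (1 - a) / P < 1 / s := by
      have : 0 < a / Q := by positivity
      linarith
    rw [div_lt_div_iff₀ hP hs] at h1
    linarith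
  have H := holder2 (cont_rpow hF (by positivity : 0 < (1 - a) * s))
    (cont_rpow hF (by positivity : 0 < a * s)) (ρ := τ) hx (b := Q / (a * s)) (by
      have : s * (1 / s) = 1 := by field_simp
      rw [h] at this
      rw [one_div_div, one_div_div]
      calc (1 - a) * s / P + a * s / Q = s * ((1 - a) / P + a / Q) := by ring
        _ = 1 := this)
  have e0 : ∀ x, |(|F x| ^ ((1 - a) * s))| * |(|F x| ^ (a * s))| = |F x| ^ s := fun x => by
    rw [abs_of_nonneg (Real.rpow_nonneg (abs_nonneg (F x)) ((1 - a) * s)),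
      abs_of_nonneg (Real.rpow_nonneg (abs_nonneg (F x)) (a * s)),
      ← Real.rpow_add_of_nonneg (abs_nonneg _) (by positivity) (by positivity)]
    congr 1; ring
  have e1 : nB (fun x => |F x| ^ ((1 - a) * s)) (P / ((1 - a) * s)) τ
      = (∫ x in ball (0 : E3) τ, |F x| ^ P) ^ ((1 - a) * s / P) := by
    unfold nB
    rw [one_div_div]
    congr 2; ext x
    rw [abs_of_nonneg (Real.rpow_nonneg (abs_nonneg (F x)) ((1 - a) * s)), ← Real.rpow_mul (abs_nonneg _)]
    congr 1; field_simp
  have e2 : nB (fun x => |F x| ^ (a * s)) (Q / (a * s)) τ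
      = (∫ x in ball (0 : E3) τ, |F x| ^ Q) ^ (a * s / Q) := by
    unfold nB
    rw [one_div_div]
    congr 2; ext x
    rw [abs_of_nonneg (Real.rpow_nonneg (abs_nonneg (F x)) (a * s)), ← Real.rpow_mul (abs_nonneg _)]
    congr 1; field_simp
  simp only [e0] at H
  rw [e1, e2] at H
  have h0 : 0 ≤ ∫ x in ball (0 : E3) τ, |F x| ^ P := integral_nonneg fun x => by positivity
  have h1 : 0 ≤ ∫ x in ball (0 : E3) τ, |F x| ^ Q := integral_nonneg fun x => by positivity
  calc nB F s τ ≤ ((∫ x in ball (0 : E3) τ, |F x| ^ P) ^ ((1 - a) * s / P)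
        * (∫ x in ball (0 : E3) τ, |F x| ^ Q) ^ (a * s / Q)) ^ (1 / s) :=
        Real.rpow_le_rpow (integral_nonneg fun x => by positivity) H (by positivity)
    _ = _ := by
        rw [Real.mul_rpow (by positivity) (by positivity), ← Real.rpow_mul h0,
          ← Real.rpow_mul h1]
        unfold nB
        rw [← Real.rpow_mul h0, ← Real.rpow_mul h1]
        congr 2 <;> field_simp

/-- Membership in `L^P`, phrased as a uniform bound on the norms over balls. -/
def BddN (F : E3 → ℝ) (P : ℝ) : Prop := ∃ M, 0 ≤ M ∧ ∀ τ, nB F P τ ≤ M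

lemma BddN.interp {F : E3 → ℝ} (hF : Continuous F) {P Q s : ℝ} (hP : 0 < P) (h1 : BddN F P)
    (h2 : BddN F Q) (hPs : P ≤ s) (hsQ : s ≤ Q) : BddN F s := by
  rcases hPs.eq_or_lt with rfl | hPs
  · exact h1
  rcases hsQ.eq_or_lt with rfl | hsQ
  · exact h2
  obtain ⟨M, hM, H1⟩ := h1
  obtain ⟨N, hN, H2⟩ := h2
  have hs : 0 < s := hP.trans hPs
  have hQ : 0 < Q := hs.trans hsQ
  have k1 : 1 / s < 1 / P := one_div_lt_one_div_of_lt hP hPs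
  have k2 : 1 / Q < 1 / s := one_div_lt_one_div_of_lt hs hsQ
  set a := (1 / P - 1 / s) / (1 / P - 1 / Q) with ha
  have hD : 0 < 1 / P - 1 / Q := by linarith
  have ha0 : 0 < a := div_pos (by linarith) hD
  have ha1 : a < 1 := (div_lt_one hD).2 (by linarith)
  refine ⟨M ^ (1 - a) * N ^ a, by positivity, fun τ => ?_⟩
  refine (nB_interp hF hs hP hQ ha0 ha1 ?_).trans ?_
  · have : a * (1 / P - 1 / Q) = 1 / P - 1 / s := div_mul_cancel₀ _ hD.ne'
    rw [div_eq_mul_one_div (1 - a), div_eq_mul_one_div a]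
    linarith
  · have := nB_nonneg F P τ
    have := nB_nonneg F Q τ
    have := H1 τ
    have := H2 τ
    have : 0 < 1 - a := by linarith
    gcongr

/-- Growth of `L^s` norms over balls for `F ∈ L^P`: a power of the radius when `s ≤ P`,
a sublinear power of the local energy when `P < s < 6`. -/
lemma nB_growth {F : E3 → ℝ} (hF : Continuous F) {P s : ℝ} (hP : 0 < P)
    (h : BddN F P) (hs : 0 < s) (hs6 : s < 6) : ∃ C b : ℝ, 0 ≤ C ∧ 0 ≤ b ∧ b < 1 / 2 ∧
      (s ≤ P → b = 0) ∧ ∀ R τ Y : ℝ, 1 ≤ R → 0 ≤ τ → τ ≤ 2 * R → 1 ≤ Y → nB F 6 τ ^ 2 ≤ Y →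
        nB F s τ ≤ C * R ^ (max 0 (3 / s - 3 / P)) * Y ^ b := by
  obtain ⟨M, hM, HM⟩ := h
  have hv := vB_nonneg
  by_cases hsP : s ≤ P
  · refine ⟨M * (vB * 8) ^ (1 / s - 1 / P), 0, by positivity, le_rfl, by norm_num, fun _ => rfl,
      fun R τ Y hR hτ hτR hY hX => ?_⟩
    have k1 : 1 / P ≤ 1 / s := one_div_le_one_div_of_le hs hsP
    have hmax : max 0 (3 / s - 3 / P) = 3 * (1 / s - 1 / P) := by
      rw [max_eq_right]
      · ring
      · rw [div_eq_mul_one_div 3, div_eq_mul_one_div 3]; linarith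
    rw [hmax, Real.rpow_zero, mul_one]
    refine (nB_le_of_le hF hs hsP hτ).trans ?_
    have : (vB * τ ^ 3) ^ (1 / s - 1 / P) ≤ (vB * 8) ^ (1 / s - 1 / P) * R ^ (3 * (1 / s - 1 / P)) := by
      rw [Real.rpow_mul (by linarith), ← Real.mul_rpow (by positivity) (by positivity)]
      refine Real.rpow_le_rpow (by positivity) ?_ (by linarith)
      have : τ ^ 3 ≤ (2 * R) ^ 3 := pow_le_pow_left₀ hτ hτR 3
      have e : R ^ (3:ℝ) = R ^ 3 := by norm_cast
      rw [e]
      nlinarith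
    rw [mul_assoc]
    exact mul_le_mul (HM τ) this (by positivity) hM
  · push Not at hsP
    have k1 : 1 / s < 1 / P := one_div_lt_one_div_of_lt hP hsP
    have k2 : (1:ℝ) / 6 < 1 / s := one_div_lt_one_div_of_lt hs hs6
    set a := (1 / P - 1 / s) / (1 / P - 1 / 6) with ha
    have hD : 0 < 1 / P - 1 / 6 := by linarith
    have ha0 : 0 < a := div_pos (by linarith) hD
    have ha1 : a < 1 := (div_lt_one hD).2 (by linarith)
    refine ⟨M ^ (1 - a), a / 2, by positivity, by positivity, by linarith, fun h => absurd h
      (not_le.2 hsP), fun R τ Y hR hτ hτR hY hX => ?_⟩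
    have hR1 : 1 ≤ R ^ (max 0 (3 / s - 3 / P)) := Real.one_le_rpow hR (le_max_left _ _)
    have hI := nB_interp (τ := τ) hF hs hP (by norm_num : (0:ℝ) < 6) ha0 ha1 (by
      have : a * (1 / P - 1 / 6) = 1 / P - 1 / s := div_mul_cancel₀ _ hD.ne'
      rw [div_eq_mul_one_div (1 - a), div_eq_mul_one_div a]
      linarith)
    have n0 := nB_nonneg F P τ
    have n6 := nB_nonneg F 6 τ
    have e1 : nB F 6 τ ^ a ≤ Y ^ (a / 2) := by
      have : nB F 6 τ ^ a = (nB F 6 τ ^ 2) ^ (a / 2) := by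
        rw [← Real.rpow_natCast, ← Real.rpow_mul n6]; congr 1; push_cast; ring
      rw [this]
      exact Real.rpow_le_rpow (by positivity) hX (by positivity)
    have e2 : nB F P τ ^ (1 - a) ≤ M ^ (1 - a) := Real.rpow_le_rpow n0 (HM τ) (by linarith)
    calc nB F s τ ≤ _ := hI
      _ ≤ M ^ (1 - a) * Y ^ (a / 2) := mul_le_mul e2 e1 (by positivity) (by positivity)
      _ = M ^ (1 - a) * 1 * Y ^ (a / 2) := by ring
      _ ≤ _ := by gcongr

/-- For `F ∈ L^P` and `s ≤ P` the growth rate of the `L^s` norm over balls is `o(R^{3/s-3/P})`. -/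
lemma nB_little {F : E3 → ℝ} (hF : Continuous F) {P s κ : ℝ} (hs : 0 < s) (hsP : s ≤ P)
    (h : BddN F P) (hκ : 0 < κ) (hκ2 : 3 / s - 3 / P ≤ κ) :
    Tendsto (fun R : ℝ => R ^ (-κ) * nB F s (2 * R)) atTop (nhds 0) := by
  obtain ⟨M, hM, HM⟩ := h
  have hP : 0 < P := hs.trans_le hsP
  have hv := vB_nonneg
  have hz : Tendsto (fun R : ℝ => R ^ (-κ)) atTop (nhds 0) := tendsto_rpow_neg_atTop hκ
  rcases hsP.eq_or_lt with rfl | hlt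
  · refine squeeze_zero' (g := fun R : ℝ => R ^ (-κ) * M) ?_ ?_ (by simpa using hz.mul_const M)
    · filter_upwards [eventually_ge_atTop 0] with R hR
      exact mul_nonneg (Real.rpow_nonneg hR _) (nB_nonneg _ _ _)
    · filter_upwards [eventually_ge_atTop 0] with R hR
      exact mul_le_mul_of_nonneg_left (HM _) (Real.rpow_nonneg hR _)
  -- the integrals of `|F|^P` over balls increase to a finite limit
  set Φ : ℝ → ℝ := fun τ => ∫ x in ball (0 : E3) τ, |F x| ^ P with hΦ
  have hmono : Monotone Φ := fun a b hab =>
    setIntegral_mono_set (integrableOn_ball_rpow hF hP b)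
      (ae_of_all _ fun x => by positivity) (ball_subset_ball hab).eventuallyLE
  have hbdd : BddAbove (Set.range Φ) := ⟨M ^ P, by
    rintro _ ⟨τ, rfl⟩
    simp only [hΦ]
    rw [← nB_rpow hP]
    exact Real.rpow_le_rpow (nB_nonneg _ _ _) (HM τ) hP.le⟩
  have hlim := tendsto_atTop_ciSup hmono hbdd
  set l := ⨆ τ, Φ τ
  have hle : ∀ τ, Φ τ ≤ l := fun τ => le_ciSup hbdd τ
  -- it suffices to treat the `s`-th power
  suffices H : Tendsto (fun R : ℝ => R ^ (-(κ * s)) * ∫ x in ball (0 : E3) (2 * R), |F x| ^ s) atTop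
      (nhds 0) by
    have H2 := H.rpow_const (p := 1 / s) (Or.inr (by positivity))
    rw [Real.zero_rpow (by positivity)] at H2
    refine H2.congr' ?_
    filter_upwards [eventually_gt_atTop 0] with R hR
    rw [Real.mul_rpow (by positivity) (integral_nonneg fun x => by positivity),
      ← Real.rpow_mul hR.le]
    unfold nB
    congr 2; field_simp
  set w := s / P with hw
  have hw0 : 0 < w := by positivity
  have hw1 : w < 1 := (div_lt_one hP).2 hlt
  have split : ∀ R0 R : ℝ, 1 ≤ R → 0 ≤ R0 → R0 ≤ 2 * R →
      R ^ (-(κ * s)) * ∫ x in ball (0 : E3) (2 * R), |F x| ^ s ≤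
        R ^ (-(κ * s)) * (∫ x in ball (0 : E3) R0, |F x| ^ s)
          + (l - Φ R0) ^ w * (vB * 8) ^ (1 - w) := by
    intro R0 R hR hR0 hRR
    have i2 := integrableOn_ball_rpow hF hs (2 * R)
    have iP := integrableOn_ball_rpow hF hP (2 * R)
    have sub := ball_subset_ball (x := (0 : E3)) hRR
    have e1 := setIntegral_sdiff (μ := volume) (measurableSet_ball (x := (0:E3)) (ε := R0)) i2 sub
    have e2 := setIntegral_sdiff (μ := volume) (measurableSet_ball (x := (0:E3)) (ε := R0)) iP sub
    have H := holder_set hF (by linarith : 0 ≤ 2 * R)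
      (Set.sdiff_subset (s := ball (0 : E3) (2 * R)) (t := ball (0 : E3) R0)) hs hlt
    have h3 : ∫ x in ball (0 : E3) (2 * R) \ ball (0 : E3) R0, |F x| ^ P ≤ l - Φ R0 := by
      rw [e2]; exact sub_le_sub_right (hle _) _
    have h30 : 0 ≤ ∫ x in ball (0 : E3) (2 * R) \ ball (0 : E3) R0, |F x| ^ P :=
      integral_nonneg fun x => by positivity
    have h4 : R ^ (-(κ * s)) * (vB * (2 * R) ^ 3) ^ (1 - w) ≤ (vB * 8) ^ (1 - w) := by
      have : vB * (2 * R) ^ 3 = vB * 8 * R ^ (3:ℝ) := by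
        have e : R ^ (3:ℝ) = R ^ 3 := by norm_cast
        rw [e]; ring
      rw [this, Real.mul_rpow (by positivity) (by positivity), ← Real.rpow_mul (by linarith),
        mul_left_comm, ← Real.rpow_add (by linarith)]
      refine mul_le_of_le_one_right (by positivity) (Real.rpow_le_one_of_one_le_of_nonpos hR ?_)
      have := mul_le_mul_of_nonneg_right hκ2 hs.le
      have e : (3 / s - 3 / P) * s = 3 * (1 - w) := by rw [hw]; field_simp
      linarith
    have h5 : ∫ x in ball (0 : E3) (2 * R), |F x| ^ s = (∫ x in ball (0 : E3) R0, |F x| ^ s)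
        + ∫ x in ball (0 : E3) (2 * R) \ ball (0 : E3) R0, |F x| ^ s := by rw [e1]; ring
    rw [h5, mul_add]
    refine add_le_add le_rfl ?_
    calc R ^ (-(κ * s)) * ∫ x in ball (0 : E3) (2 * R) \ ball (0 : E3) R0, |F x| ^ s
        ≤ R ^ (-(κ * s)) * ((∫ x in ball (0 : E3) (2 * R) \ ball (0 : E3) R0, |F x| ^ P) ^ w
          * (vB * (2 * R) ^ 3) ^ (1 - w)) := mul_le_mul_of_nonneg_left H (by positivity)
      _ = (∫ x in ball (0 : E3) (2 * R) \ ball (0 : E3) R0, |F x| ^ P) ^ w *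
          (R ^ (-(κ * s)) * (vB * (2 * R) ^ 3) ^ (1 - w)) := by ring
      _ ≤ _ := mul_le_mul (Real.rpow_le_rpow h30 h3 hw0.le) h4 (by positivity)
          (Real.rpow_nonneg (h30.trans h3) _)
  rw [Metric.tendsto_atTop]
  intro ε hε
  have t1 : Tendsto (fun R0 => (l - Φ R0) ^ w * (vB * 8) ^ (1 - w)) atTop (nhds 0) := by
    have := ((tendsto_const_nhds (x := l)).sub hlim).rpow_const (p := w) (Or.inr hw0.le)
    rw [sub_self, Real.zero_rpow hw0.ne'] at this
    simpa using this.mul_const ((vB * 8) ^ (1 - w))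
  obtain ⟨R0, hR0, hR0'⟩ := ((t1.eventually (gt_mem_nhds (half_pos hε))).and
    (eventually_ge_atTop 0)).exists
  have t2 : Tendsto (fun R : ℝ => R ^ (-(κ * s)) * ∫ x in ball (0 : E3) R0, |F x| ^ s) atTop
      (nhds 0) := by
    simpa using (tendsto_rpow_neg_atTop (by positivity : 0 < κ * s)).mul_const
      (∫ x in ball (0 : E3) R0, |F x| ^ s)
  obtain ⟨N, hN⟩ := ((t2.eventually (gt_mem_nhds (half_pos hε))).and
    ((eventually_ge_atTop 1).and (eventually_ge_atTop R0))).exists_forall_of_atTop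
  refine ⟨N, fun R hR => ?_⟩
  obtain ⟨a1, a2, a3⟩ := hN R hR
  have := split R0 R a2 hR0' (by linarith)
  have h0 : 0 ≤ R ^ (-(κ * s)) * ∫ x in ball (0 : E3) (2 * R), |F x| ^ s :=
    mul_nonneg (by positivity) (integral_nonneg fun x => by positivity)
  rw [Real.dist_eq, sub_zero, abs_of_nonneg h0]
  linarith

/-! ### Uniform boundedness of the local energy -/

/-- The integrability and exponent conditions on the (norms of the) fields `U`, `V`, `T` and on
their gradient `G` which all ten exponent ranges have in common. -/
structure Config (p q r : ℝ) (U V T G : E3 → ℝ) : Prop where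
  cU : Continuous U
  cV : Continuous V
  cT : Continuous T
  cG : Continuous G
  nU : ∀ x, 0 ≤ U x
  nV : ∀ x, 0 ≤ V x
  nT : ∀ x, 0 ≤ T x
  bU : BddN U p
  bV : BddN V q
  bT : BddN T r
  p1 : 3 / 2 < p
  p2 : p ≤ 9 / 2
  q1 : 1 ≤ q
  q2 : q ≤ 6
  r1 : 3 / 2 ≤ r
  r2 : r ≤ 6
  pq : 2 / 3 ≤ 1 / p + 2 / q
  pr : 2 / 3 ≤ 1 / p + 2 / r
  qr : 2 / 3 ≤ 1 / q + 1 / r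

/-- `t (τ - ρ) τ` grows at most like `R ^ e * Y ^ b` for `R ≤ ρ < τ ≤ 2 * R`, where `Y` bounds the
energy `X τ`, up to a power of `R / (τ - ρ)`. -/
def Gw (X : ℝ → ℝ) (t : ℝ → ℝ → ℝ) (e b : ℝ) : Prop :=
  ∃ C α : ℝ, 0 ≤ C ∧ 0 ≤ α ∧ ∀ R ρ τ Y : ℝ, 1 ≤ R → R ≤ ρ → ρ < τ → τ ≤ 2 * R → 1 ≤ Y → X τ ≤ Y →
    0 ≤ t (τ - ρ) τ ∧ t (τ - ρ) τ ≤ C * (R / (τ - ρ)) ^ α * (R ^ e * Y ^ b)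

section Gw
variable {X : ℝ → ℝ} {t t' : ℝ → ℝ → ℝ} {e e' b b' : ℝ}

lemma Gw.mul (h : Gw X t e b) (h' : Gw X t' e' b') :
    Gw X (fun d τ => t d τ * t' d τ) (e + e') (b + b') := by
  obtain ⟨C, α, hC, hα, H⟩ := h
  obtain ⟨C', α', hC', hα', H'⟩ := h'
  refine ⟨C * C', α + α', by positivity, by positivity, fun R ρ τ Y h1 h2 h3 h4 h5 h6 => ?_⟩
  obtain ⟨a0, a1⟩ := H R ρ τ Y h1 h2 h3 h4 h5 h6
  obtain ⟨c0, c1⟩ := H' R ρ τ Y h1 h2 h3 h4 h5 h6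
  refine ⟨mul_nonneg a0 c0, (mul_le_mul a1 c1 c0 (a0.trans a1)).trans (le_of_eq ?_)⟩
  have hd : 0 < R / (τ - ρ) := div_pos (by linarith) (by linarith)
  rw [Real.rpow_add hd, Real.rpow_add (by linarith : 0 < R), Real.rpow_add (by linarith : 0 < Y)]
  ring

lemma Gw.weaken (h : Gw X t e b) (he : e ≤ e') (hb : b ≤ b') : Gw X t e' b' := by
  obtain ⟨C, α, hC, hα, H⟩ := h
  refine ⟨C, α, hC, hα, fun R ρ τ Y h1 h2 h3 h4 h5 h6 => ?_⟩
  obtain ⟨a0, a1⟩ := H R ρ τ Y h1 h2 h3 h4 h5 h6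
  refine ⟨a0, a1.trans ?_⟩
  have hd : 0 < R / (τ - ρ) := div_pos (by linarith) (by linarith)
  have k1 := Real.rpow_le_rpow_of_exponent_le h1 he
  have k2 := Real.rpow_le_rpow_of_exponent_le h5 hb
  have : 0 ≤ R := by linarith
  gcongr

lemma Gw.add (h : Gw X t e b) (h' : Gw X t' e b) :
    Gw X (fun d τ => t d τ + t' d τ) e b := by
  obtain ⟨C, α, hC, hα, H⟩ := h
  obtain ⟨C', α', hC', hα', H'⟩ := h'
  refine ⟨C + C', α + α', by positivity, by positivity, fun R ρ τ Y h1 h2 h3 h4 h5 h6 => ?_⟩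
  obtain ⟨a0, a1⟩ := H R ρ τ Y h1 h2 h3 h4 h5 h6
  obtain ⟨c0, c1⟩ := H' R ρ τ Y h1 h2 h3 h4 h5 h6
  refine ⟨add_nonneg a0 c0, ?_⟩
  have hd : 1 ≤ R / (τ - ρ) := (one_le_div (by linarith)).2 (by linarith)
  have k1 : (R / (τ - ρ)) ^ α ≤ (R / (τ - ρ)) ^ (α + α') :=
    Real.rpow_le_rpow_of_exponent_le hd (by linarith)
  have k2 : (R / (τ - ρ)) ^ α' ≤ (R / (τ - ρ)) ^ (α + α') :=
    Real.rpow_le_rpow_of_exponent_le hd (by linarith)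
  have hp : 0 ≤ R ^ e * Y ^ b := by
    have : 0 ≤ R := by linarith
    positivity
  have j1 := mul_le_mul_of_nonneg_right (mul_le_mul_of_nonneg_left k1 hC) hp
  have j2 := mul_le_mul_of_nonneg_right (mul_le_mul_of_nonneg_left k2 hC') hp
  have : (C + C') * (R / (τ - ρ)) ^ (α + α') * (R ^ e * Y ^ b) =
    C * (R / (τ - ρ)) ^ (α + α') * (R ^ e * Y ^ b)
      + C' * (R / (τ - ρ)) ^ (α + α') * (R ^ e * Y ^ b) := by ring
  linarith

lemma Gw.mono (h : Gw X t e b) (h0 : ∀ d τ, 0 < d → 0 ≤ t' d τ) (h1 : ∀ d τ, 0 < d → t' d τ ≤ t d τ) :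
    Gw X t' e b := by
  obtain ⟨C, α, hC, hα, H⟩ := h
  exact ⟨C, α, hC, hα, fun R ρ τ Y g1 g2 g3 g4 g5 g6 => ⟨h0 _ _ (by linarith),
    (h1 _ _ (by linarith)).trans (H R ρ τ Y g1 g2 g3 g4 g5 g6).2⟩⟩

lemma Gw_dpow {a : ℝ} (ha : 0 ≤ a) : Gw X (fun d _ => d ^ (-a)) (-a) 0 := by
  refine ⟨1, a, zero_le_one, ha, fun R ρ τ Y h1 h2 h3 h4 h5 h6 => ?_⟩
  have hd : 0 < τ - ρ := by linarith
  have hR : 0 < R := by linarith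
  refine ⟨by positivity, le_of_eq ?_⟩
  change (τ - ρ) ^ (-a) = _
  rw [Real.div_rpow hR.le hd.le, Real.rpow_neg hR.le, Real.rpow_neg hd.le, Real.rpow_zero]
  have : R ^ a ≠ 0 := by positivity
  field_simp

lemma Gw_dinv : Gw X (fun d _ => d⁻¹) (-1) 0 :=
  (Gw_dpow (X := X) zero_le_one).mono (fun d _ hd => by positivity)
    fun d _ _ => by rw [Real.rpow_neg_one]

end Gw

/-- Admissible contributions: bounded in `R`, sublinear in the energy. -/
def Good (X : ℝ → ℝ) (t : ℝ → ℝ → ℝ) : Prop := ∃ b, 0 ≤ b ∧ b < 1 ∧ Gw X t 0 b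

lemma Gw.good {X : ℝ → ℝ} {t : ℝ → ℝ → ℝ} {e b : ℝ} (h : Gw X t e b) (he : e ≤ 0) (hb : 0 ≤ b)
    (hb1 : b < 1) : Good X t := ⟨b, hb, hb1, h.weaken he le_rfl⟩

lemma Good.add {X : ℝ → ℝ} {t t' : ℝ → ℝ → ℝ} (h : Good X t) (h' : Good X t') :
    Good X (fun d τ => t d τ + t' d τ) := by
  obtain ⟨b, hb, hb1, H⟩ := h
  obtain ⟨b', hb', hb1', H'⟩ := h'
  exact ⟨max b b', le_max_of_le_left hb, max_lt hb1 hb1',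
    (H.weaken le_rfl (le_max_left _ _)).add (H'.weaken le_rfl (le_max_right _ _))⟩

lemma Good.mono {X : ℝ → ℝ} {t t' : ℝ → ℝ → ℝ} (h : Good X t) (h0 : ∀ d τ, 0 < d → 0 ≤ t' d τ)
    (h1 : ∀ d τ, 0 < d → t' d τ ≤ t d τ) : Good X t' := by
  obtain ⟨b, hb, hb1, H⟩ := h
  exact ⟨b, hb, hb1, H.mono h0 h1⟩

lemma Gw_G {X : ℝ → ℝ} {G : E3 → ℝ} (h : ∀ τ, nB G 2 τ ^ 2 ≤ X τ) :
    Gw X (fun _ τ => nB G 2 τ) 0 (1 / 2) := by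
  refine ⟨1, 0, zero_le_one, le_rfl, fun R ρ τ Y h1 h2 h3 h4 h5 h6 => ⟨nB_nonneg _ _ _, ?_⟩⟩
  simp only [Real.rpow_zero, ← Real.sqrt_eq_rpow, one_mul]
  exact Real.le_sqrt_of_sq_le ((h τ).trans h6)

lemma Gw_nB {X : ℝ → ℝ} {F : E3 → ℝ} (hF : Continuous F) (h : ∀ τ, nB F 6 τ ^ 2 ≤ X τ) {P s : ℝ}
    (hP : 0 < P) (hb : BddN F P) (hs : 0 < s) (hs6 : s < 6) :
    ∃ b : ℝ, 0 ≤ b ∧ b < 1 / 2 ∧ (s ≤ P → b = 0) ∧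
      Gw X (fun _ τ => nB F s τ) (max 0 (3 / s - 3 / P)) b := by
  obtain ⟨C, b, hC, h0, h1, h2, H⟩ := nB_growth hF hP hb hs hs6
  refine ⟨b, h0, h1, h2, C, 0, hC, le_rfl, fun R ρ τ Y g1 g2 g3 g4 g5 g6 => ⟨nB_nonneg _ _ _, ?_⟩⟩
  rw [Real.rpow_zero, mul_one, ← mul_assoc]
  exact H R τ Y g1 (by linarith) g4 g5 ((h τ).trans g6)

/-- `∫ U F²` by Hölder with exponents `p` and `p'`. -/
lemma holder_sq {U F : E3 → ℝ} (hU : Continuous U) (hF : Continuous F) (nU : ∀ x, 0 ≤ U x)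
    {p s τ : ℝ} (hp : 1 < p) (hs : 0 < s) (h : 1 / p + 2 / s = 1) :
    ∫ x in ball (0 : E3) τ, U x * F x ^ 2 ≤ nB U p τ * nB F s τ ^ 2 := by
  have H := holder2 (g := fun x => F x ^ 2) hU (hF.pow 2) (ρ := τ) hp (b := s / 2) (by rw [one_div_div]; exact h)
  rw [nB_pow_two (by positivity)] at H
  have e : 2 * (s / 2) = s := by ring
  rw [e] at H
  refine le_trans (le_of_eq ?_) H
  congr 1; ext x
  rw [abs_of_nonneg (nU x), abs_of_nonneg (sq_nonneg (F x))]

section Step1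
variable {p q r : ℝ} {U V T G : E3 → ℝ} {X : ℝ → ℝ}

lemma max_le_help {a b c : ℝ} (h1 : a ≤ c) (h2 : a + b ≤ c) : a + max 0 b ≤ c := by
  rcases max_choice 0 b with h | h <;> rw [h] <;> linarith

lemma good_term1 {F : E3 → ℝ} (hF : Continuous F) (h : ∀ τ, nB F 6 τ ^ 2 ≤ X τ)
    (hG : ∀ τ, nB G 2 τ ^ 2 ≤ X τ) {P : ℝ} (hP : 0 < P) (hP6 : P ≤ 6) (hb : BddN F P) :
    Good X (fun d τ => d⁻¹ * nB G 2 τ * nB F 2 τ) := by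
  obtain ⟨b, b0, b1, -, H⟩ := Gw_nB hF h hP hb two_pos (by norm_num)
  have k : (1:ℝ) / 6 ≤ 1 / P := one_div_le_one_div_of_le hP hP6
  refine ((Gw_dinv.mul (Gw_G hG)).mul H).good (max_le_help (by norm_num) ?_) (by linarith) (by linarith)
  rw [div_eq_mul_one_div 3 P]; linarith

lemma good_term2 {F : E3 → ℝ} (hF : Continuous F) (h : ∀ τ, nB F 6 τ ^ 2 ≤ X τ)
    {P : ℝ} (hP : 0 < P) (hP6 : P ≤ 6) (hb : BddN F P) :
    Good X (fun d τ => (d⁻¹) ^ 2 * nB F 2 τ ^ 2) := by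
  obtain ⟨b, b0, b1, -, H⟩ := Gw_nB hF h hP hb two_pos (by norm_num)
  have k : (1:ℝ) / 6 ≤ 1 / P := one_div_le_one_div_of_le hP hP6
  have e : -1 + max 0 (3 / 2 - 3 / P) ≤ 0 := by
    refine max_le_help (by norm_num) ?_
    rw [div_eq_mul_one_div 3 P]; linarith
  refine (((Gw_dinv.mul H).mul (Gw_dinv.mul H)).good (by linarith) (by linarith)
    (by linarith)).mono (fun d τ hd => by positivity) (fun d τ hd => le_of_eq (by ring))

lemma good_term3 {F : E3 → ℝ} (hU : Continuous U) (hF : Continuous F) (nU : ∀ x, 0 ≤ U x)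
    (hUX : ∀ τ, nB U 6 τ ^ 2 ≤ X τ) (h : ∀ τ, nB F 6 τ ^ 2 ≤ X τ) {P : ℝ} (hP : 0 < P)
    (hb : BddN F P) (bU : BddN U p) (p1 : 3 / 2 < p) (p2 : p ≤ 9 / 2)
    (hpP : 2 / 3 ≤ 1 / p + 2 / P) :
    Good X (fun d τ => d⁻¹ * ∫ x in ball (0 : E3) τ, U x * F x ^ 2) := by
  have hp : 0 < p := by linarith
  have hp' : 0 < p - 1 := by linarith
  obtain ⟨b, b0, b1, b2, H⟩ := Gw_nB hU hUX hp bU hp (by linarith)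
  rw [b2 le_rfl, sub_self, max_self] at H
  obtain ⟨b', b0', b1', -, H'⟩ := Gw_nB hF h hP hb (s := 2 * p / (p - 1)) (by positivity)
    (by rw [div_lt_iff₀ hp']; linarith)
  have es : 3 / (2 * p / (p - 1)) = 3 / 2 - 3 / 2 * (1 / p) := by field_simp
  have e : -1 + 2 * max 0 (3 / (2 * p / (p - 1)) - 3 / P) ≤ 0 := by
    rw [es, div_eq_mul_one_div 3 P]
    rw [div_eq_mul_one_div 2 P] at hpP
    rcases max_choice 0 (3 / 2 - 3 / 2 * (1 / p) - 3 * (1 / P)) with h | h <;> rw [h] <;> linarith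
  refine ((Gw_dinv.mul (H.mul (H'.mul H'))).good (by linarith) (by linarith)
    (by linarith)).mono (fun d τ hd => ?_) (fun d τ hd => ?_)
  · exact mul_nonneg (by positivity) (integral_nonneg fun x => mul_nonneg (nU x) (sq_nonneg _))
  · refine mul_le_mul_of_nonneg_left ?_ (by positivity)
    rw [← sq]
    refine holder_sq hU hF nU (by linarith) (by positivity) ?_
    field_simp; ring

lemma good_term4 (hc : Config p q r U V T G)
    (hV : ∀ τ, nB V 6 τ ^ 2 ≤ X τ) :
    Good X (fun d τ => d⁻¹ * ∫ x in ball (0 : E3) τ, T x * V x) := by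
  have r1 := hc.r1
  have r2 := hc.r2
  have hr' : 0 < r - 1 := by linarith
  have hr : 0 < r := by linarith
  have hq : 0 < q := by linarith [hc.q1]
  -- `T` itself is bounded in `L^r`, also when `r = 6`
  obtain ⟨M, hM, HM⟩ := hc.bT
  have H : Gw X (fun _ τ => nB T r τ) 0 0 :=
    ⟨M, 0, hM, le_rfl, fun R ρ τ Y _ _ _ _ _ _ => ⟨nB_nonneg _ _ _, by simpa using HM τ⟩⟩
  obtain ⟨b', b0', b1', -, H'⟩ := Gw_nB hc.cV hV hq hc.bV (s := r / (r - 1)) (by positivity)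
    (by rw [div_lt_iff₀ hr']; linarith)
  have es : 3 / (r / (r - 1)) = 3 - 3 * (1 / r) := by field_simp
  have qr := hc.qr
  have e : -1 + max 0 (3 / (r / (r - 1)) - 3 / q) ≤ 0 := by
    refine max_le_help (by norm_num) ?_
    rw [es, div_eq_mul_one_div 3 q]
    linarith
  refine ((Gw_dinv.mul (H.mul H')).good (by linarith) (by linarith)
    (by linarith)).mono (fun d τ hd => ?_) (fun d τ hd => ?_)
  · exact mul_nonneg (by positivity) (integral_nonneg fun x => mul_nonneg (hc.nT x) (hc.nV x))
  · refine mul_le_mul_of_nonneg_left ?_ (by positivity)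
    have := holder2 hc.cT hc.cV (ρ := τ) (by linarith : 1 < r) (b := r / (r - 1))
      (by field_simp; ring)
    simpa only [abs_of_nonneg (hc.nT _), abs_of_nonneg (hc.nV _)] using this

lemma integral_cubic (hc : Config p q r U V T G) (τ : ℝ) :
    ∫ x in ball (0 : E3) τ, U x * (U x ^ 2 + V x ^ 2 + T x ^ 2) =
      (∫ x in ball (0 : E3) τ, U x * U x ^ 2) + (∫ x in ball (0 : E3) τ, U x * V x ^ 2)
        + ∫ x in ball (0 : E3) τ, U x * T x ^ 2 := by
  have i1 := integrableOn_ball (f := fun x => U x * U x ^ 2) (hc.cU.mul (hc.cU.pow 2)) τ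
  have i2 := integrableOn_ball (f := fun x => U x * V x ^ 2) (hc.cU.mul (hc.cV.pow 2)) τ
  have i3 := integrableOn_ball (f := fun x => U x * T x ^ 2) (hc.cU.mul (hc.cT.pow 2)) τ
  have i12 := integrableOn_ball (f := fun x => U x * U x ^ 2 + U x * V x ^ 2)
    ((hc.cU.mul (hc.cU.pow 2)).add (hc.cU.mul (hc.cV.pow 2))) τ
  rw [← integral_add i1 i2, ← integral_add i12 i3]
  congr 1; ext x; ring

/-- The pressure-free terms are admissible. -/
lemma good_bse (hc : Config p q r U V T G) (hX : ∀ τ, Xen U V T G τ ≤ X τ) :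
    Good X (fun d τ => bse U V T G d τ) := by
  have xG : ∀ τ, nB G 2 τ ^ 2 ≤ X τ := fun τ => le_trans (by unfold Xen; nlinarith [sq_nonneg (nB U 6 τ), sq_nonneg (nB V 6 τ), sq_nonneg (nB T 6 τ)]) (hX τ)
  have xU : ∀ τ, nB U 6 τ ^ 2 ≤ X τ := fun τ => le_trans (by unfold Xen; nlinarith [sq_nonneg (nB G 2 τ), sq_nonneg (nB V 6 τ), sq_nonneg (nB T 6 τ)]) (hX τ)
  have xV : ∀ τ, nB V 6 τ ^ 2 ≤ X τ := fun τ => le_trans (by unfold Xen; nlinarith [sq_nonneg (nB G 2 τ), sq_nonneg (nB U 6 τ), sq_nonneg (nB T 6 τ)]) (hX τ)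
  have xT : ∀ τ, nB T 6 τ ^ 2 ≤ X τ := fun τ => le_trans (by unfold Xen; nlinarith [sq_nonneg (nB G 2 τ), sq_nonneg (nB U 6 τ), sq_nonneg (nB V 6 τ)]) (hX τ)
  have p1 := hc.p1
  have p2 := hc.p2
  have hp : 0 < p := by linarith
  have hq : 0 < q := by linarith [hc.q1]
  have hr : 0 < r := by linarith [hc.r1]
  have hpp : 2 / 3 ≤ 1 / p + 2 / p := by
    rw [← add_div, div_le_div_iff₀ (by norm_num) hp]; linarith
  have t1 := ((good_term1 hc.cU xU xG hp (by linarith) hc.bU).add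
    (good_term1 hc.cV xV xG hq hc.q2 hc.bV)).add (good_term1 hc.cT xT xG hr hc.r2 hc.bT)
  have t2 := ((good_term2 hc.cU xU hp (by linarith) hc.bU).add
    (good_term2 hc.cV xV hq hc.q2 hc.bV)).add (good_term2 hc.cT xT hr hc.r2 hc.bT)
  have t3 := ((good_term3 hc.cU hc.cU hc.nU xU xU hp hc.bU hc.bU p1 p2 hpp).add
    (good_term3 hc.cU hc.cV hc.nU xU xV hq hc.bV hc.bU p1 p2 hc.pq)).add
    (good_term3 hc.cU hc.cT hc.nU xU xT hr hc.bT hc.bU p1 p2 hc.pr)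
  have t4 := good_term4 hc xV
  refine (((t1.add t2).add t3).add t4).mono (fun d τ hd => bse_nonneg hc.nU hc.nV hc.nT hd)
    (fun d τ hd => le_of_eq ?_)
  unfold bse
  rw [integral_cubic hc]
  ring

/-- For `p ≥ 3` the first form of the pressure contribution is admissible. -/
lemma good_wA (hc : Config p q r U V T G) (hX : ∀ τ, Xen U V T G τ ≤ X τ) (hp3 : 3 ≤ p) :
    Good X (fun d τ => wA U V d τ) := by
  have xU : ∀ τ, nB U 6 τ ^ 2 ≤ X τ := fun τ => le_trans (by unfold Xen; nlinarith [sq_nonneg (nB G 2 τ), sq_nonneg (nB V 6 τ), sq_nonneg (nB T 6 τ)]) (hX τ)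
  have xV : ∀ τ, nB V 6 τ ^ 2 ≤ X τ := fun τ => le_trans (by unfold Xen; nlinarith [sq_nonneg (nB G 2 τ), sq_nonneg (nB U 6 τ), sq_nonneg (nB T 6 τ)]) (hX τ)
  have p2 := hc.p2
  have hp : 0 < p := by linarith
  have hq : 0 < q := by linarith [hc.q1]
  have hpp : 2 / 3 ≤ 1 / p + 2 / p := by
    rw [← add_div, div_le_div_iff₀ (by norm_num) hp]; linarith
  have k1 : 1 / p ≤ 1 / 3 := one_div_le_one_div_of_le (by norm_num) hp3
  have k2 : 2 / 9 ≤ 1 / p := by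
    have := one_div_le_one_div_of_le hp p2
    norm_num at this ⊢
    exact this
  obtain ⟨b, b0, b1, b2, H⟩ := Gw_nB hc.cU xU hp hc.bU two_pos (by norm_num)
  rw [b2 (by linarith)] at H
  have key : ∀ {F : E3 → ℝ} {P : ℝ}, Continuous F → (∀ τ, nB F 6 τ ^ 2 ≤ X τ) → 0 < P → BddN F P →
      2 / 3 ≤ 1 / p + 2 / P → Good X (fun d τ => d⁻¹ * nB U 2 τ * nB F 4 τ ^ 2) := by
    intro F P hF xF hP hb hpP
    obtain ⟨b', b0', b1', -, H'⟩ := Gw_nB hF xF hP hb (s := 4) (by norm_num) (by norm_num)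
    have e : -1 + max 0 (3 / 2 - 3 / p) + 2 * max 0 (3 / 4 - 3 / P) ≤ 0 := by
      rw [div_eq_mul_one_div 3 P, div_eq_mul_one_div 3 p]
      rw [div_eq_mul_one_div 2 P] at hpP
      rcases max_choice 0 (3 / 2 - 3 * (1 / p)) with h | h <;>
      rcases max_choice 0 (3 / 4 - 3 * (1 / P)) with h' | h' <;> rw [h, h'] <;> linarith
    exact (((Gw_dinv.mul H).mul (H'.mul H')).good (by linarith) (by linarith)
      (by linarith)).mono (fun d τ hd => mul_nonneg (mul_nonneg (by positivity) (nB_nonneg _ _ _))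
        (sq_nonneg _)) (fun d τ hd => le_of_eq (by ring))
  exact ((key hc.cU xU hp hc.bU hpp).add (key hc.cV xV hq hc.bV hc.pq)).mono
    (fun d τ hd => wA_nonneg _ _ _ hd) (fun d τ hd => le_of_eq (by unfold wA; ring))

/-- For `p < 3` the second form of the pressure contribution is admissible. -/
lemma good_wB (hc : Config p q r U V T G) (hX : ∀ τ, Xen U V T G τ ≤ X τ) (hp3 : p < 3) :
    Good X (fun d τ => wB p U V G d τ) := by
  have xG : ∀ τ, nB G 2 τ ^ 2 ≤ X τ := fun τ => le_trans (by unfold Xen; nlinarith [sq_nonneg (nB U 6 τ), sq_nonneg (nB V 6 τ), sq_nonneg (nB T 6 τ)]) (hX τ)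
  have xU : ∀ τ, nB U 6 τ ^ 2 ≤ X τ := fun τ => le_trans (by unfold Xen; nlinarith [sq_nonneg (nB G 2 τ), sq_nonneg (nB V 6 τ), sq_nonneg (nB T 6 τ)]) (hX τ)
  have xV : ∀ τ, nB V 6 τ ^ 2 ≤ X τ := fun τ => le_trans (by unfold Xen; nlinarith [sq_nonneg (nB G 2 τ), sq_nonneg (nB U 6 τ), sq_nonneg (nB T 6 τ)]) (hX τ)
  have p1 := hc.p1
  have hp : 0 < p := by linarith
  have hp' : 0 < p - 1 := by linarith
  have hq : 0 < q := by linarith [hc.q1]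
  have k1 : 1 / 3 < 1 / p := one_div_lt_one_div_of_lt hp hp3
  obtain ⟨b, b0, b1, b2, H⟩ := Gw_nB hc.cU xU hp hc.bU hp (by linarith)
  rw [b2 le_rfl, sub_self, max_self] at H
  have es : 3 / (2 * p / (p - 1)) = 3 / 2 - 3 / 2 * (1 / p) := by field_simp
  have ed : 3 / (2 * p) = 3 / 2 * (1 / p) := by field_simp
  have key : ∀ {F : E3 → ℝ} {P : ℝ}, Continuous F → (∀ τ, nB F 6 τ ^ 2 ≤ X τ) → 0 < P → P ≤ 6 →
      BddN F P → Good X (fun d τ => nB G 2 τ * nB F (2 * p / (p - 1)) τ * nB U p τ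
        * d ^ (-(3 / (2 * p)))) := by
    intro F P hF xF hP hP6 hb
    have k : (1:ℝ) / 6 ≤ 1 / P := one_div_le_one_div_of_le hP hP6
    obtain ⟨b', b0', b1', -, H'⟩ := Gw_nB hF xF hP hb (s := 2 * p / (p - 1)) (by positivity)
      (by rw [div_lt_iff₀ hp']; linarith)
    have hd := Gw_dpow (X := X) (a := 3 / (2 * p)) (by positivity)
    refine ((((Gw_G xG).mul H').mul H).mul hd).good ?_ (by linarith) (by linarith)
    rw [es, ed, div_eq_mul_one_div 3 P]
    rcases max_choice 0 (3 / 2 - 3 / 2 * (1 / p) - 3 * (1 / P)) with h | h <;> rw [h] <;> linarith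
  exact ((key hc.cU xU hp (by linarith) hc.bU).add (key hc.cV xV hq hc.q2 hc.bV)).mono
    (fun d τ hd => wB_nonneg _ _ _ _ _ hd) (fun d τ hd => le_of_eq (by unfold wB; ring))

/-- Absorption by iteration: a quantity which is controlled on `B_ρ` by a sublinear power of its
value on a larger ball, with polynomial loss in the relative gap, is bounded. -/
lemma iterate_bound {t : ℝ → ℝ → ℝ} {C : ℝ} (hC : 0 ≤ C) (hmono : Monotone X) (h0 : ∀ ρ, 0 ≤ X ρ)
    (hg : Good X t) (hX : ∀ ρ τ, 0 < ρ → ρ < τ → X ρ ≤ C * t (τ - ρ) τ) :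
    ∃ K, ∀ R, 1 ≤ R → X R ≤ K := by
  obtain ⟨β, hβ, hβ1, K, α, hK, hα, H⟩ := hg
  have hb : 0 < 1 - β := by linarith
  -- the constants of the recursion for the logarithms
  set a : ℝ := Real.log (1 + C * K * 2 ^ α) with ha
  set c : ℝ := α * Real.log 2 with hc
  set D : ℝ := c / (1 - β) with hD
  set A : ℝ := (a + β * D) / (1 - β) with hA
  have hD' : D * (1 - β) = c := div_mul_cancel₀ _ hb.ne'
  have hA' : A * (1 - β) = a + β * D := div_mul_cancel₀ _ hb.ne'
  have hCK : 0 ≤ C * K := by positivity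
  have h2α : (0:ℝ) < 2 ^ α := by positivity
  have ha0 : 0 ≤ a := Real.log_nonneg (by nlinarith [mul_nonneg hCK h2α.le])
  have hc0 : 0 ≤ c := mul_nonneg hα (Real.log_nonneg (by norm_num))
  have hD0 : 0 ≤ D := div_nonneg hc0 hb.le
  have hA0 : 0 ≤ A := div_nonneg (by positivity) hb.le
  refine ⟨Real.exp A, fun R hR => ?_⟩
  set ρ : ℕ → ℝ := fun k => R * (2 - (1 / 2) ^ k) with hρ
  set z : ℕ → ℝ := fun k => Real.log (1 + X (ρ k)) with hz
  have hz0 : ∀ k, 0 ≤ z k := fun k => Real.log_nonneg (by linarith [h0 (ρ k)])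
  have pk : ∀ k : ℕ, (0:ℝ) < (1 / 2) ^ k ∧ ((1:ℝ) / 2) ^ k ≤ 1 := fun k =>
    ⟨by positivity, pow_le_one₀ (by norm_num) (by norm_num)⟩
  have hρ2 : ∀ k, ρ k ≤ 2 * R := fun k => by simp only [hρ]; nlinarith [pk k]
  have hρ1 : ∀ k, R ≤ ρ k := fun k => by simp only [hρ]; nlinarith [pk k]
  have hzb : ∀ k, z k ≤ Real.log (1 + X (2 * R)) := fun k =>
    Real.log_le_log (by linarith [h0 (ρ k)]) (by linarith [hmono (hρ2 k)])
  have hrec : ∀ k, z k ≤ a + c * k + β * z (k + 1) := by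
    intro k
    have hgap : ρ (k + 1) - ρ k = R * (1 / 2) ^ (k + 1) := by simp only [hρ]; ring
    have hlt : ρ k < ρ (k + 1) := by
      have : 0 < R * (1 / 2 : ℝ) ^ (k + 1) := mul_pos (by linarith) (pk _).1
      linarith
    set Y := 1 + X (ρ (k + 1)) with hY
    have hY1 : 1 ≤ Y := by linarith [h0 (ρ (k + 1))]
    have h1 := (H R (ρ k) (ρ (k + 1)) Y hR (hρ1 k) hlt (hρ2 _) hY1 (by linarith)).2
    have h2 := hX (ρ k) (ρ (k + 1)) (by linarith [hρ1 k]) hlt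
    have e : R / (ρ (k + 1) - ρ k) = 2 ^ ((k:ℝ) + 1) := by
      rw [hgap, ← div_div, div_self (by linarith), one_div, one_div, inv_pow, inv_inv,
        ← Real.rpow_natCast]
      push_cast; rfl
    rw [e, Real.rpow_zero, one_mul, ← Real.rpow_mul (by norm_num)] at h1
    have e2 : (2:ℝ) ^ (((k:ℝ) + 1) * α) = 2 ^ α * 2 ^ (α * k) := by
      rw [← Real.rpow_add (by norm_num)]; congr 1; ring
    rw [e2] at h1
    have h3 : X (ρ k) ≤ C * K * 2 ^ α * 2 ^ (α * k) * Y ^ β := by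
      refine h2.trans ((mul_le_mul_of_nonneg_left h1 hC).trans (le_of_eq (by ring)))
    have g1 : (1:ℝ) ≤ 2 ^ (α * k) := Real.one_le_rpow (by norm_num) (by positivity)
    have g2 : 1 ≤ Y ^ β := Real.one_le_rpow hY1 hβ
    have g3 : 1 ≤ (2:ℝ) ^ (α * k) * Y ^ β := one_le_mul_of_one_le_of_one_le g1 g2
    have h4 : 1 + X (ρ k) ≤ (1 + C * K * 2 ^ α) * (2 ^ (α * k) * Y ^ β) := by
      rw [add_mul]; linarith
    have h5 := Real.log_le_log (by linarith [h0 (ρ k)]) h4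
    have q1 : 0 < 1 + C * K * 2 ^ α := by positivity
    rw [Real.log_mul q1.ne' (by positivity), Real.log_mul (by positivity) (by positivity),
      Real.log_rpow (by norm_num), Real.log_rpow (by linarith)] at h5
    have : α * k * Real.log 2 = c * k := by rw [hc]; ring
    simp only [hz]
    linarith
  have step : ∀ k : ℕ, z k - (A + D * k) ≤ β * (z (k + 1) - (A + D * (k + 1 : ℕ))) := by
    intro k
    have := hrec k
    push_cast
    have e1 : c * k = D * (1 - β) * k := by rw [hD']
    nlinarith
  have it : ∀ n : ℕ, z 0 - A ≤ β ^ n * (z n - (A + D * n)) := by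
    intro n
    induction n with
    | zero => simp
    | succ n ih =>
      refine ih.trans ?_
      rw [pow_succ, mul_assoc]
      exact mul_le_mul_of_nonneg_left (step n) (by positivity)
  have lim : Tendsto (fun n : ℕ => β ^ n * Real.log (1 + X (2 * R))) atTop (nhds 0) := by
    simpa using (tendsto_pow_atTop_nhds_zero_of_lt_one hβ hβ1).mul_const (Real.log (1 + X (2 * R)))
  have fin : z 0 - A ≤ 0 := by
    refine ge_of_tendsto' lim fun n => (it n).trans ?_
    refine mul_le_mul_of_nonneg_left ?_ (by positivity)
    have : 0 ≤ D * n := by positivity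
    linarith [hzb n]
  have hz00 : z 0 = Real.log (1 + X R) := by simp only [hz, hρ]; norm_num
  rw [hz00] at fin
  have := (Real.log_le_iff_le_exp (by linarith [h0 R])).1 (sub_nonpos.1 fin)
  linarith

end Step1

/-! ### Vanishing of the energy -/

lemma squeeze_mul {f g : ℝ → ℝ} (M : ℝ) (hg : Tendsto g atTop (nhds 0))
    (h : ∀ R, 1 ≤ R → 0 ≤ f R ∧ f R ≤ M * g R) : Tendsto f atTop (nhds 0) := by
  refine squeeze_zero' (g := fun R => M * g R) ?_ ?_ (by simpa using hg.const_mul M)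
  · filter_upwards [eventually_ge_atTop 1] with R hR using (h R hR).1
  · filter_upwards [eventually_ge_atTop 1] with R hR using (h R hR).2

section Step2
variable {p q r : ℝ} {U V T G : E3 → ℝ}

lemma little_one {F : E3 → ℝ} (hF : Continuous F) {P s : ℝ} (hs : 0 < s) (hsP : s ≤ P)
    (h : BddN F P) (hκ2 : 3 / s - 3 / P ≤ 1) :
    Tendsto (fun R : ℝ => R⁻¹ * nB F s (2 * R)) atTop (nhds 0) := by
  simpa only [Real.rpow_neg_one] using nB_little hF hs hsP h one_pos hκ2

lemma little_two {F : E3 → ℝ} (hF : Continuous F) (h : BddN F 6) :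
    Tendsto (fun R : ℝ => R⁻¹ * nB F 2 (2 * R)) atTop (nhds 0) :=
  little_one hF two_pos (by norm_num) h (by norm_num)

lemma lim_term1 {F : E3 → ℝ} (hF : Continuous F) (h : BddN F 6) (hG : BddN G 2) :
    Tendsto (fun R : ℝ => R⁻¹ * nB G 2 (2 * R) * nB F 2 (2 * R)) atTop (nhds 0) := by
  obtain ⟨M, hM, H⟩ := hG
  refine squeeze_mul M (little_two hF h) fun R hR => ?_
  have g := nB_nonneg G 2 (2 * R)
  have f := nB_nonneg F 2 (2 * R)
  have hR0 : 0 < R := by linarith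
  refine ⟨by positivity, ?_⟩
  calc R⁻¹ * nB G 2 (2 * R) * nB F 2 (2 * R) = nB G 2 (2 * R) * (R⁻¹ * nB F 2 (2 * R)) := by ring
    _ ≤ _ := mul_le_mul_of_nonneg_right (H _) (by positivity)

lemma lim_term2 {F : E3 → ℝ} (hF : Continuous F) (h : BddN F 6) :
    Tendsto (fun R : ℝ => (R⁻¹) ^ 2 * nB F 2 (2 * R) ^ 2) atTop (nhds 0) := by
  simpa [mul_pow] using (little_two hF h).pow 2

lemma exp_aux {P : ℝ} (hp : 0 < p) (hP : 0 < P) (p2 : p ≤ 9 / 2) (hP6 : P ≤ 6)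
    (h : 2 / 3 ≤ 1 / p + 2 / P) {P0 : ℝ} (h3 : 3 ≤ P0) (h4 : P0 ≤ 4) :
    2 / 3 ≤ 1 / max p 3 + 2 / max P P0 := by
  have a1 : 2 / 9 ≤ 1 / p := by
    rw [div_le_div_iff₀ (by norm_num) hp]; linarith
  have a2 : 1 / 3 ≤ 2 / P := by
    rw [div_le_div_iff₀ (by norm_num) hP]; linarith
  have a3 : 1 / 2 ≤ 2 / P0 := by
    rw [div_le_div_iff₀ (by norm_num) (by linarith)]; linarith
  rcases max_choice p 3 with h | h <;> rcases max_choice P P0 with h' | h' <;> rw [h, h'] <;>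
    linarith

lemma lim_term3 {F : E3 → ℝ} (hU : Continuous U) (hF : Continuous F) (nU : ∀ x, 0 ≤ U x)
    {P : ℝ} (hP : 0 < P) (hP6 : P ≤ 6)
    (hb : BddN F P) (hb6 : BddN F 6) (bU : BddN U p) (bU6 : BddN U 6) (p1 : 3 / 2 < p)
    (p2 : p ≤ 9 / 2) (hpP : 2 / 3 ≤ 1 / p + 2 / P) :
    Tendsto (fun R : ℝ => R⁻¹ * ∫ x in ball (0 : E3) (2 * R), U x * F x ^ 2) atTop (nhds 0) := by
  have hp : 0 < p := by linarith
  have key := exp_aux hp hP p2 hP6 hpP le_rfl (by norm_num)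
  set p₁ := max p 3 with hp₁
  set P₁ := max P 3 with hP₁
  have e1 : 3 ≤ p₁ := le_max_right _ _
  have e2 : 3 ≤ P₁ := le_max_right _ _
  have bU' : BddN U p₁ := bU.interp hU hp bU6 (le_max_left _ _) (max_le (by linarith) (by norm_num))
  have bF' : BddN F P₁ := hb.interp hF hP hb6 (le_max_left _ _) (max_le hP6 (by norm_num))
  obtain ⟨M, hM, H⟩ := bF'
  have hP₁2 : 0 < P₁ - 2 := by linarith
  have hs : 0 < P₁ / (P₁ - 2) := div_pos (by linarith) hP₁2
  have es : 3 / (P₁ / (P₁ - 2)) = 3 - 6 * (1 / P₁) := by field_simp; ring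
  have L := little_one hU (P := p₁) (s := P₁ / (P₁ - 2)) hs
    (le_trans (by rw [div_le_iff₀ hP₁2]; linarith) e1) bU' (by
      rw [es, div_eq_mul_one_div 3]; rw [div_eq_mul_one_div 2 P₁] at key; linarith)
  refine squeeze_mul (M ^ 2) L fun R hR => ?_
  have hR0 : 0 < R := by linarith
  refine ⟨mul_nonneg (by positivity) (integral_nonneg fun x => mul_nonneg (nU x) (sq_nonneg _)), ?_⟩
  have h1 := holder_sq hU hF nU (p := P₁ / (P₁ - 2)) (s := P₁) (τ := 2 * R)
    ((one_lt_div hP₁2).2 (by linarith)) (by linarith) (by field_simp; ring)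
  have n1 := nB_nonneg F P₁ (2 * R)
  have n2 := nB_nonneg U (P₁ / (P₁ - 2)) (2 * R)
  have h2 : nB F P₁ (2 * R) ^ 2 ≤ M ^ 2 := pow_le_pow_left₀ n1 (H _) 2
  calc _ ≤ R⁻¹ * (nB U (P₁ / (P₁ - 2)) (2 * R) * nB F P₁ (2 * R) ^ 2) :=
        mul_le_mul_of_nonneg_left h1 (by positivity)
    _ ≤ R⁻¹ * (nB U (P₁ / (P₁ - 2)) (2 * R) * M ^ 2) := by gcongr
    _ = _ := by ring

lemma lim_term4 (hc : Config p q r U V T G) (bV6 : BddN V 6) (bT6 : BddN T 6) :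
    Tendsto (fun R : ℝ => R⁻¹ * ∫ x in ball (0 : E3) (2 * R), T x * V x) atTop (nhds 0) := by
  have hr : 0 < r := by linarith [hc.r1]
  have hq : 0 < q := by linarith [hc.q1]
  have q6 := hc.q2
  have r6 := hc.r2
  have key : 2 / 3 ≤ 1 / max r 2 + 1 / max q 2 := by
    have a1 : 1 / 6 ≤ 1 / q := one_div_le_one_div_of_le hq hc.q2
    have a2 : 1 / 6 ≤ 1 / r := one_div_le_one_div_of_le hr hc.r2
    have a3 := hc.qr
    rcases max_choice r 2 with h | h <;> rcases max_choice q 2 with h' | h' <;> rw [h, h'] <;>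
      linarith
  set r₁ := max r 2 with hr₁
  set q₁ := max q 2 with hq₁
  have e1 : 2 ≤ r₁ := le_max_right _ _
  have e2 : 2 ≤ q₁ := le_max_right _ _
  obtain ⟨M, hM, H⟩ := hc.bT.interp hc.cT hr bT6 (le_max_left r 2) (max_le r6 (by norm_num))
  have bV' := hc.bV.interp hc.cV hq bV6 (le_max_left q 2) (max_le q6 (by norm_num))
  have hr₁1 : 0 < r₁ - 1 := by linarith
  have es : 3 / (r₁ / (r₁ - 1)) = 3 - 3 * (1 / r₁) := by field_simp
  have L := little_one hc.cV (P := q₁) (s := r₁ / (r₁ - 1)) (div_pos (by linarith) hr₁1)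
    (le_trans (by rw [div_le_iff₀ hr₁1]; linarith) e2) bV' (by
      rw [es, div_eq_mul_one_div 3]; linarith)
  refine squeeze_mul M L fun R hR => ?_
  have hR0 : 0 < R := by linarith
  refine ⟨mul_nonneg (by positivity) (integral_nonneg fun x => mul_nonneg (hc.nT x) (hc.nV x)), ?_⟩
  have h1 := holder2 hc.cT hc.cV (ρ := 2 * R) (by linarith : 1 < r₁) (b := r₁ / (r₁ - 1))
    (by field_simp; ring)
  simp only [abs_of_nonneg (hc.nT _), abs_of_nonneg (hc.nV _)] at h1
  have n2 := nB_nonneg V (r₁ / (r₁ - 1)) (2 * R)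
  calc _ ≤ R⁻¹ * (nB T r₁ (2 * R) * nB V (r₁ / (r₁ - 1)) (2 * R)) :=
        mul_le_mul_of_nonneg_left h1 (by positivity)
    _ ≤ R⁻¹ * (M * nB V (r₁ / (r₁ - 1)) (2 * R)) := by
        have := H (2 * R)
        gcongr
    _ = _ := by ring

lemma lim_wA {F : E3 → ℝ} (hU : Continuous U) (hF : Continuous F)
    {P : ℝ} (hP : 0 < P) (hP6 : P ≤ 6)
    (hb : BddN F P) (hb6 : BddN F 6) (bU : BddN U p) (bU6 : BddN U 6) (p1 : 3 / 2 < p)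
    (p2 : p ≤ 9 / 2) (hpP : 2 / 3 ≤ 1 / p + 2 / P) :
    Tendsto (fun R : ℝ => R⁻¹ * nB U 2 (2 * R) * nB F 4 (2 * R) ^ 2) atTop (nhds 0) := by
  have hp : 0 < p := by linarith
  have key := exp_aux hp hP p2 hP6 hpP (P0 := 4) (by norm_num) le_rfl
  set p₁ := max p 3 with hp₁
  set P₁ := max P 4 with hP₁
  have e1 : 3 ≤ p₁ := le_max_right _ _
  have e2 : 4 ≤ P₁ := le_max_right _ _
  have e3 : P₁ ≤ 6 := max_le hP6 (by norm_num)
  have bU' : BddN U p₁ := bU.interp hU hp bU6 (le_max_left _ _) (max_le (by linarith) (by norm_num))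
  obtain ⟨M, hM, H⟩ := hb.interp hF hP hb6 (le_max_left P 4) e3
  have k6 : 1 / 6 ≤ 1 / P₁ := one_div_le_one_div_of_le (by linarith) e3
  have k4 : 1 / P₁ ≤ 1 / 4 := one_div_le_one_div_of_le (by norm_num) e2
  have L := nB_little hU (P := p₁) (s := 2) (κ := 6 * (1 / P₁) - 1 / 2) two_pos (by linarith) bU'
    (by linarith) (by
      rw [div_eq_mul_one_div 3 p₁]; rw [div_eq_mul_one_div 2 P₁] at key; linarith)
  have hv := vB_nonneg
  refine squeeze_mul ((M * (vB * 8) ^ (1 / 4 - 1 / P₁)) ^ 2) L fun R hR => ?_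
  have hR0 : 0 < R := by linarith
  have n1 := nB_nonneg U 2 (2 * R)
  have n2 := nB_nonneg F 4 (2 * R)
  refine ⟨by positivity, ?_⟩
  have h1 := nB_le_of_le hF (s := 4) (by norm_num) e2 (by linarith : 0 ≤ 2 * R)
  have ev : vB * (2 * R) ^ 3 = vB * 8 * R ^ (3:ℝ) := by
    have e : R ^ (3:ℝ) = R ^ 3 := by norm_cast
    rw [e]; ring
  rw [ev, Real.mul_rpow (by positivity) (by positivity), ← Real.rpow_mul hR0.le] at h1
  have h2 : nB F 4 (2 * R) ≤ M * (vB * 8) ^ (1 / 4 - 1 / P₁) * R ^ (3 * (1 / 4 - 1 / P₁)) := by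
    refine h1.trans ?_
    rw [mul_assoc]
    exact mul_le_mul_of_nonneg_right (H _) (by positivity)
  have h3 := pow_le_pow_left₀ n2 h2 2
  rw [mul_pow _ (R ^ (3 * (1 / 4 - 1 / P₁)))] at h3
  have er : R⁻¹ * (R ^ (3 * (1 / 4 - 1 / P₁))) ^ 2 = R ^ (-(6 * (1 / P₁) - 1 / 2)) := by
    rw [← Real.rpow_neg_one, ← Real.rpow_natCast, ← Real.rpow_mul hR0.le, ← Real.rpow_add hR0]
    congr 1; push_cast; ring
  calc _ ≤ R⁻¹ * nB U 2 (2 * R) * ((M * (vB * 8) ^ (1 / 4 - 1 / P₁)) ^ 2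
        * (R ^ (3 * (1 / 4 - 1 / P₁))) ^ 2) := by gcongr
    _ = (M * (vB * 8) ^ (1 / 4 - 1 / P₁)) ^ 2 * ((R⁻¹ * (R ^ (3 * (1 / 4 - 1 / P₁))) ^ 2)
        * nB U 2 (2 * R)) := by ring
    _ = _ := by rw [er]

lemma Xen_mono (hc : Config p q r U V T G) : Monotone (Xen U V T G) := by
  intro a b hab
  have h : ∀ {F : E3 → ℝ} {s : ℝ}, Continuous F → 0 < s → nB F s a ^ 2 ≤ nB F s b ^ 2 :=
    fun hF hs => pow_le_pow_left₀ (nB_nonneg _ _ _) (nB_mono hF hs hab) 2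
  have h1 := h hc.cG two_pos
  have h2 := h hc.cU (s := 6) (by norm_num)
  have h3 := h hc.cV (s := 6) (by norm_num)
  have h4 := h hc.cT (s := 6) (by norm_num)
  unfold Xen
  linarith

lemma Xen_nonneg (ρ : ℝ) : 0 ≤ Xen U V T G ρ := by unfold Xen; positivity

lemma bddN_of_sq {F : E3 → ℝ} {s K : ℝ} (hF : Continuous F) (hs : 0 < s)
    (h : ∀ R, 1 ≤ R → nB F s R ^ 2 ≤ K) : BddN F s := by
  refine ⟨Real.sqrt K, Real.sqrt_nonneg _, fun τ => ?_⟩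
  exact (nB_mono hF hs (le_max_left τ 1)).trans (Real.le_sqrt_of_sq_le (h _ (le_max_right _ _)))

/-- The energy vanishes: by the iteration it is globally finite, and then every term on the right
of the energy inequality on `B_{2R}` tends to zero. -/
lemma Xen_zero (hc : Config p q r U V T G) {C : ℝ} (hC : 0 ≤ C)
    (hE : ∀ ρ τ, 0 < ρ → ρ < τ →
      Xen U V T G ρ ≤ C * (bse U V T G (τ - ρ) τ + wA U V (τ - ρ) τ) ∧
      Xen U V T G ρ ≤ C * (bse U V T G (τ - ρ) τ + wB p U V G (τ - ρ) τ)) (ρ : ℝ) :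
    Xen U V T G ρ = 0 := by
  have hmono := Xen_mono hc
  have hbound : ∃ K, ∀ R, 1 ≤ R → Xen U V T G R ≤ K := by
    rcases le_or_gt 3 p with hp3 | hp3
    · exact iterate_bound hC hmono Xen_nonneg
        ((good_bse hc fun τ => le_rfl).add (good_wA hc (fun τ => le_rfl) hp3))
        fun ρ τ h1 h2 => (hE ρ τ h1 h2).1
    · exact iterate_bound hC hmono Xen_nonneg
        ((good_bse hc fun τ => le_rfl).add (good_wB hc (fun τ => le_rfl) hp3))
        fun ρ τ h1 h2 => (hE ρ τ h1 h2).2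
  obtain ⟨K, hK⟩ := hbound
  have bG : BddN G 2 := bddN_of_sq hc.cG two_pos fun R hR => le_trans (by unfold Xen; linarith [sq_nonneg (nB U 6 R), sq_nonneg (nB V 6 R), sq_nonneg (nB T 6 R)]) (hK R hR)
  have bU6 : BddN U 6 := bddN_of_sq hc.cU (by norm_num) fun R hR => le_trans (by unfold Xen; linarith [sq_nonneg (nB G 2 R), sq_nonneg (nB V 6 R), sq_nonneg (nB T 6 R)]) (hK R hR)
  have bV6 : BddN V 6 := bddN_of_sq hc.cV (by norm_num) fun R hR => le_trans (by unfold Xen; linarith [sq_nonneg (nB G 2 R), sq_nonneg (nB U 6 R), sq_nonneg (nB T 6 R)]) (hK R hR)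
  have bT6 : BddN T 6 := bddN_of_sq hc.cT (by norm_num) fun R hR => le_trans (by unfold Xen; linarith [sq_nonneg (nB G 2 R), sq_nonneg (nB U 6 R), sq_nonneg (nB V 6 R)]) (hK R hR)
  have p1 := hc.p1
  have p2 := hc.p2
  have hp : 0 < p := by linarith
  have hq : 0 < q := by linarith [hc.q1]
  have hr : 0 < r := by linarith [hc.r1]
  have hpp : 2 / 3 ≤ 1 / p + 2 / p := by
    rw [← add_div, div_le_div_iff₀ (by norm_num) hp]; linarith
  have t1 := ((lim_term1 hc.cU bU6 bG).add (lim_term1 hc.cV bV6 bG)).add (lim_term1 hc.cT bT6 bG)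
  have t2 := ((lim_term2 hc.cU bU6).add (lim_term2 hc.cV bV6)).add (lim_term2 hc.cT bT6)
  have t3 := ((lim_term3 hc.cU hc.cU hc.nU hp (by linarith) hc.bU bU6 hc.bU bU6 p1 p2 hpp).add
    (lim_term3 hc.cU hc.cV hc.nU hq hc.q2 hc.bV bV6 hc.bU bU6 p1 p2 hc.pq)).add
    (lim_term3 hc.cU hc.cT hc.nU hr hc.r2 hc.bT bT6 hc.bU bU6 p1 p2 hc.pr)
  have t4 := lim_term4 hc bV6 bT6
  have t5 := (lim_wA hc.cU hc.cU hp (by linarith) hc.bU bU6 hc.bU bU6 p1 p2 hpp).add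
    (lim_wA hc.cU hc.cV hq hc.q2 hc.bV bV6 hc.bU bU6 p1 p2 hc.pq)
  have tot := ((((t1.add t2).add t3).add t4).add t5).const_mul C
  simp only [add_zero, mul_zero] at tot
  refine le_antisymm (ge_of_tendsto tot ?_) (Xen_nonneg ρ)
  filter_upwards [eventually_ge_atTop 1, eventually_ge_atTop ρ] with R hR hRρ
  refine (hmono hRρ).trans (((hE R (2 * R) (by linarith) (by linarith)).1).trans (le_of_eq ?_))
  have e : 2 * R - R = R := by ring
  rw [e]
  unfold bse wA
  rw [integral_cubic hc]
  ring

lemma eq_zero_of_nB {F : E3 → ℝ} (hF : Continuous F) (h : ∀ ρ, nB F 6 ρ = 0) (x : E3) : F x = 0 := by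
  have hcont := cont_rpow hF (by norm_num : (0:ℝ) < 6)
  have h0 : ∫ y in ball (0 : E3) (‖x‖ + 1), |F y| ^ (6:ℝ) = 0 := by
    rw [← nB_rpow (by norm_num), h]; norm_num
  rw [integral_eq_zero_iff_of_nonneg (fun y => by positivity)
    (integrableOn_ball_rpow hF (by norm_num) _)] at h0
  have h1 : Set.EqOn (fun y => |F y| ^ (6:ℝ)) 0 (ball (0 : E3) (‖x‖ + 1)) :=
    MeasureTheory.Measure.eqOn_open_of_ae_eq h0 isOpen_ball hcont.continuousOn continuousOn_const
  have h2 : |F x| ^ (6:ℝ) = 0 := h1 (by simp)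
  have := (Real.rpow_eq_zero (abs_nonneg _) (by norm_num)).1 h2
  exact abs_eq_zero.1 this

end Step2

/-! ### A gradient in `L^λ` makes the function integrable up to a constant -/

/-- The remainder `c₀ f - η_d * f` of the mollification of `f` at scale `d`. -/
def wd (d : ℝ) (f : E3 → ℝ) (x : E3) : ℝ := c0 * f x - cv (etas d) f x

lemma wd_smooth {d : ℝ} (hd : 0 < d) {f : E3 → ℝ} (hf : Sm f) : Sm (wd d f) :=
  (contDiff_const.mul hf).sub (sm_cv (etas_smooth d) (etas_hcs hd) hf.continuous)

lemma abs_pd3_le (f : E3 → ℝ) (j : Fin 3) (x : E3) : |pd3 j f x| ≤ ‖fderiv ℝ f x‖ := by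
  have := (fderiv ℝ f x).le_opNorm (EuclideanSpace.single j 1)
  simpa [pd3] using this

lemma cont_norm_fderiv {f : E3 → ℝ} (hf : Sm f) : Continuous fun x => ‖fderiv ℝ f x‖ :=
  (hf.continuous_fderiv (by simp)).norm

/-- The mollification remainder is a potential of the gradient, with kernel comparable to
`|y|⁻²` on `|y| ≤ d`. -/
lemma wd_le {d : ℝ} (hd : 0 < d) {f : E3 → ℝ} (hf : Sm f) (x : E3) :
    ENNReal.ofReal |wd d f x| ≤ ∫⁻ y, ENNReal.ofReal (6 * Ca * Kd d y) *
      ENNReal.ofReal ‖fderiv ℝ f (x - y)‖ := by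
  have hH := cont_norm_fderiv hf
  have hKm := Kd_measurable d
  have key : ∀ ε, 0 < ε → ε ≤ d → ENNReal.ofReal |cv (etas ε) f x - cv (etas d) f x| ≤
      ∫⁻ y, ENNReal.ofReal (6 * Ca * Kd d y) * ENNReal.ofReal ‖fderiv ℝ f (x - y)‖ := by
    intro ε hε hεd
    have e1 : cv (etas ε) f x - cv (etas d) f x
        = - ∑ j, cv (pd3 j (kM ε d)) (pd3 j f) x := by
      have := congrFun (lap3_cv_kM hε hεd hf.continuous) x
      have e2 : lap3 (cv (kM ε d) f) x = ∑ j, cv (pd3 j (kM ε d)) (pd3 j f) x := by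
        unfold lap3
        refine Finset.sum_congr rfl fun j _ => ?_
        rw [pd3_cv (kM_smooth ε d) (kM_hcs hε hεd) hf.continuous,
          pd3_cv ((kM_smooth ε d).pd j) (hcs_pd3 (kM_hcs hε hεd) j) hf.continuous,
          cv_pd_comm ((kM_smooth ε d).pd j) (hcs_pd3 (kM_hcs hε hεd) j) hf]
      rw [← e2, this]; ring
    have hb : ∀ j, ENNReal.ofReal |cv (pd3 j (kM ε d)) (pd3 j f) x| ≤
        ∫⁻ y, ENNReal.ofReal (2 * Ca * Kd d y) * ENNReal.ofReal ‖fderiv ℝ f (x - y)‖ := by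
      intro j
      refine (ofReal_abs_cv_le _ _ _).trans (lintegral_mono_ae ?_)
      have h0 : ∀ᵐ y : E3, y ≠ 0 := by
        rw [ae_iff]; simp
      filter_upwards [h0] with y hy
      exact mul_le_mul' (ENNReal.ofReal_le_ofReal (pd_kM_le hε hεd j hy))
        (ENNReal.ofReal_le_ofReal (abs_pd3_le _ _ _))
    rw [e1, abs_neg]
    calc ENNReal.ofReal |∑ j, cv (pd3 j (kM ε d)) (pd3 j f) x|
        ≤ ENNReal.ofReal (∑ j, |cv (pd3 j (kM ε d)) (pd3 j f) x|) :=
          ENNReal.ofReal_le_ofReal (Finset.abs_sum_le_sum_abs _ _)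
      _ = ∑ j, ENNReal.ofReal |cv (pd3 j (kM ε d)) (pd3 j f) x| :=
          ENNReal.ofReal_sum_of_nonneg fun j _ => abs_nonneg _
      _ ≤ ∑ _j : Fin 3, ∫⁻ y, ENNReal.ofReal (2 * Ca * Kd d y) *
            ENNReal.ofReal ‖fderiv ℝ f (x - y)‖ := Finset.sum_le_sum fun j _ => hb j
      _ = _ := by
          have hm : Measurable fun y => ENNReal.ofReal (2 * Ca * Kd d y) *
            ENNReal.ofReal ‖fderiv ℝ f (x - y)‖ := by
            have : Measurable fun y => ‖fderiv ℝ f (x - y)‖ :=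
              (hH.comp (continuous_const.sub continuous_id)).measurable
            fun_prop
          rw [Finset.sum_const, Finset.card_univ, Fintype.card_fin, nsmul_eq_mul,
            ← lintegral_const_mul _ hm]
          refine lintegral_congr fun y => ?_
          rw [show 6 * Ca * Kd d y = 3 * (2 * Ca * Kd d y) by ring,
            ENNReal.ofReal_mul (by norm_num : (0:ℝ) ≤ 3), ← mul_assoc]
          norm_num
  have hlim : Tendsto (fun n : ℕ => ENNReal.ofReal |cv (etas (1 / (n + 1 : ℝ))) f x - cv (etas d) f x|)
      atTop (nhds (ENNReal.ofReal |wd d f x|)) :=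
    (ENNReal.continuous_ofReal.tendsto _).comp
      (((cv_etas_tendsto hf.continuous x).sub_const _).abs)
  refine le_of_tendsto hlim ?_
  have h1 : ∀ᶠ n : ℕ in atTop, 1 / (n + 1 : ℝ) < d :=
    tendsto_one_div_add_atTop_nhds_zero_nat.eventually_lt_const hd
  filter_upwards [h1] with n hn
  exact key _ (by positivity) hn.le

/-- The convolution kernel bounding the gradient of a truncated mollification remainder. -/
def kt (d : ℝ) (y : E3) : ℝ := 3 * (|etas d y| + Lc / d * (6 * Ca * Kd d y))

lemma kt_nonneg {d : ℝ} (hd : 0 < d) (y : E3) : 0 ≤ kt d y := by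
  have := Lc_nonneg; have := Ca_pos; have := Kd_nonneg d y
  unfold kt; positivity

lemma kt_measurable (d : ℝ) : Measurable (kt d) := by
  have := Kd_measurable d
  have h : Measurable (etas d) := (etas_smooth d).continuous.measurable
  unfold kt; fun_prop

lemma lintegral_kt {d : ℝ} (hd : 0 < d) : ∫⁻ y, ENNReal.ofReal (kt d y)
    = ENNReal.ofReal (3 * (nrm eta 1 + 6 * Lc * Ca * ∫ x, Kd 1 x)) := by
  have i1 : Integrable fun y => |etas d y| := ((etas_smooth d).integrable (etas_hcs hd)).abs
  have k1 : Integrable (Kd 1) := by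
    simpa using Kd_integrable (t := 1) one_pos (by norm_num)
  have eK : Kd d = fun x => (d ^ 2)⁻¹ * Kd 1 (d⁻¹ • x) := funext (Kd_scale hd)
  have k2 : Integrable (Kd d) := by
    rw [eK]
    exact (k1.comp_smul (inv_ne_zero hd.ne')).const_mul _
  have kI : ∫ x, Kd d x = d * ∫ x, Kd 1 x := by
    rw [eK, integral_const_mul, integral_scale hd]
    field_simp
  have hn : ∫ y, |etas d y| = nrm eta 1 := by
    rw [← nrm_etas_one hd]; simp [nrm]
  have hi : Integrable (kt d) := (i1.add ((k2.const_mul (6 * Ca)).const_mul (Lc / d))).const_mul 3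
  rw [← ofReal_integral_eq_lintegral_ofReal hi (ae_of_all _ (kt_nonneg hd))]
  congr 1
  unfold kt
  rw [integral_const_mul, integral_add i1 ((k2.const_mul _).const_mul _), integral_const_mul,
    integral_const_mul, hn, kI]
  field_simp

lemma lintegral_const_mul_rpow {h : E3 → ℝ≥0∞} (hh : Measurable h) {s : ℝ} (hs : 0 < s)
    (c : ℝ≥0∞) : (∫⁻ x, (c * h x) ^ s) ^ (1 / s) = c * (∫⁻ x, h x ^ s) ^ (1 / s) := by
  simp only [ENNReal.mul_rpow_of_nonneg _ _ hs.le]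
  rw [lintegral_const_mul _ (by fun_prop), ENNReal.mul_rpow_of_nonneg _ _ (by positivity),
    ← ENNReal.rpow_mul, mul_one_div_cancel hs.ne', ENNReal.rpow_one]

/-- On the ball of radius `d` the mollification remainder at scale `d` is controlled in the Sobolev
exponent, uniformly in `d`. -/
lemma wd_bound {f : E3 → ℝ} (hf : Sm f) {s r : ℝ} (hs : 1 ≤ s) (hr : 0 < r)
    (h : 1 / r = 1 / s - 1 / 3)
    (hN : (∫⁻ x, ENNReal.ofReal ‖fderiv ℝ f x‖ ^ s) ^ (1 / s) < ⊤) :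
    ∃ K : ℝ, 0 ≤ K ∧ ∀ d, 0 < d → nB (wd d f) r d ≤ K := by
  have hs0 : 0 < s := by linarith
  have hH := cont_norm_fderiv hf
  have hL := Lc_nonneg
  have hC := Ca_pos
  set N := (∫⁻ x, ENNReal.ofReal ‖fderiv ℝ f x‖ ^ s) ^ (1 / s) with hNdef
  set A := ENNReal.ofReal (Sob s) * (ENNReal.ofReal (3 * c0) * N +
    ENNReal.ofReal (3 * (nrm eta 1 + 6 * Lc * Ca * ∫ x, Kd 1 x)) * N) with hA
  have hAt : A < ⊤ := ENNReal.mul_lt_top ENNReal.ofReal_lt_top (ENNReal.add_lt_top.2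
    ⟨ENNReal.mul_lt_top ENNReal.ofReal_lt_top hN, ENNReal.mul_lt_top ENNReal.ofReal_lt_top hN⟩)
  refine ⟨A.toReal, ENNReal.toReal_nonneg, fun d hd => ?_⟩
  obtain ⟨χ, hχ, χ1, χ0, χn, χl, χd⟩ := exists_cutoff hd.le (by linarith : d < 2 * d)
  have hW := wd_smooth hd hf
  have hχW : Sm (fun x => χ x * wd d f x) := hχ.mul hW
  have hcs : HasCompactSupport (fun x => χ x * wd d f x) :=
    hcs_of_zero (a := 2 * d) fun x hx => by rw [χ0 x hx.le, zero_mul]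
  have hS := sobolev_lintegral hχW hcs hs hr h
  have hpt : ∀ x, ENNReal.ofReal |(∑ j, |pd3 j (fun x => χ x * wd d f x) x| : ℝ)| ≤
      ENNReal.ofReal (3 * c0) * ENNReal.ofReal ‖fderiv ℝ f x‖
      + ∫⁻ y, ENNReal.ofReal (kt d y) * ENNReal.ofReal ‖fderiv ℝ f (x - y)‖ := by
    intro x
    have hHx : Measurable fun y => ENNReal.ofReal ‖fderiv ℝ f (x - y)‖ :=
      ((hH.comp (continuous_const.sub continuous_id)).measurable).ennreal_ofReal
    have hKm := Kd_measurable d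
    have hem : Measurable (etas d) := (etas_smooth d).continuous.measurable
    have p1 : ∀ j, |pd3 j (fun x => χ x * wd d f x) x| ≤
        c0 * ‖fderiv ℝ f x‖ + (|cv (etas d) (pd3 j f) x| + Lc / d * |wd d f x|) := by
      intro j
      rw [pd3_mul hχ hW]
      have e : pd3 j (wd d f) x = c0 * pd3 j f x - cv (etas d) (pd3 j f) x := by
        unfold wd
        rw [pd3_sub (contDiff_const.mul hf)
          (sm_cv (etas_smooth d) (etas_hcs hd) hf.continuous), pd3_const_mul hf,
          pd3_cv (etas_smooth d) (etas_hcs hd) hf.continuous,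
          cv_pd_comm (etas_smooth d) (etas_hcs hd) hf]
      have b1 : |pd3 j (wd d f) x| ≤ c0 * ‖fderiv ℝ f x‖ + |cv (etas d) (pd3 j f) x| := by
        rw [e]
        refine (abs_sub _ _).trans (add_le_add ?_ le_rfl)
        rw [abs_mul, abs_of_pos c0_pos]
        exact mul_le_mul_of_nonneg_left (abs_pd3_le _ _ _) c0_pos.le
      have b2 : |pd3 j χ x| ≤ Lc / d := by
        have := χd j x
        rwa [show 2 * d - d = d by ring] at this
      have b3 : |χ x| ≤ 1 := by rw [abs_of_nonneg (χn x)]; exact χl x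
      refine (abs_add_le _ _).trans ?_
      rw [abs_mul, abs_mul]
      have m1 := mul_le_mul_of_nonneg_right b2 (abs_nonneg (wd d f x))
      have m2 := mul_le_mul_of_nonneg_right b3 (abs_nonneg (pd3 j (wd d f) x))
      linarith
    have p2 : ∀ j, ENNReal.ofReal |cv (etas d) (pd3 j f) x| ≤
        ∫⁻ y, ENNReal.ofReal |etas d y| * ENNReal.ofReal ‖fderiv ℝ f (x - y)‖ := fun j =>
      (ofReal_abs_cv_le _ _ _).trans (lintegral_mono fun y =>
        mul_le_mul' le_rfl (ENNReal.ofReal_le_ofReal (abs_pd3_le _ _ _)))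
    have hLd : 0 ≤ Lc / d := by positivity
    have p3 : ∀ j, ENNReal.ofReal |pd3 j (fun x => χ x * wd d f x) x| ≤
        ENNReal.ofReal c0 * ENNReal.ofReal ‖fderiv ℝ f x‖ +
        ∫⁻ y, ENNReal.ofReal (|etas d y| + Lc / d * (6 * Ca * Kd d y))
          * ENNReal.ofReal ‖fderiv ℝ f (x - y)‖ := by
      intro j
      refine (ENNReal.ofReal_le_ofReal (p1 j)).trans ?_
      rw [ENNReal.ofReal_add (mul_nonneg c0_pos.le (norm_nonneg _)) (by positivity),
        ENNReal.ofReal_mul c0_pos.le, ENNReal.ofReal_add (by positivity) (by positivity),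
        ENNReal.ofReal_mul hLd]
      refine add_le_add le_rfl ((add_le_add (p2 j) (mul_le_mul' le_rfl (wd_le hd hf x))).trans
        (le_of_eq ?_))
      rw [← lintegral_const_mul _ (by fun_prop), ← lintegral_add_left (by fun_prop)]
      refine lintegral_congr fun y => ?_
      have := Kd_nonneg d y
      rw [ENNReal.ofReal_add (by positivity) (by positivity), ENNReal.ofReal_mul hLd, add_mul,
        mul_assoc (ENNReal.ofReal _)]
    rw [abs_of_nonneg (Finset.sum_nonneg fun j _ => abs_nonneg _),
      ENNReal.ofReal_sum_of_nonneg fun j _ => abs_nonneg _]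
    refine (Finset.sum_le_sum fun j _ => p3 j).trans (le_of_eq ?_)
    rw [Finset.sum_const, Finset.card_univ, Fintype.card_fin, nsmul_eq_mul, mul_add,
      ← lintegral_const_mul _ (by fun_prop), ENNReal.ofReal_mul (by norm_num : (0:ℝ) ≤ 3),
      mul_assoc]
    have e3 : ((3:ℕ) : ℝ≥0∞) = ENNReal.ofReal 3 := by norm_num
    rw [e3]
    congr 1
    refine lintegral_congr fun y => ?_
    unfold kt
    rw [ENNReal.ofReal_mul (by norm_num : (0:ℝ) ≤ 3), mul_assoc (ENNReal.ofReal _)]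
  have hkm := kt_measurable d
  have hm1 : Measurable fun x => ENNReal.ofReal ‖fderiv ℝ f x‖ := hH.measurable.ennreal_ofReal
  have hm2 : Measurable fun x => ∫⁻ y, ENNReal.ofReal (kt d y) *
      ENNReal.ofReal ‖fderiv ℝ f (x - y)‖ := by
    refine Measurable.lintegral_prod_right' (f := fun z : E3 × E3 => ENNReal.ofReal (kt d z.2) *
      ENNReal.ofReal ‖fderiv ℝ f (z.1 - z.2)‖) ?_
    have : Measurable fun z : E3 × E3 => ENNReal.ofReal ‖fderiv ℝ f (z.1 - z.2)‖ :=
      hm1.comp (measurable_fst.sub measurable_snd)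
    fun_prop
  have hgrad : (∫⁻ x, (ENNReal.ofReal |(∑ j, |pd3 j (fun x => χ x * wd d f x) x| : ℝ)|) ^ s) ^ (1 / s)
      ≤ ENNReal.ofReal (3 * c0) * N +
    ENNReal.ofReal (3 * (nrm eta 1 + 6 * Lc * Ca * ∫ x, Kd 1 x)) * N := by
    refine (ENNReal.rpow_le_rpow (lintegral_mono fun x => ENNReal.rpow_le_rpow (hpt x) hs0.le)
      (by positivity)).trans ?_
    refine (ENNReal.lintegral_Lp_add_le (f := fun x => ENNReal.ofReal (3 * c0) *
      ENNReal.ofReal ‖fderiv ℝ f x‖) (by fun_prop) hm2.aemeasurable hs).trans ?_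
    refine add_le_add (le_of_eq (lintegral_const_mul_rpow hm1 hs0 _)) ?_
    have Y := young_lintegral (k := fun y => ENNReal.ofReal (kt d y)) (by fun_prop) hm1
      one_pos hs0 hs le_rfl (by ring)
    simp only [ENNReal.rpow_one, div_one] at Y
    rw [lintegral_kt hd] at Y
    exact Y
  have hfin : ENNReal.ofReal (nB (wd d f) r d) ≤ A := by
    rw [ofReal_nB hW.continuous hr]
    refine le_trans ?_ (hS.trans (mul_le_mul' le_rfl hgrad))
    refine ENNReal.rpow_le_rpow ?_ (by positivity)
    refine le_trans (le_of_eq (setLIntegral_congr_fun measurableSet_ball fun x hx => ?_))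
      (setLIntegral_le_lintegral (ball 0 d) _)
    have : ‖x‖ ≤ d := by
      have := mem_ball_zero_iff.1 hx
      exact this.le
    simp only [χ1 x this, one_mul]
  have := ENNReal.toReal_mono hAt.ne hfin
  rwa [ENNReal.toReal_ofReal (nB_nonneg _ _ _)] at this

lemma exists_eta_bound : ∃ M : ℝ, 0 ≤ M ∧ ∀ x, |eta x| ≤ M := by
  obtain ⟨M, hM⟩ := eta_hcs.exists_bound_of_continuous eta_smooth.continuous
  exact ⟨M, (norm_nonneg _).trans (hM 0), hM⟩

/-- The gradient of the mollification at scale `d` decays like `d^{-3/s}`. -/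
lemma cv_etas_pd_le {f : E3 → ℝ} (hf : Sm f) {s : ℝ} (hs : 1 ≤ s)
    (hN : BddN (fun x => ‖fderiv ℝ f x‖) s) : ∃ C : ℝ, 0 ≤ C ∧ ∀ d, 0 < d → ∀ j x, ‖x‖ ≤ d →
      |cv (etas d) (pd3 j f) x| ≤ C * d ^ (-(3 / s)) := by
  have hs0 : 0 < s := by linarith
  have hH := cont_norm_fderiv hf
  have hvB := vB_nonneg
  obtain ⟨M, hM0, hM⟩ := exists_eta_bound
  obtain ⟨N, hN0, hN⟩ := hN
  refine ⟨M * (N * (vB * 8) ^ (1 - 1 / s)), by positivity, fun d hd j x hx => ?_⟩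
  have e1 : cv (etas d) (pd3 j f) x = ∫ y, pd3 j f y * etas d (x - y) := by
    unfold cv
    rw [← integral_sub_left_eq_self _ _ x]
    refine integral_congr_ae (ae_of_all _ fun y => ?_)
    simp only [sub_sub_cancel]
    ring
  rw [e1]
  have hball := abs_integral_le_ball (f := pd3 j f) (w := fun y => etas d (x - y)) (ρ := 2 * d) (by
    intro y hy
    refine etas_zero hd ?_
    have := norm_sub_norm_le y x
    rw [norm_sub_rev] at this
    linarith)
  refine hball.trans ?_
  have hc1 : Continuous fun y => |pd3 j f y| * |etas d (x - y)| :=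
    (hf.pd j).continuous.abs.mul
      ((etas_smooth d).continuous.comp (continuous_const.sub continuous_id)).abs
  have hc2 : Continuous fun y => (M * (d ^ 3)⁻¹) * ‖fderiv ℝ f y‖ := continuous_const.mul hH
  have h2 : ∫ y in ball (0 : E3) (2 * d), |pd3 j f y| * |etas d (x - y)| ≤
      ∫ y in ball (0 : E3) (2 * d), (M * (d ^ 3)⁻¹) * ‖fderiv ℝ f y‖ := by
    refine integral_mono (integrableOn_ball hc1 _) (integrableOn_ball hc2 _) fun y => ?_
    have a1 := abs_pd3_le f j y
    have a2 : |etas d (x - y)| ≤ M * (d ^ 3)⁻¹ := by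
      unfold etas
      rw [abs_mul, abs_of_pos (by positivity : 0 < d⁻¹ ^ 3), inv_pow, mul_comm]
      exact mul_le_mul_of_nonneg_right (hM _) (by positivity)
    calc |pd3 j f y| * |etas d (x - y)| ≤ ‖fderiv ℝ f y‖ * (M * (d ^ 3)⁻¹) :=
          mul_le_mul a1 a2 (abs_nonneg _) (norm_nonneg _)
      _ = _ := mul_comm _ _
  refine h2.trans ?_
  rw [integral_const_mul]
  have e2 : ∫ y in ball (0 : E3) (2 * d), ‖fderiv ℝ f y‖
      = nB (fun y => ‖fderiv ℝ f y‖) 1 (2 * d) := by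
    simp [nB]
  rw [e2]
  have h3 := nB_le_of_le hH one_pos hs (by linarith : 0 ≤ 2 * d)
  have h4 : nB (fun y => ‖fderiv ℝ f y‖) 1 (2 * d) ≤ N * (vB * (2 * d) ^ 3) ^ (1 / 1 - 1 / s) :=
    h3.trans (mul_le_mul_of_nonneg_right (hN _) (by positivity))
  have e3 : (vB * (2 * d) ^ 3) ^ (1 / 1 - 1 / s) = (vB * 8) ^ (1 - 1 / s) * (d ^ 3) ^ (1 - 1 / s) := by
    rw [← Real.mul_rpow (by positivity) (by positivity), div_one]
    congr 1; ring
  rw [e3] at h4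
  have e4 : (d ^ 3)⁻¹ * (d ^ 3) ^ (1 - 1 / s) = d ^ (-(3 / s)) := by
    rw [Real.rpow_sub (by positivity), Real.rpow_one, ← Real.rpow_natCast d 3, ← Real.rpow_mul hd.le,
      Real.rpow_neg hd.le]
    have := Real.rpow_pos_of_pos hd (3 / s)
    have h5 : ((3:ℕ):ℝ) * (1 / s) = 3 / s := by push_cast; ring
    rw [h5]
    have : 0 < d ^ ((3:ℕ):ℝ) := Real.rpow_pos_of_pos hd _
    field_simp
  calc M * (d ^ 3)⁻¹ * nB (fun y => ‖fderiv ℝ f y‖) 1 (2 * d)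
      ≤ M * (d ^ 3)⁻¹ * (N * ((vB * 8) ^ (1 - 1 / s) * (d ^ 3) ^ (1 - 1 / s))) :=
        mul_le_mul_of_nonneg_left h4 (by positivity)
    _ = M * (N * (vB * 8) ^ (1 - 1 / s)) * ((d ^ 3)⁻¹ * (d ^ 3) ^ (1 - 1 / s)) := by ring
    _ = _ := by rw [e4]

/-- Oscillation of the mollification on the ball of radius `d`, from the bound on its gradient. -/
lemma cv_etas_osc {f : E3 → ℝ} (hf : Sm f) {C s d : ℝ} (hd : 0 < d)
    (h : ∀ j x, ‖x‖ ≤ d → |cv (etas d) (pd3 j f) x| ≤ C * d ^ (-(3 / s))) {x : E3}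
    (hx : ‖x‖ ≤ d) :
    |cv (etas d) f x - cv (etas d) f 0| ≤ 3 * (C * d ^ (-(3 / s))) * ‖x‖ := by
  have hS : Sm (cv (etas d) f) := sm_cv (etas_smooth d) (etas_hcs hd) hf.continuous
  have := (convex_closedBall (0 : E3) d).norm_image_sub_le_of_norm_fderiv_le (𝕜 := ℝ)
    (f := cv (etas d) f) (C := 3 * (C * d ^ (-(3 / s)))) (x := 0) (y := x)
    (fun y _ => hS.diff y) (by
      intro y hy
      refine (norm_fderiv_le_sum y).trans ?_
      have hy' : ‖y‖ ≤ d := by simpa using hy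
      refine (Finset.sum_le_sum fun j _ => (?_ : _ ≤ C * d ^ (-(3 / s)))).trans (le_of_eq ?_)
      · rw [pd3_cv (etas_smooth d) (etas_hcs hd) hf.continuous,
          cv_pd_comm (etas_smooth d) (etas_hcs hd) hf]
        exact h j y hy'
      · simp) (by simp [hd.le]) (by simpa using hx)
  simpa using this

/-- **Sobolev embedding modulo constants**: if `∇f ∈ L^s` with `1 ≤ s < 3`, some `f - c` lies in
`L^r` with `1/r = 1/s - 1/3`. -/
lemma exists_const_BddN {f : E3 → ℝ} (hf : Sm f) {s r : ℝ} (hs : 1 ≤ s) (hr : 1 ≤ r)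
    (h : 1 / r = 1 / s - 1 / 3)
    (hN : (∫⁻ x, ENNReal.ofReal ‖fderiv ℝ f x‖ ^ s) ^ (1 / s) < ⊤)
    (hN2 : BddN (fun x => ‖fderiv ℝ f x‖) s) :
    ∃ c : ℝ, BddN (fun x => f x - c) r := by
  have hr0 : 0 < r := by linarith
  have hs0 : 0 < s := by linarith
  have hcp := c0_pos
  obtain ⟨K, hK0, hK⟩ := wd_bound hf hs hr0 h hN
  obtain ⟨C, hC0, hC⟩ := cv_etas_pd_le hf hs hN2
  set δ : ℝ → ℝ := fun d => 3 * (C * d ^ (-(3 / s))) with hδ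
  have hδ0 : ∀ d, 0 < d → 0 ≤ δ d := fun d hd => by simp only [hδ]; positivity
  have hosc : ∀ d, 0 < d → ∀ x, ‖x‖ ≤ d → |cv (etas d) f x - cv (etas d) f 0| ≤ δ d * ‖x‖ :=
    fun d hd x hx => cv_etas_osc hf hd (hC d hd) hx
  have hFc : ∀ d, 0 < d → Continuous (cv (etas d) f) := fun d hd =>
    (sm_cv (etas_smooth d) (etas_hcs hd) hf.continuous).continuous
  have hone : Continuous fun _ : E3 => (1:ℝ) := continuous_const
  have hwd : ∀ d τ, 0 < d → τ ≤ d → nB (wd d f) r τ ≤ K := fun d τ hd hτ =>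
    (nB_mono (wd_smooth hd hf).continuous hr0 hτ).trans (hK d hd)
  have hδlim : Tendsto (fun n : ℕ => δ (n + 1)) atTop (nhds 0) := by
    have t1 : Tendsto (fun n : ℕ => ((n:ℝ) + 1)) atTop atTop :=
      tendsto_atTop_add_const_right _ _ tendsto_natCast_atTop_atTop
    have t2 := (tendsto_rpow_neg_atTop (by positivity : 0 < 3 / s)).comp t1
    have t3 := (t2.const_mul C).const_mul 3
    simpa using t3
  -- the means at the origin stay bounded
  have hb1 : 0 < nB (fun _ => (1:ℝ)) r 1 := by
    unfold nB
    refine Real.rpow_pos_of_pos ?_ _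
    simp only [abs_one, Real.one_rpow, integral_const, smul_eq_mul, mul_one, Measure.real,
      Measure.restrict_apply_univ]
    exact ENNReal.toReal_pos (measure_ball_pos _ _ one_pos).ne' measure_ball_lt_top.ne
  have ha : ∀ d, 1 ≤ d → |cv (etas d) f 0| * nB (fun _ => (1:ℝ)) r 1 ≤
      nB (fun x => c0 * f x) r 1 + (K + δ d * nB (fun _ => (1:ℝ)) r 1) := by
    intro d hd
    have hd0 : 0 < d := by linarith
    set a := cv (etas d) f 0
    have e : |a| * nB (fun _ => (1:ℝ)) r 1 = nB (fun _ => a) r 1 := by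
      refine le_antisymm ?_ ?_
      · rcases eq_or_ne a 0 with h0 | h0
        · rw [h0, abs_zero, zero_mul]; exact nB_nonneg _ _ _
        · have := nB_le (f := fun _ => (1:ℝ)) (g := fun _ : E3 => a) continuous_const hr0
            (ρ := 1) (c := |a|⁻¹) (by positivity) (fun x _ => by
              rw [abs_one, inv_mul_cancel₀ (abs_ne_zero.2 h0)])
          have hpa : 0 < |a| := abs_pos.2 h0
          calc |a| * nB (fun _ => (1:ℝ)) r 1 ≤ |a| * (|a|⁻¹ * nB (fun _ => a) r 1) :=
                mul_le_mul_of_nonneg_left this hpa.le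
            _ = _ := by rw [← mul_assoc, mul_inv_cancel₀ hpa.ne', one_mul]
      · exact nB_le hone hr0 (abs_nonneg _) fun x _ => by simp
    rw [e]
    have e2 : (fun _ : E3 => a) = fun x => c0 * f x + (- wd d f x + (a - cv (etas d) f x)) := by
      funext x; unfold wd; ring
    have hw : Continuous fun x => - wd d f x := (wd_smooth hd0 hf).continuous.neg
    have hac : Continuous fun x => a - cv (etas d) f x := continuous_const.sub (hFc d hd0)
    rw [e2]
    refine (nB_add (continuous_const.mul hf.continuous) (hw.add hac) hr).trans
      (add_le_add le_rfl ((nB_add hw hac hr).trans (add_le_add ?_ ?_)))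
    · rw [nB_neg]; exact hwd d 1 hd0 hd
    · refine nB_le hone hr0 (hδ0 d hd0) fun x hx => ?_
      have hx1 : ‖x‖ < 1 := by simpa using hx
      rw [abs_one, mul_one, abs_sub_comm]
      refine (hosc d hd0 x (by linarith)).trans ?_
      have := hδ0 d hd0
      nlinarith [norm_nonneg x]
  have hbdd : Bornology.IsBounded (Set.range fun n : ℕ => cv (etas ((n:ℝ) + 1)) f 0) := by
    obtain ⟨D, hD⟩ := hδlim.bddAbove_range
    rw [isBounded_iff_forall_norm_le]
    refine ⟨(nB (fun x => c0 * f x) r 1 + (K + D * nB (fun _ => (1:ℝ)) r 1)) /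
      nB (fun _ => (1:ℝ)) r 1, ?_⟩
    rintro _ ⟨n, rfl⟩
    rw [Real.norm_eq_abs, le_div_iff₀ hb1]
    refine (ha (n + 1) (by linarith [n.cast_nonneg (α := ℝ)])).trans ?_
    have : δ (n + 1) ≤ D := hD ⟨n, rfl⟩
    gcongr
  obtain ⟨A, -, φ, hφ, hA⟩ := tendsto_subseq_of_bounded hbdd (fun n => Set.mem_range_self n)
  refine ⟨A / c0, c0⁻¹ * K, by positivity, fun τ => ?_⟩
  have e0 : nB (fun x => f x - A / c0) r τ ≤ c0⁻¹ * nB (fun x => c0 * f x - A) r τ := by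
    refine nB_le (g := fun x => c0 * f x - A)
      ((continuous_const.mul hf.continuous).sub continuous_const) hr0 (by positivity)
      fun x _ => le_of_eq ?_
    have e : f x - A / c0 = c0⁻¹ * (c0 * f x - A) := by field_simp
    rw [e, abs_mul, abs_of_pos (inv_pos.2 hcp)]
  refine e0.trans (mul_le_mul_of_nonneg_left ?_ (by positivity))
  have hlim : Tendsto (fun n : ℕ => K + (δ (φ n + 1) * |τ| + |cv (etas ((φ n : ℝ) + 1)) f 0 - A|) *
      nB (fun _ => (1:ℝ)) r τ) atTop (nhds K) := by
    have l1 := (hδlim.comp hφ.tendsto_atTop).mul_const |τ|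
    have l2 := (hA.sub_const A).abs
    have l3 := ((l1.add l2).mul_const (nB (fun _ => (1:ℝ)) r τ)).const_add K
    simpa using l3
  refine ge_of_tendsto hlim ?_
  have hlarge : ∀ᶠ n : ℕ in atTop, τ ≤ (φ n : ℝ) + 1 := by
    have t1 : Tendsto (fun n : ℕ => ((φ n : ℝ) + 1)) atTop atTop :=
      tendsto_atTop_add_const_right _ _ (tendsto_natCast_atTop_atTop.comp hφ.tendsto_atTop)
    exact t1.eventually_ge_atTop τ
  filter_upwards [hlarge] with n hn
  set d := (φ n : ℝ) + 1 with hd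
  have hd0 : 0 < d := by positivity
  have hδd := hδ0 d hd0
  have e2 : (fun x => c0 * f x - A) = fun x => wd d f x + (cv (etas d) f x - A) := by
    funext x; unfold wd; ring
  rw [e2]
  refine (nB_add (wd_smooth hd0 hf).continuous ((hFc d hd0).sub continuous_const) hr).trans
    (add_le_add (hwd d τ hd0 hn) ?_)
  refine nB_le hone hr0 (by positivity) fun x hx => ?_
  have hx1 : ‖x‖ < τ := by simpa using hx
  rw [abs_one, mul_one]
  calc |cv (etas d) f x - A| ≤ |cv (etas d) f x - cv (etas d) f 0| + |cv (etas d) f 0 - A| :=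
        abs_sub_le _ _ _
    _ ≤ _ := add_le_add ((hosc d hd0 x (by linarith)).trans
        (mul_le_mul_of_nonneg_left (hx1.le.trans (le_abs_self _)) hδd)) le_rfl

/-! ### Exponents and conclusion -/

lemma BddN_of_lintegral {F : E3 → ℝ} (hF : Continuous F) {s : ℝ} (hs : 0 < s)
    (h : (∫⁻ x, ENNReal.ofReal |F x| ^ s) ^ (1 / s) < ⊤) : BddN F s := by
  refine ⟨((∫⁻ x, ENNReal.ofReal |F x| ^ s) ^ (1 / s)).toReal, ENNReal.toReal_nonneg, fun τ => ?_⟩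
  have h1 : ENNReal.ofReal (nB F s τ) ≤ (∫⁻ x, ENNReal.ofReal |F x| ^ s) ^ (1 / s) := by
    rw [ofReal_nB hF hs]
    exact ENNReal.rpow_le_rpow (setLIntegral_le_lintegral _ _) (by positivity)
  have := ENNReal.toReal_mono h.ne h1
  rwa [ENNReal.toReal_ofReal (nB_nonneg _ _ _)] at this

lemma lintegral_of_eLpNorm {w : E3 → E3} {s : ℝ} (hs : 0 < s)
    (h : eLpNorm w (ENNReal.ofReal s) volume < ⊤) :
    (∫⁻ x, ENNReal.ofReal |‖w x‖| ^ s) ^ (1 / s) < ⊤ := by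
  rw [← eLpNorm_ofReal (f := fun x => ‖w x‖) hs, eLpNorm_norm]
  exact h

lemma inv_gt_of_lt_conj {p q : ℝ} (hp : 1 < p) (hq : 0 < q) (h : q < 2 * (p / (p - 1))) :
    (1 - 1 / p) / 2 < 1 / q := by
  have hp1 : 0 < p - 1 := by linarith
  have := one_div_lt_one_div_of_lt hq h
  have e : 1 / (2 * (p / (p - 1))) = (1 - 1 / p) / 2 := by field_simp
  rwa [e] at this

lemma inv_gt_of_lt_sob {p l : ℝ} (hp : 1 < p) (hl : 0 < l) (h : l < 6 * p / (5 * p - 3)) :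
    5 / 6 - 1 / p / 2 < 1 / l := by
  have hp1 : 0 < 5 * p - 3 := by linarith
  have := one_div_lt_one_div_of_lt hl h
  have e : 1 / (6 * p / (5 * p - 3)) = 5 / 6 - 1 / p / 2 := by
    rw [one_div_div]; field_simp; ring
  rwa [e] at this

lemma one_le_conj {p q : ℝ} (hp : 1 < p) (h : 2 * (p / (p - 1)) ≤ q) : 1 ≤ q := by
  have hp1 : 0 < p - 1 := by linarith
  have : 1 ≤ p / (p - 1) := by rw [le_div_iff₀ hp1]; linarith
  linarith

lemma one_le_sob {p l : ℝ} (hp : 1 < p) (h : 6 * p / (5 * p - 3) ≤ l) : 1 ≤ l := by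
  have hp1 : 0 < 5 * p - 3 := by linarith
  refine le_trans ?_ h
  rw [le_div_iff₀ hp1]; linarith

/-- What the ten conditions have in common. -/
lemma exponents {p q lam : ℝ}
    (hB : ((3 ≤ p ∧ p ≤ 9 / 2) ∧ (1 ≤ q ∧ q < 2 * (p / (p - 1))) ∧ (1 ≤ lam ∧ lam < 6 * p / (5 * p - 3))) ∨
      ((3 / 2 < p ∧ p < 3) ∧ (1 ≤ q ∧ q < 2) ∧ (1 ≤ lam ∧ lam ≤ 2)) ∨
      ((3 / 2 < p ∧ p < 3) ∧ (1 ≤ q ∧ q ≤ 6) ∧ (1 ≤ lam ∧ lam < 6 / 5)) ∨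
      ((3 ≤ p ∧ p ≤ 9 / 2) ∧ (1 ≤ q ∧ q < 2) ∧ (6 * p / (5 * p - 3) ≤ lam ∧ lam ≤ 2) ∧ 4 / 3 ≤ 1 / p + 2 / lam) ∨
      ((3 ≤ p ∧ p ≤ 9 / 2) ∧ (2 * (p / (p - 1)) ≤ q ∧ q ≤ 6) ∧ (1 ≤ lam ∧ lam < 6 / 5) ∧ 2 / 3 ≤ 1 / p + 2 / q) ∨
      ((3 ≤ p ∧ p ≤ 9 / 2) ∧ (2 ≤ q ∧ q < 2 * (p / (p - 1))) ∧ (6 * p / (5 * p - 3) ≤ lam ∧ lam ≤ 2) ∧ 4 / 3 ≤ 1 / p + 2 / lam ∧ 1 ≤ 1 / q + 1 / lam) ∨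
      ((3 ≤ p ∧ p ≤ 9 / 2) ∧ (2 * (p / (p - 1)) ≤ q ∧ q ≤ 6) ∧ (6 / 5 ≤ lam ∧ lam < 6 * p / (5 * p - 3)) ∧ 2 / 3 ≤ 1 / p + 2 / q ∧ 1 ≤ 1 / q + 1 / lam) ∨
      ((3 ≤ p ∧ p ≤ 9 / 2) ∧ (2 * (p / (p - 1)) ≤ q ∧ q ≤ 6) ∧ (6 * p / (5 * p - 3) ≤ lam ∧ lam ≤ 2) ∧ 2 / 3 ≤ 1 / p + 2 / q ∧ 4 / 3 ≤ 1 / p + 2 / lam ∧ 1 ≤ 1 / q + 1 / lam) ∨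
      ((3 / 2 < p ∧ p < 3) ∧ (2 ≤ q ∧ q < 2 * (p / (p - 1))) ∧ (6 / 5 ≤ lam ∧ lam ≤ 2) ∧ 1 ≤ 1 / q + 1 / lam) ∨
      ((3 / 2 < p ∧ p < 3) ∧ (2 ≤ q ∧ q ≤ 6) ∧ (6 / 5 ≤ lam ∧ lam < 6 * p / (5 * p - 3)) ∧ 1 ≤ 1 / q + 1 / lam)) :
    (3 / 2 < p ∧ p ≤ 9 / 2) ∧ (1 ≤ q ∧ q ≤ 6) ∧ (1 ≤ lam ∧ lam ≤ 2) ∧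
      2 / 3 ≤ 1 / p + 2 / q ∧ 4 / 3 ≤ 1 / p + 2 / lam ∧ 1 ≤ 1 / q + 1 / lam := by
  have hp : 3 / 2 < p := by
    rcases hB with h | h | h | h | h | h | h | h | h | h <;> linarith [h.1.1]
  have hp9 : p ≤ 9 / 2 := by
    rcases hB with h | h | h | h | h | h | h | h | h | h <;> linarith [h.1.2]
  have hp1 : 1 < p := by linarith
  have hq1 : 1 ≤ q := by
    rcases hB with h | h | h | h | h | h | h | h | h | h <;>
      first | linarith [h.2.1.1] | exact one_le_conj hp1 h.2.1.1
  have hl1 : 1 ≤ lam := by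
    rcases hB with h | h | h | h | h | h | h | h | h | h <;>
      first
        | linarith [h.2.2.1] | linarith [h.2.2.1.1]
        | exact one_le_sob hp1 h.2.2.1.1
  have hq0 : 0 < q := by linarith
  have hl0 : 0 < lam := by linarith
  have i1 := fun h => inv_gt_of_lt_conj hp1 hq0 h
  have i2 := fun h => inv_gt_of_lt_sob hp1 hl0 h
  have a2 : 1 / p < 2 / 3 := by
    have := one_div_lt_one_div_of_lt (by norm_num) hp
    norm_num at this ⊢; linarith
  have i3 : 3 ≤ p → 1 / p ≤ 1 / 3 := fun h => one_div_le_one_div_of_le (by norm_num) h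
  have i4 : p < 3 → 1 / 3 < 1 / p := fun h => one_div_lt_one_div_of_lt (by linarith) h
  have i5 : q < 2 → 1 / 2 < 1 / q := fun h => one_div_lt_one_div_of_lt hq0 h
  have i6 : q ≤ 6 → 1 / 6 ≤ 1 / q := fun h => one_div_le_one_div_of_le hq0 h
  have i7 : lam ≤ 2 → 1 / 2 ≤ 1 / lam := fun h => one_div_le_one_div_of_le hl0 h
  have i8 : lam < 6 / 5 → 5 / 6 < 1 / lam := fun h => by
    have := one_div_lt_one_div_of_lt hl0 h
    rwa [one_div_div] at this
  have j1 : 1 / 6 ≤ 1 / q → q ≤ 6 := fun h => (one_div_le_one_div (by norm_num) hq0).1 h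
  have j2 : 1 / 2 ≤ 1 / lam → lam ≤ 2 := fun h => (one_div_le_one_div (by norm_num) hl0).1 h
  have a0 : 0 < 1 / p := by positivity
  have eq2 : 2 / q = 2 * (1 / q) := by ring
  have el2 : 2 / lam = 2 * (1 / lam) := by ring
  rw [eq2, el2] at hB ⊢
  suffices 1 / 6 ≤ 1 / q ∧ 1 / 2 ≤ 1 / lam ∧ 2 / 3 ≤ 1 / p + 2 * (1 / q) ∧
      4 / 3 ≤ 1 / p + 2 * (1 / lam) ∧ 1 ≤ 1 / q + 1 / lam from
    ⟨⟨hp, hp9⟩, ⟨hq1, j1 this.1⟩, ⟨hl1, j2 this.2.1⟩, this.2.2⟩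
  clear j1 j2 eq2 el2 hq1 hl1 hq0 hl0
  generalize 1 / p = a at *
  generalize 1 / q = b at *
  generalize 1 / lam = l at *
  rcases hB with h | h | h | h | h | h | h | h | h | h
  · have := i1 h.2.1.2; have := i2 h.2.2.2; have := i3 h.1.1
    refine ⟨?_, ?_, ?_, ?_, ?_⟩ <;> linarith
  · have := i5 h.2.1.2; have := i7 h.2.2.2; have := i4 h.1.2
    refine ⟨?_, ?_, ?_, ?_, ?_⟩ <;> linarith
  · have := i6 h.2.1.2; have := i8 h.2.2.2; have := i4 h.1.2
    refine ⟨?_, ?_, ?_, ?_, ?_⟩ <;> linarith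
  · have := i5 h.2.1.2; have := i7 h.2.2.1.2; have := i3 h.1.1; have := h.2.2.2
    refine ⟨?_, ?_, ?_, ?_, ?_⟩ <;> linarith
  · have := i6 h.2.1.2; have := i8 h.2.2.1.2; have := i3 h.1.1; have := h.2.2.2
    refine ⟨?_, ?_, ?_, ?_, ?_⟩ <;> linarith
  · have := i1 h.2.1.2; have := i7 h.2.2.1.2; have := i3 h.1.1; have := h.2.2.2.1; have := h.2.2.2.2
    refine ⟨?_, ?_, ?_, ?_, ?_⟩ <;> linarith
  · have := i6 h.2.1.2; have := i2 h.2.2.1.2; have := i3 h.1.1; have := h.2.2.2.1; have := h.2.2.2.2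
    refine ⟨?_, ?_, ?_, ?_, ?_⟩ <;> linarith
  · have := i6 h.2.1.2; have := i7 h.2.2.1.2; have := i3 h.1.1; have := h.2.2.2.1; have := h.2.2.2.2.1
    have := h.2.2.2.2.2
    refine ⟨?_, ?_, ?_, ?_, ?_⟩ <;> linarith
  · have := i1 h.2.1.2; have := i7 h.2.2.1.2; have := i4 h.1.2; have := h.2.2.2
    refine ⟨?_, ?_, ?_, ?_, ?_⟩ <;> linarith
  · have := i6 h.2.1.2; have := i2 h.2.2.1.2; have := i4 h.1.2; have := h.2.2.2
    refine ⟨?_, ?_, ?_, ?_, ?_⟩ <;> linarith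

/-- The system only involves the gradient of the temperature. -/
lemma IsTCMSolution.sub_const {u : E3 → E3} {pr : E3 → ℝ} {v : E3 → E3} {θ : E3 → ℝ}
    (h : IsTCMSolution u pr v θ) (c : ℝ) : IsTCMSolution u pr v (fun x => θ x - c) where
  smooth_u := h.smooth_u
  smooth_pr := h.smooth_pr
  smooth_v := h.smooth_v
  smooth_θ := h.smooth_θ.sub contDiff_const
  eq_u := h.eq_u
  eq_v := fun x i => by rw [pd3_sub_const]; exact h.eq_v x i
  eq_θ := fun x => by
    have := h.eq_θ x
    unfold lap3 at this ⊢
    simpa only [pd3_sub_const] using this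
  div_u := h.div_u

theorem liouville_tcm_cor3
    (u : E3 → E3) (pr : E3 → ℝ) (v : E3 → E3) (θ : E3 → ℝ)
    (hsol : IsTCMSolution u pr v θ)
    (p q lam : ℝ)
    (hu : eLpNorm u (ENNReal.ofReal p) volume < ⊤)
    (hv : eLpNorm v (ENNReal.ofReal q) volume < ⊤)
    (hθ : eLpNorm (gradient θ) (ENNReal.ofReal lam) volume < ⊤)
    (hB : ((3 ≤ p ∧ p ≤ 9 / 2) ∧ (1 ≤ q ∧ q < 2 * (p / (p - 1))) ∧ (1 ≤ lam ∧ lam < 6 * p / (5 * p - 3))) ∨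
      ((3 / 2 < p ∧ p < 3) ∧ (1 ≤ q ∧ q < 2) ∧ (1 ≤ lam ∧ lam ≤ 2)) ∨
      ((3 / 2 < p ∧ p < 3) ∧ (1 ≤ q ∧ q ≤ 6) ∧ (1 ≤ lam ∧ lam < 6 / 5)) ∨
      ((3 ≤ p ∧ p ≤ 9 / 2) ∧ (1 ≤ q ∧ q < 2) ∧ (6 * p / (5 * p - 3) ≤ lam ∧ lam ≤ 2) ∧ 4 / 3 ≤ 1 / p + 2 / lam) ∨
      ((3 ≤ p ∧ p ≤ 9 / 2) ∧ (2 * (p / (p - 1)) ≤ q ∧ q ≤ 6) ∧ (1 ≤ lam ∧ lam < 6 / 5) ∧ 2 / 3 ≤ 1 / p + 2 / q) ∨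
      ((3 ≤ p ∧ p ≤ 9 / 2) ∧ (2 ≤ q ∧ q < 2 * (p / (p - 1))) ∧ (6 * p / (5 * p - 3) ≤ lam ∧ lam ≤ 2) ∧ 4 / 3 ≤ 1 / p + 2 / lam ∧ 1 ≤ 1 / q + 1 / lam) ∨
      ((3 ≤ p ∧ p ≤ 9 / 2) ∧ (2 * (p / (p - 1)) ≤ q ∧ q ≤ 6) ∧ (6 / 5 ≤ lam ∧ lam < 6 * p / (5 * p - 3)) ∧ 2 / 3 ≤ 1 / p + 2 / q ∧ 1 ≤ 1 / q + 1 / lam) ∨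
      ((3 ≤ p ∧ p ≤ 9 / 2) ∧ (2 * (p / (p - 1)) ≤ q ∧ q ≤ 6) ∧ (6 * p / (5 * p - 3) ≤ lam ∧ lam ≤ 2) ∧ 2 / 3 ≤ 1 / p + 2 / q ∧ 4 / 3 ≤ 1 / p + 2 / lam ∧ 1 ≤ 1 / q + 1 / lam) ∨
      ((3 / 2 < p ∧ p < 3) ∧ (2 ≤ q ∧ q < 2 * (p / (p - 1))) ∧ (6 / 5 ≤ lam ∧ lam ≤ 2) ∧ 1 ≤ 1 / q + 1 / lam) ∨
      ((3 / 2 < p ∧ p < 3) ∧ (2 ≤ q ∧ q ≤ 6) ∧ (6 / 5 ≤ lam ∧ lam < 6 * p / (5 * p - 3)) ∧ 1 ≤ 1 / q + 1 / lam)) :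
    (∀ x : E3, u x = 0) ∧ (∀ x : E3, v x = 0) ∧ ∃ c : ℝ, ∀ x : E3, θ x = c := by
  obtain ⟨⟨p1, p2⟩, ⟨q1, q2⟩, ⟨l1, l2⟩, hpq, hpl, hql⟩ := exponents hB
  have hp0 : 0 < p := by linarith
  have hq0 : 0 < q := by linarith
  have hl0 : 0 < lam := by linarith
  -- the Sobolev exponent of `λ`
  have hil : 1 / 2 ≤ 1 / lam := one_div_le_one_div_of_le hl0 l2
  have hil1 : 1 / lam ≤ 1 := by rw [div_le_one hl0]; exact l1
  obtain ⟨r, hr0, hr⟩ : ∃ r : ℝ, 0 < r ∧ 1 / r = 1 / lam - 1 / 3 :=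
    ⟨(1 / lam - 1 / 3)⁻¹, inv_pos.2 (by linarith), by rw [one_div, inv_inv]⟩
  have r1 : 3 / 2 ≤ r := by
    have h : 1 / r ≤ 1 / (3 / 2) := by rw [hr]; norm_num; norm_num at hil1; linarith
    exact (one_div_le_one_div hr0 (by norm_num)).1 h
  have r2 : r ≤ 6 := by
    have h : 1 / 6 ≤ 1 / r := by rw [hr]; linarith
    exact (one_div_le_one_div (by norm_num) hr0).1 h
  have hθs : Sm θ := hsol.smooth_θ
  have hgrad : (∫⁻ x, ENNReal.ofReal |‖fderiv ℝ θ x‖| ^ lam) ^ (1 / lam) < ⊤ := by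
    have := lintegral_of_eLpNorm hl0 hθ
    have e : ∀ x, ‖gradient θ x‖ = ‖fderiv ℝ θ x‖ := fun x => by
      unfold gradient; exact LinearIsometryEquiv.norm_map _ _
    simpa only [e] using this
  obtain ⟨c, hc⟩ := exists_const_BddN hθs l1 (by linarith : 1 ≤ r) hr
    (by simpa only [abs_norm] using hgrad)
    (BddN_of_lintegral (cont_norm_fderiv hθs) hl0 hgrad)
  have hsol' := hsol.sub_const c
  have hcu : Continuous fun x => ‖u x‖ := hsol.smooth_u.continuous.norm
  have hcv : Continuous fun x => ‖v x‖ := hsol.smooth_v.continuous.norm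
  have hcT : Continuous fun x => |θ x - c| := (hθs.continuous.sub continuous_const).abs
  have hcfg : Config p q r (fun x => ‖u x‖) (fun x => ‖v x‖) (fun x => |θ x - c|)
      (Gr u v (fun x => θ x - c)) :=
    { cU := hcu
      cV := hcv
      cT := hcT
      cG := Gr_cont hsol'.smooth_u hsol'.smooth_v hsol'.smooth_θ
      nU := fun x => norm_nonneg _
      nV := fun x => norm_nonneg _
      nT := fun x => abs_nonneg _
      bU := BddN_of_lintegral hcu hp0 (lintegral_of_eLpNorm hp0 hu)
      bV := BddN_of_lintegral hcv hq0 (lintegral_of_eLpNorm hq0 hv)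
      bT := by
        obtain ⟨M, hM0, hM⟩ := hc
        refine ⟨M, hM0, fun τ => le_trans (le_of_eq ?_) (hM τ)⟩
        simp [nB]
      p1 := p1
      p2 := p2
      q1 := q1
      q2 := q2
      r1 := r1
      r2 := r2
      pq := hpq
      pr := by
        have e : 2 / r = 2 * (1 / r) := by ring
        have e2 : 2 / lam = 2 * (1 / lam) := by ring
        rw [e, hr]; rw [e2] at hpl; linarith
      qr := by rw [hr]; linarith }
  obtain ⟨C, hC, hE⟩ := energy_ineq hsol' p1
  have hX := Xen_zero hcfg hC hE
  unfold Xen at hX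
  have hU : ∀ ρ, nB (fun x => ‖u x‖) 6 ρ = 0 := fun ρ => by
    have := hX ρ
    exact pow_eq_zero_iff two_ne_zero |>.1 (by nlinarith)
  have hV : ∀ ρ, nB (fun x => ‖v x‖) 6 ρ = 0 := fun ρ => by
    have := hX ρ
    exact pow_eq_zero_iff two_ne_zero |>.1 (by nlinarith)
  have hT : ∀ ρ, nB (fun x => |θ x - c|) 6 ρ = 0 := fun ρ => by
    have := hX ρ
    exact pow_eq_zero_iff two_ne_zero |>.1 (by nlinarith)
  refine ⟨fun x => norm_eq_zero.1 (eq_zero_of_nB hcu hU x),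
    fun x => norm_eq_zero.1 (eq_zero_of_nB hcv hV x), c, fun x => ?_⟩
  exact sub_eq_zero.1 (abs_eq_zero.1 (eq_zero_of_nB hcT hT x))
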